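/- arXiv:2201.13424 — 4 statements merged into one kernel-verified Lean document; each statement's English description precedes it below -/
import Mathlib

section
/- Let X₁, …, X_r be nonempty finite sets with product X and let S ⊆ [r]. Then dim_{F₂} Add(X,S) = ∏_{i∈S} (|X_i| − 1) · ∏_{i∈[r]∖S} |X_i|. -/
open scoped Classical

/-- `Cube(X,S)`: pairs of points of `X = ∏ᵢ Xᵢ` that agree in all coordinates outside `S`. -/
abbrev Cube {r : ℕ} (X : Fin r → Type*) (S : Finset (Fin r)) : Type _ :=
  {p : ((i : Fin r) → X i) × ((i : Fin r) → X i) // ∀ i ∉ S, p.1 i = p.2 i}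

/-- `x̄(T)` for `x̄ ∈ Cube(X,S)` and `T ⊆ S`. -/
def cubeSel {r : ℕ} (X : Fin r → Type*) (S T : Finset (Fin r)) (x : Cube X S) :
    Set (Cube X T) :=
  {y | (∀ i ∈ S, i ∉ T → (y.1.1 i = x.1.1 i ∨ y.1.1 i = x.1.2 i)) ∧
       ∀ i, i ∉ S \ T → (y.1.1 i = x.1.1 i ∧ y.1.2 i = x.1.2 i)}

/-- `x̄` is degenerate if `pr₁ π_i x̄ = pr₂ π_i x̄` for some `i ∈ S`. -/
def Cube.Degenerate {r : ℕ} {X : Fin r → Type*} {S : Finset (Fin r)} (x : Cube X S) : Prop :=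
  ∃ i ∈ S, x.1.1 i = x.1.2 i

/-- The map `Σ : Map(X, F₂) → Map(Cube(X,S), F₂)`:
`ΣF(x̄) = ∑_{x ∈ x̄(∅)} F(x)` for non-degenerate `x̄`, and `0` for degenerate `x̄`. -/
noncomputable def SigmaMap {r : ℕ} (X : Fin r → Type*) [∀ i, Fintype (X i)]
    (S : Finset (Fin r)) (F : ((i : Fin r) → X i) → ZMod 2) : Cube X S → ZMod 2 := fun x =>
  if Cube.Degenerate x then 0
  else ∑ y ∈ (Set.toFinite (cubeSel X S ∅ x)).toFinset, F y.1.1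

/-- `Σ` as a linear map. -/
noncomputable def SigmaLin {r : ℕ} (X : Fin r → Type*) [∀ i, Fintype (X i)]
    (S : Finset (Fin r)) :
    (((i : Fin r) → X i) → ZMod 2) →ₗ[ZMod 2] (Cube X S → ZMod 2) where
  toFun := SigmaMap X S
  map_add' F G := by
    funext x
    by_cases h : Cube.Degenerate x
    · simp [SigmaMap, h]
    · simp [SigmaMap, h, Finset.sum_add_distrib]
  map_smul' c F := by
    funext x
    by_cases h : Cube.Degenerate x
    · simp [SigmaMap, h]
    · simp [SigmaMap, h, Finset.mul_sum]

/-- `Add(X,S)`: the image of `Σ`. -/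
noncomputable def AddSubspace {r : ℕ} (X : Fin r → Type*) [∀ i, Fintype (X i)]
    (S : Finset (Fin r)) : Submodule (ZMod 2) (Cube X S → ZMod 2) :=
  LinearMap.range (SigmaLin X S)

lemma mem_sel {r : ℕ} (X : Fin r → Type*) (S : Finset (Fin r)) (x : Cube X S) (y : Cube X ∅) :
    y ∈ cubeSel X S ∅ x ↔ (∀ i ∈ S, (y.1.1 i = x.1.1 i ∨ y.1.1 i = x.1.2 i)) ∧
       ∀ i, i ∉ S → y.1.1 i = x.1.1 i := by
  simp only [cubeSel, Set.mem_ofPred_eq, Finset.notMem_empty, not_false_eq_true, forall_true_left,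
    Finset.sdiff_empty]
  constructor
  · rintro ⟨h1, h2⟩
    exact ⟨h1, fun i hi => (h2 i hi).1⟩
  · rintro ⟨h1, h2⟩
    refine ⟨h1, fun i hi => ⟨h2 i hi, ?_⟩⟩
    rw [← y.2 i (by simp), h2 i hi, x.2 i hi]

/-- Functions that do not depend on a coordinate in `S` are killed. -/
lemma sigma_indep {r : ℕ} (X : Fin r → Type*) [∀ i, Fintype (X i)] (S : Finset (Fin r))
    (G : ((i : Fin r) → X i) → ZMod 2) (i : Fin r) (hi : i ∈ S)
    (hG : ∀ x v, G (Function.update x i v) = G x) : SigmaLin X S G = 0 := by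
  funext x
  change SigmaMap X S G x = 0
  unfold SigmaMap
  split_ifs with hd
  · rfl
  have hne : x.1.1 i ≠ x.1.2 i := fun h => hd ⟨i, hi, h⟩
  let fl : X i → X i := fun v => if v = x.1.1 i then x.1.2 i else x.1.1 i
  let g : Cube X ∅ → Cube X ∅ := fun y =>
    ⟨(Function.update y.1.1 i (fl (y.1.1 i)), Function.update y.1.1 i (fl (y.1.1 i))),
      fun _ _ => rfl⟩
  refine Finset.sum_involution (fun y _ => g y) ?_ ?_ ?_ ?_
  · intro y hy
    simp only [g, hG]
    exact CharTwo.add_self_eq_zero _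
  · intro y hy _ h
    have h1 : fl (y.1.1 i) = y.1.1 i := by
      have := congrArg (fun z : Cube X ∅ => z.1.1 i) h
      simpa [g] using this
    simp only [fl] at h1
    split_ifs at h1 with h2
    · exact hne (by rw [h1, h2])
    · exact h2 h1.symm
  · intro y hy
    rw [Set.Finite.mem_toFinset, mem_sel] at hy ⊢
    refine ⟨fun j hj => ?_, fun j hj => ?_⟩
    · by_cases hji : j = i
      · subst hji
        simp only [g, fl, Function.update_self]
        split_ifs <;> simp
      · simpa [g, hji] using hy.1 j hj
    · have hji : j ≠ i := fun h => hj (h ▸ hi)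
      simpa [g, hji] using hy.2 j hj
  · intro y hy
    rw [Set.Finite.mem_toFinset, mem_sel] at hy
    have h2 : fl (fl (y.1.1 i)) = y.1.1 i := by
      rcases hy.1 i hi with h | h <;> simp [fl, h, hne.symm]
    have hy2 : y.1.1 = y.1.2 := funext fun j => y.2 j (by simp)
    apply Subtype.ext
    apply Prod.ext
    · simp [g, h2]
    · rw [← hy2]
      simp [g, h2]

/-- Normalisation with respect to a base point. -/
noncomputable def normF {r : ℕ} {X : Fin r → Type*} (S : Finset (Fin r)) (a : (i : Fin r) → X i)
    (F : ((i : Fin r) → X i) → ZMod 2) : ((i : Fin r) → X i) → ZMod 2 :=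
  ∑ U ∈ S.powerset, fun x => F (fun j => if j ∈ U then a j else x j)

lemma sigma_normF {r : ℕ} (X : Fin r → Type*) [∀ i, Fintype (X i)] (S : Finset (Fin r))
    (a : (i : Fin r) → X i) (F : ((i : Fin r) → X i) → ZMod 2) :
    SigmaLin X S (normF S a F) = SigmaLin X S F := by
  rw [normF, map_sum, Finset.sum_eq_single ∅]
  · simp
  · intro U hU hne
    obtain ⟨i, hi⟩ := Finset.nonempty_iff_ne_empty.mpr hne
    refine sigma_indep X S _ i (Finset.mem_powerset.mp hU hi) fun x v => ?_
    congr 1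
    funext j
    by_cases hj : j = i
    · subst hj; simp [hi]
    · simp [hj]
  · simp

lemma normF_zero {r : ℕ} {X : Fin r → Type*} (S : Finset (Fin r))
    (a : (i : Fin r) → X i) (F : ((i : Fin r) → X i) → ZMod 2) (x : (i : Fin r) → X i)
    (i : Fin r) (hi : i ∈ S) (hx : x i = a i) : normF S a F x = 0 := by
  rw [normF, Finset.sum_apply]
  refine Finset.sum_involution (fun U _ => if i ∈ U then U.erase i else insert i U) ?_ ?_ ?_ ?_
  · intro U hU
    have : (fun j => if j ∈ (if i ∈ U then U.erase i else insert i U) then a j else x j)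
        = fun j => if j ∈ U then a j else x j := by
      funext j
      by_cases hj : j = i
      · subst hj; simp [hx]
      · by_cases h : i ∈ U <;> simp [h, hj]
    simp only [this]
    exact CharTwo.add_self_eq_zero _
  · intro U hU _ h
    by_cases h' : i ∈ U
    · simp [h'] at h
    · simp [h'] at h
  · intro U hU
    rw [Finset.mem_powerset] at hU ⊢
    split_ifs
    · exact (Finset.erase_subset _ _).trans hU
    · exact Finset.insert_subset hi hU
  · intro U hU
    by_cases h' : i ∈ U <;> simp [h']

lemma sigma_eval {r : ℕ} (X : Fin r → Type*) [∀ i, Fintype (X i)] (S : Finset (Fin r))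
    (a : (i : Fin r) → X i) (F : ((i : Fin r) → X i) → ZMod 2)
    (hF : ∀ x, ∀ i ∈ S, x i = a i → F x = 0) (h0 : SigmaLin X S F = 0) : F = 0 := by
  funext x
  by_cases hx : ∃ i ∈ S, x i = a i
  · obtain ⟨i, hi, h⟩ := hx
    exact hF x i hi h
  let c : Cube X S := ⟨(x, fun j => if j ∈ S then a j else x j), fun j hj => by simp [hj]⟩
  have hc : SigmaMap X S F c = 0 := congrFun h0 c
  have hd : ¬ Cube.Degenerate c := by
    rintro ⟨i, hi, h⟩
    exact hx ⟨i, hi, by simpa [c, hi] using h⟩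
  rw [SigmaMap, if_neg hd, Finset.sum_eq_single ⟨(x, x), fun _ _ => rfl⟩] at hc
  · exact hc
  · intro y hy hne
    rw [Set.Finite.mem_toFinset, mem_sel] at hy
    have hy2 : y.1.1 = y.1.2 := funext fun j => y.2 j (by simp)
    have : y.1.1 ≠ x := fun h => hne (Subtype.ext (Prod.ext h (hy2 ▸ h)))
    obtain ⟨i, hi⟩ := Function.ne_iff.mp this
    by_cases hiS : i ∈ S
    · refine hF _ i hiS ?_
      rcases hy.1 i hiS with h | h
      · exact absurd h hi
      · simpa [c, hiS] using h
    · exact absurd (hy.2 i hiS) hi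
  · intro h
    exfalso
    apply h
    rw [Set.Finite.mem_toFinset, mem_sel]
    exact ⟨fun _ _ => Or.inl rfl, fun _ _ => rfl⟩

/-- `dim_{F₂} Add(X,S) = ∏_{i∈S} (|Xᵢ| − 1) ∏_{i∉S} |Xᵢ|`. -/
theorem addSubspace_finrank {r : ℕ} (X : Fin r → Type*) [∀ i, Fintype (X i)]
    [∀ i, Nonempty (X i)] (S : Finset (Fin r)) :
    Module.finrank (ZMod 2) (AddSubspace X S) =
      (∏ i ∈ S, (Fintype.card (X i) - 1)) * ∏ i ∈ Finset.univ \ S, Fintype.card (X i) := by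
  let a : (i : Fin r) → X i := fun i => Classical.arbitrary (X i)
  let A : Finset ((i : Fin r) → X i) :=
    Fintype.piFinset fun i => if i ∈ S then Finset.univ.erase (a i) else Finset.univ
  have hA : ∀ x, x ∉ A ↔ ∃ i ∈ S, x i = a i := by
    intro x
    simp only [A, Fintype.mem_piFinset, not_forall]
    refine exists_congr fun i => ?_
    by_cases hi : i ∈ S <;> simp [hi]
  let E : (A → ZMod 2) →ₗ[ZMod 2] (((i : Fin r) → X i) → ZMod 2) :=
    Function.ExtendByZero.linearMap (ZMod 2) Subtype.val
  have hE1 : ∀ f (x : A), E f x = f x := fun f x =>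
    Subtype.val_injective.extend_apply f 0 x
  have hE0 : ∀ f x, x ∉ A → E f x = 0 := fun f x hx =>
    Function.extend_apply' (f := (Subtype.val : A → ((i : Fin r) → X i))) f 0 x
      (by rintro ⟨y, rfl⟩; exact hx y.2)
  have hinj : Function.Injective (SigmaLin X S ∘ₗ E) := by
    rw [injective_iff_map_eq_zero]
    intro f hf
    have h := sigma_eval X S a (E f) (fun x i hi hx => hE0 f x ((hA x).2 ⟨i, hi, hx⟩)) hf
    funext x
    rw [← hE1 f x, h]
    rfl
  have hr : AddSubspace X S = LinearMap.range (SigmaLin X S ∘ₗ E) := by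
    apply le_antisymm
    · rintro _ ⟨F, rfl⟩
      refine ⟨fun x => normF S a F x, ?_⟩
      rw [← sigma_normF X S a F, LinearMap.comp_apply]
      congr 1
      funext x
      by_cases hx : x ∈ A
      · exact hE1 _ ⟨x, hx⟩
      · rw [hE0 _ x hx]
        obtain ⟨i, hi, h⟩ := (hA x).1 hx
        exact (normF_zero S a F x i hi h).symm
    · exact LinearMap.range_comp_le_range _ _
  rw [hr, LinearMap.finrank_range_of_inj hinj, Module.finrank_fintype_fun_eq_card,
    Fintype.card_coe, Fintype.card_piFinset, ← Finset.prod_sdiff (Finset.subset_univ S), mul_comm]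
  congr 1
  · refine Finset.prod_congr rfl fun i hi => ?_
    simp [hi, Finset.card_erase_of_mem]
  · refine Finset.prod_congr rfl fun i hi => ?_
    have : i ∉ S := (Finset.mem_sdiff.mp hi).2
    simp [this]
end

section
/- Let (X,P) be a prebox and let 0 ≤ k₀ ≤ k₁ ≤ k₂ ≤ r be integers with 2^{k₀+|P|+1}·k₁² < k₂. Then for every x ∈ X: Σ over all maps a : M_r ⊔ M_{r,P} → F₂ of ( k₂!/2^{C(k₀,k₁)+k₁·|P|} − #{σ ∈ 𝒫_r(k₂) : x ∈ X^trun_{k₀,k₁}(σ,a)} )² is at most (2^{k₀+|P|+1}·k₁²/k₂) · 2^{−2·C(k₀,k₁) − 2·k₁·|P| + |M_r ⊔ M_{r,P}|} · (k₂!)². -/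
open scoped Classical

/-- `ι : F₂ ≃ {±1}`. -/
def iotaSign (e : ZMod 2) : ℤ := if e = 0 then 1 else -1

/-- The index set `M_r = {(i,j) : 1 ≤ i < j ≤ r}`, encoded with `0`-based
`Fin r` indices (index `i : Fin r` stands for the paper's `i + 1`). -/
abbrev MrIdx (r : ℕ) : Type := {q : Fin r × Fin r // q.1 < q.2}

/-- The index set `M_{r,P} = [r] × P`. -/
abbrev MrPIdx (r : ℕ) (P : Finset ℕ) : Type := Fin r × {p : ℕ // p ∈ P}

/-- A prebox `(X, P)`: pairwise disjoint finite sets `P, X₁, …, X_r` of primes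
`≡ 1, 2 (mod 4)`, with `Xᵢ ⊆ (sᵢ, tᵢ]`, `P ⊆ (1, s₁]` and `2 < s₁ < t₁ < s₂ < ⋯ < s_r < t_r`.
The sets `Xᵢ`, `sᵢ`, `tᵢ` are indexed by `1 ≤ i ≤ r`. -/
structure Prebox (r : ℕ) where
  X : ℕ → Finset ℕ
  P : Finset ℕ
  s : ℕ → ℝ
  t : ℕ → ℝ
  prime_X : ∀ i ∈ Finset.Icc 1 r, ∀ p ∈ X i, p.Prime ∧ (p % 4 = 1 ∨ p % 4 = 2)
  prime_P : ∀ p ∈ P, p.Prime ∧ (p % 4 = 1 ∨ p % 4 = 2)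
  disj_X : ∀ i ∈ Finset.Icc 1 r, ∀ j ∈ Finset.Icc 1 r, i ≠ j → Disjoint (X i) (X j)
  disj_XP : ∀ i ∈ Finset.Icc 1 r, Disjoint (X i) P
  two_lt_s : 1 ≤ r → (2 : ℝ) < s 1
  s_lt_t : ∀ i ∈ Finset.Icc 1 r, s i < t i
  t_lt_s : ∀ i ∈ Finset.Icc 1 r, ∀ j ∈ Finset.Icc 1 r, i < j → t i < s j
  X_sub : ∀ i ∈ Finset.Icc 1 r, ∀ p ∈ X i, s i < (p : ℝ) ∧ (p : ℝ) ≤ t i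
  P_sub : ∀ p ∈ P, (1 : ℝ) < (p : ℝ) ∧ (1 ≤ r → (p : ℝ) ≤ s 1)

/-- Symmetrized access `a(i,j) = a(j,i)` to a map on `M_r ⊔ M_{r,P}`. -/
def asym {r : ℕ} {P : Finset ℕ} (a : MrIdx r ⊕ MrPIdx r P → ZMod 2) (i j : Fin r) : ZMod 2 :=
  if h : i < j then a (Sum.inl ⟨(i, j), h⟩)
  else if h' : j < i then a (Sum.inl ⟨(j, i), h'⟩) else 0

/-- `C(k₀,k₁) = (k₀² − k₀)/2 + k₀(k₁ − k₀)`. -/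
def Ccount (k₀ k₁ : ℕ) : ℕ := (k₀ ^ 2 - k₀) / 2 + k₀ * (k₁ - k₀)

/-- Membership of the point `x` in `X^trun_{k₀,k₁}(σ,a)` (paper index `i` = `(i : Fin r) + 1`):
`(xᵢ/xⱼ) = ι(a(σ⁻¹ i, σ⁻¹ j))` for all `i, j ∈ [k₁]` with `σ⁻¹ i < σ⁻¹ j` and `min(i,j) ≤ k₀`,
and `(xᵢ/p) = ι(a(σ⁻¹ i, p))` for all `(i, p) ∈ [k₁] × P`. -/
def InTrun {r : ℕ} {P : Finset ℕ} (x : Fin r → ℕ) (k₀ k₁ : ℕ)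
    (σ : Equiv.Perm (Fin r)) (a : MrIdx r ⊕ MrPIdx r P → ZMod 2) : Prop :=
  (∀ i j : Fin r, (i : ℕ) < k₁ → (j : ℕ) < k₁ → σ⁻¹ i < σ⁻¹ j →
     min ((i : ℕ) + 1) ((j : ℕ) + 1) ≤ k₀ →
     jacobiSym (x i) (x j) = iotaSign (asym a (σ⁻¹ i) (σ⁻¹ j))) ∧
  (∀ i : Fin r, (i : ℕ) < k₁ → ∀ p : {p : ℕ // p ∈ P},
     jacobiSym (x i) (p : ℕ) = iotaSign (a (Sum.inr (σ⁻¹ i, p))))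


/-- Permutations fixing every index that is at least `k`. -/
noncomputable def permSet (r k : ℕ) : Finset (Equiv.Perm (Fin r)) :=
  Finset.univ.filter fun σ => ∀ i : Fin r, k ≤ (i : ℕ) → σ i = i

/-- The indices that `σ` sends below `k`. -/
noncomputable def lowSet {r : ℕ} (k : ℕ) (σ : Equiv.Perm (Fin r)) : Finset (Fin r) :=
  Finset.univ.filter fun u => (σ u : ℕ) < k

/-- The pair coordinates constrained by `σ`. -/
noncomputable def pairSet {r : ℕ} (k₀ k₁ : ℕ) (σ : Equiv.Perm (Fin r)) : Finset (MrIdx r) :=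
  Finset.univ.filter fun q => (σ q.1.1 : ℕ) < k₁ ∧ (σ q.1.2 : ℕ) < k₁ ∧
    min ((σ q.1.1 : ℕ) + 1) ((σ q.1.2 : ℕ) + 1) ≤ k₀

/-- All coordinates constrained by `σ`. -/
noncomputable def conSet {r : ℕ} (P : Finset ℕ) (k₀ k₁ : ℕ) (σ : Equiv.Perm (Fin r)) :
    Finset (MrIdx r ⊕ MrPIdx r P) :=
  (pairSet k₀ k₁ σ).disjSum (lowSet k₁ σ ×ˢ Finset.univ)

/-- The bit of a sign. -/
noncomputable def signBit (s : ℤ) : ZMod 2 := if s = 1 then 0 else 1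

/-- The prescribed values. -/
noncomputable def conVal {r : ℕ} (P : Finset ℕ) (x : Fin r → ℕ) (σ : Equiv.Perm (Fin r)) :
    MrIdx r ⊕ MrPIdx r P → ZMod 2
  | Sum.inl q => signBit (jacobiSym (x (σ q.1.1)) (x (σ q.1.2)))
  | Sum.inr q => signBit (jacobiSym (x (σ q.1)) (q.2 : ℕ))

lemma iota_iff (s : ℤ) (hs : s = 1 ∨ s = -1) (e : ZMod 2) :
    s = iotaSign e ↔ e = signBit s := by
  have he : e = 0 ∨ e = 1 := by revert e; decide
  rcases hs with rfl | rfl <;> rcases he with rfl | rfl <;> simp [iotaSign, signBit]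

lemma perm_apply_inv {r : ℕ} (σ : Equiv.Perm (Fin r)) (i : Fin r) : σ (σ⁻¹ i) = i :=
  σ.apply_symm_apply i

lemma inTrun_iff {r : ℕ} {P : Finset ℕ} (x : Fin r → ℕ) (k₀ k₁ : ℕ)
    (h1 : ∀ i j : Fin r, i ≠ j → jacobiSym (x i) (x j) = 1 ∨ jacobiSym (x i) (x j) = -1)
    (h2 : ∀ (i : Fin r), ∀ p ∈ P, jacobiSym (x i) p = 1 ∨ jacobiSym (x i) p = -1)
    (σ : Equiv.Perm (Fin r)) (a : MrIdx r ⊕ MrPIdx r P → ZMod 2) :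
    InTrun x k₀ k₁ σ a ↔ ∀ c ∈ conSet P k₀ k₁ σ, a c = conVal P x σ c := by
  constructor
  · rintro ⟨ha, hb⟩ c hc
    rcases c with ⟨⟨u, v⟩, huv⟩ | ⟨u, p⟩
    · simp [conSet, pairSet] at hc
      have := ha (σ u) (σ v) hc.1 hc.2.1 (by simpa using huv) (by simpa using hc.2.2)
      rw [iota_iff _ (h1 _ _ (by simpa using (ne_of_lt huv)))] at this
      have huv' : u < v := huv
      simpa [asym, huv', conVal] using this
    · simp [conSet, lowSet] at hc
      have := hb (σ u) hc p
      rw [iota_iff _ (h2 _ _ p.2)] at this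
      simpa [conVal] using this
  · intro h
    refine ⟨fun i j hi hj hij hm => ?_, fun i hi p => ?_⟩
    · rw [iota_iff _ (h1 _ _ (by rintro rfl; exact lt_irrefl _ hij))]
      have := h (Sum.inl ⟨(σ⁻¹ i, σ⁻¹ j), hij⟩) (by
        simp only [conSet, pairSet, Finset.inl_mem_disjSum, Finset.mem_filter, Finset.mem_univ,
          true_and, perm_apply_inv]
        exact ⟨hi, hj, hm⟩)
      simp only [conVal, perm_apply_inv] at this
      rw [← this]
      simp only [asym, dif_pos hij]
    · rw [iota_iff _ (h2 _ _ p.2)]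
      have := h (Sum.inr (σ⁻¹ i, p)) (by
        simp only [conSet, lowSet, Finset.inr_mem_disjSum, Finset.mem_product, Finset.mem_filter,
          Finset.mem_univ, true_and, perm_apply_inv, and_true]
        exact hi)
      simpa only [conVal, perm_apply_inv] using this

lemma count_fix {I : Type} [Fintype I] [DecidableEq I] (J : Finset I) (f : I → ZMod 2) :
    (((Finset.univ : Finset (I → ZMod 2)).filter fun a => ∀ c ∈ J, a c = f c).card : ℝ)
      = 2 ^ (Fintype.card I) / 2 ^ J.card := by
  have h : ((Finset.univ : Finset (I → ZMod 2)).filter fun a => ∀ c ∈ J, a c = f c)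
      = Fintype.piFinset (fun c => if c ∈ J then {f c} else Finset.univ) := by
    ext a
    simp only [Finset.mem_filter, Finset.mem_univ, true_and, Fintype.mem_piFinset]
    refine forall_congr' fun c => ?_
    by_cases hc : c ∈ J <;> simp [hc]
  have h2 : ∀ c : I, (if c ∈ J then ({f c} : Finset (ZMod 2)) else Finset.univ).card
      = if c ∈ J then 1 else 2 := by
    intro c; split_ifs <;> simp [ZMod.card]
  rw [h, Fintype.card_piFinset]
  simp_rw [h2]
  rw [Finset.prod_ite]
  have h3 : (Finset.univ.filter fun c => c ∉ J).card = Fintype.card I - J.card := by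
    rw [← Finset.card_compl]; congr 1; ext; simp
  simp only [Finset.prod_const, one_pow, one_mul, h3]
  push_cast
  rw [eq_div_iff (by positivity), ← pow_add, Nat.sub_add_cancel (Finset.card_le_univ J)]

lemma count_joint {I : Type} [Fintype I] [DecidableEq I] (J J' : Finset I) (f g : I → ZMod 2) :
    (((Finset.univ : Finset (I → ZMod 2)).filter fun a =>
      (∀ c ∈ J, a c = f c) ∧ (∀ c ∈ J', a c = g c)).card : ℝ)
      ≤ 2 ^ (Fintype.card I) / 2 ^ (J.card + J'.card) * 2 ^ (J ∩ J').card := by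
  have := count_fix (J ∪ J') (fun c => if c ∈ J then f c else g c)
  have h2 := Finset.card_union_add_card_inter J J'
  rw [← h2, pow_add]
  calc _ ≤ (((Finset.univ : Finset (I → ZMod 2)).filter fun a =>
        ∀ c ∈ J ∪ J', a c = (if c ∈ J then f c else g c)).card : ℝ) := by
        norm_cast
        apply Finset.card_le_card
        intro a
        simp only [Finset.mem_filter, Finset.mem_univ, true_and, Finset.mem_union]
        rintro ⟨h, h'⟩ c hc
        split_ifs with hJ
        · exact h c hJ
        · exact h' c (hc.resolve_left hJ)
    _ = _ := by rw [this]; field_simp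

lemma count_fix_pred {I : Type} [Fintype I] [DecidableEq I] (J : Finset I) (f : I → ZMod 2)
    (p : (I → ZMod 2) → Prop) (hp : ∀ a, p a ↔ ∀ c ∈ J, a c = f c) :
    ∑ a, (if p a then (1 : ℝ) else 0) = 2 ^ (Fintype.card I) / 2 ^ J.card := by
  rw [Finset.sum_boole, ← count_fix J f]
  congr 2
  ext a
  simp [hp a]

lemma count_joint_pred {I : Type} [Fintype I] [DecidableEq I] (J J' : Finset I)
    (f g : I → ZMod 2) (p q : (I → ZMod 2) → Prop) (hp : ∀ a, p a ↔ ∀ c ∈ J, a c = f c)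
    (hq : ∀ a, q a ↔ ∀ c ∈ J', a c = g c) :
    ∑ a, (if p a then (1 : ℝ) else 0) * (if q a then (1 : ℝ) else 0)
      ≤ 2 ^ (Fintype.card I) / 2 ^ (J.card + J'.card) * 2 ^ (J ∩ J').card := by
  refine le_trans (le_of_eq ?_) (count_joint J J' f g)
  have e : ∀ a, (if p a then (1 : ℝ) else 0) * (if q a then (1 : ℝ) else 0)
      = if (∀ c ∈ J, a c = f c) ∧ (∀ c ∈ J', a c = g c) then 1 else 0 := by
    intro a
    simp only [← hp a, ← hq a]
    by_cases h : p a <;> by_cases h' : q a <;> simp [h, h']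
  rw [Finset.sum_congr rfl fun a _ => e a, Finset.sum_boole]

lemma card_lowFin (r k : ℕ) (h : k ≤ r) :
    ((Finset.univ : Finset (Fin r)).filter fun u : Fin r => (u : ℕ) < k).card = k := by
  rw [Fin.card_filter_val_lt]; simpa using h

lemma card_lowSet {r k : ℕ} (h : k ≤ r) (σ : Equiv.Perm (Fin r)) : (lowSet k σ).card = k := by
  refine Eq.trans ?_ (card_lowFin r k h)
  refine Finset.card_nbij' (fun u => σ u) (fun u => σ.symm u) ?_ ?_ ?_ ?_ <;>
    intro u hu <;> simp_all [lowSet]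

lemma card_permSet {r k : ℕ} (h : k ≤ r) : (permSet r k).card = k.factorial := by
  have e := Equiv.Perm.subtypeEquivSubtypePerm (fun i : Fin r => (i : ℕ) < k)
  have h1 := Fintype.card_congr e
  rw [Fintype.card_perm, Fintype.card_subtype, card_lowFin r k h, Fintype.card_subtype] at h1
  rw [h1, permSet]
  simp

lemma card_pairSet_eq {r : ℕ} (k₀ k₁ : ℕ) (σ : Equiv.Perm (Fin r)) :
    (pairSet k₀ k₁ σ).card = ((Finset.univ : Finset (Fin r × Fin r)).filter
      fun q => q.1 < q.2 ∧ (q.2 : ℕ) < k₁ ∧ (q.1 : ℕ) < k₀).card := by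
  refine Finset.card_bij (fun q _ => (min (σ q.1.1) (σ q.1.2), max (σ q.1.1) (σ q.1.2))) ?_ ?_ ?_
  · rintro ⟨⟨u, v⟩, huv⟩ hq
    have : σ u ≠ σ v := by simpa using (ne_of_lt huv)
    simp only [pairSet, Finset.mem_filter, Finset.mem_univ, true_and] at hq ⊢
    rcases lt_or_gt_of_ne this with h | h
    · rw [min_eq_left h.le, max_eq_right h.le]
      have : (σ u : ℕ) < σ v := h
      exact ⟨by omega, by omega, by omega⟩
    · rw [min_eq_right h.le, max_eq_left h.le]
      have : (σ v : ℕ) < σ u := h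
      exact ⟨by omega, by omega, by omega⟩
  · rintro ⟨⟨u, v⟩, huv⟩ _ ⟨⟨u', v'⟩, huv'⟩ _ h
    simp only [Prod.mk.injEq] at h
    have huv : u < v := huv
    have huv' : u' < v' := huv'
    have hh : (σ u = σ u' ∧ σ v = σ v') ∨ (σ u = σ v' ∧ σ v = σ u') := by
      grind
    simp only [EmbeddingLike.apply_eq_iff_eq] at hh
    rcases hh with ⟨rfl, rfl⟩ | ⟨rfl, rfl⟩
    · rfl
    · exact absurd huv (not_lt.2 huv'.le)
  · rintro ⟨i, j⟩ hq
    simp only [Finset.mem_filter, Finset.mem_univ, true_and] at hq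
    obtain ⟨hij, hj, hi⟩ := hq
    have hij' : (i : ℕ) < j := hij
    have hne : σ.symm i ≠ σ.symm j := by simpa using ne_of_lt hij
    rcases lt_or_gt_of_ne hne with h | h
    · refine ⟨⟨(σ.symm i, σ.symm j), h⟩, ?_, ?_⟩
      · simp [pairSet]; omega
      · simp [hij.le]
    · refine ⟨⟨(σ.symm j, σ.symm i), h⟩, ?_, ?_⟩
      · simp [pairSet]; omega
      · simp [hij.le]

lemma sum_Ccount (k₀ k₁ : ℕ) (h : k₀ ≤ k₁) :
    ∑ i ∈ Finset.range k₀, (k₁ - 1 - i) = Ccount k₀ k₁ := by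
  obtain ⟨d, rfl⟩ := Nat.exists_eq_add_of_le h
  have : ∑ i ∈ Finset.range k₀, (k₀ + d - 1 - i) = ∑ i ∈ Finset.range k₀, (i + d) := by
    rw [← Finset.sum_range_reflect (fun i => i + d)]
    refine Finset.sum_congr rfl fun i hi => ?_
    have := Finset.mem_range.1 hi
    omega
  rw [this, Finset.sum_add_distrib, Finset.sum_range_id]
  simp [Ccount, sq, Nat.mul_sub]

lemma card_pairSet {r k₀ k₁ : ℕ} (h01 : k₀ ≤ k₁) (h1 : k₁ ≤ r) (σ : Equiv.Perm (Fin r)) :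
    (pairSet k₀ k₁ σ).card = Ccount k₀ k₁ := by
  rw [card_pairSet_eq, ← sum_Ccount k₀ k₁ h01]
  have e : ∀ i ∈ Finset.range k₀, k₁ - 1 - i = (Finset.Ioo i k₁).card := by
    intro i _
    rw [Nat.card_Ioo]
    omega
  rw [Finset.sum_congr rfl e, ← Finset.card_sigma]
  refine Finset.card_bij (fun q _ => ⟨(q.1 : ℕ), (q.2 : ℕ)⟩) ?_ ?_ ?_
  · rintro ⟨i, j⟩ hq
    simpa [and_comm, and_assoc] using hq
  · rintro ⟨i, j⟩ _ ⟨i', j'⟩ _ h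
    simp only [Sigma.mk.injEq, heq_eq_eq, Fin.val_inj] at h
    rw [h.1, h.2]
  · rintro ⟨i, j⟩ hq
    simp only [Finset.mem_sigma, Finset.mem_range, Finset.mem_Ioo] at hq
    exact ⟨(⟨i, by omega⟩, ⟨j, by omega⟩), by simp; omega, rfl⟩

lemma card_conSet {r k₀ k₁ : ℕ} (P : Finset ℕ) (h01 : k₀ ≤ k₁) (h1 : k₁ ≤ r)
    (σ : Equiv.Perm (Fin r)) :
    (conSet P k₀ k₁ σ).card = Ccount k₀ k₁ + k₁ * P.card := by
  rw [conSet, Finset.card_disjSum, card_pairSet h01 h1, Finset.card_product, card_lowSet h1]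
  simp

lemma card_inter_conSet {r k₀ k₁ : ℕ} (P : Finset ℕ)  (σ τ : Equiv.Perm (Fin r)) :
    (conSet P k₀ k₁ σ ∩ conSet P k₀ k₁ τ).card
      ≤ (lowSet k₁ σ ∩ lowSet k₁ τ).card * (k₀ + P.card) := by
  have hs : conSet P k₀ k₁ σ ∩ conSet P k₀ k₁ τ =
      (pairSet k₀ k₁ σ ∩ pairSet k₀ k₁ τ).disjSum
        ((lowSet k₁ σ ∩ lowSet k₁ τ) ×ˢ Finset.univ) := by
    ext c
    rcases c with c | c <;> simp [conSet]
  rw [hs, Finset.card_disjSum, Finset.card_product, mul_add]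
  have : (pairSet k₀ k₁ σ ∩ pairSet k₀ k₁ τ).card ≤
      ((lowSet k₁ σ ∩ lowSet k₁ τ) ×ˢ Finset.range k₀).card := by
    refine Finset.card_le_card_of_injOn (fun q => if (σ q.1.1 : ℕ) < k₀ then (q.1.2, (σ q.1.1 : ℕ))
      else (q.1.1, (σ q.1.2 : ℕ))) ?_ ?_
    · rintro ⟨⟨u, v⟩, huv⟩ hq
      simp [pairSet, lowSet] at hq ⊢
      split_ifs <;> simp <;> omega
    · rintro ⟨⟨u, v⟩, huv⟩ hq ⟨⟨u', v'⟩, huv'⟩ hq' h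
      have huv : u < v := huv
      have huv' : u' < v' := huv'
      simp only at h
      split_ifs at h <;> simp [Fin.val_inj] at h <;> obtain ⟨rfl, rfl⟩ := h
      · rfl
      · exact absurd huv (not_lt.2 huv'.le)
      · exact absurd huv (not_lt.2 huv'.le)
      · rfl
  rw [Finset.card_product, Finset.card_range] at this
  simpa using this

/-- Permutations in `permSet` sending `T` below `k₁`. -/
noncomputable def goodSet (r k₁ k₂ : ℕ) (T : Finset (Fin r)) : Finset (Equiv.Perm (Fin r)) :=
  (permSet r k₂).filter fun τ => T ⊆ lowSet k₁ τ

lemma goodSet_insert {r k₁ k₂ : ℕ} (h12 : k₁ ≤ k₂) (h2r : k₂ ≤ r) (T : Finset (Fin r))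
    (y : Fin r) (hyT : y ∉ T) (hy : (y : ℕ) < k₂) (hT : ∀ u ∈ T, (u : ℕ) < k₂) :
    (goodSet r k₁ k₂ (insert y T)).card * k₂ ≤ (goodSet r k₁ k₂ T).card * k₁ := by
  set Z := ((Finset.univ : Finset (Fin r)).filter fun u : Fin r => (u : ℕ) < k₂) \ T with hZ
  have hZc : Z.card = k₂ - T.card := by
    rw [hZ, Finset.card_sdiff_of_subset, card_lowFin r k₂ h2r]
    intro u hu; simpa using hT u hu
  have hTc : T.card < k₂ := by
    have : (insert y T).card ≤ ((Finset.univ : Finset (Fin r)).filter fun u : Fin r => (u : ℕ) < k₂).card := by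
      apply Finset.card_le_card
      intro u hu
      rcases Finset.mem_insert.1 hu with rfl | hu
      · simpa using hy
      · simpa using hT u hu
    rw [card_lowFin r k₂ h2r, Finset.card_insert_of_notMem hyT] at this
    omega
  have hsym : ∀ z ∈ Z, (goodSet r k₁ k₂ (insert y T)).card = (goodSet r k₁ k₂ (insert z T)).card := by
    have key : ∀ y z : Fin r, (y : ℕ) < k₂ → (z : ℕ) < k₂ → y ∉ T → z ∉ T →
        ∀ τ ∈ goodSet r k₁ k₂ (insert y T), τ * Equiv.swap y z ∈ goodSet r k₁ k₂ (insert z T) := by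
      intro y z hy hz hyT hzT τ hτ
      simp only [goodSet, permSet, lowSet, Finset.mem_filter, Finset.mem_univ, true_and,
        Finset.insert_subset_iff, Equiv.Perm.mul_apply, Equiv.swap_apply_right] at hτ ⊢
      obtain ⟨h1, h2, h3⟩ := hτ
      refine ⟨fun i hi => ?_, h2, fun u hu => ?_⟩
      · rw [Equiv.swap_apply_of_ne_of_ne (by rintro rfl; omega) (by rintro rfl; omega)]
        exact h1 i hi
      · have := (Finset.mem_filter.1 (h3 hu)).2
        refine Finset.mem_filter.2 ⟨Finset.mem_univ _, ?_⟩
        rwa [Equiv.swap_apply_of_ne_of_ne (by rintro rfl; exact hyT hu)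
          (by rintro rfl; exact hzT hu)]
    intro z hz
    simp only [hZ, Finset.mem_sdiff, Finset.mem_filter, Finset.mem_univ, true_and] at hz
    refine Finset.card_nbij' (fun τ => τ * Equiv.swap y z) (fun τ => τ * Equiv.swap z y)
      (fun τ h => key y z hy hz.1 hyT hz.2 τ h) (fun τ h => key z y hz.1 hy hz.2 hyT τ h) ?_ ?_
    · intro τ _
      simp [mul_assoc, Equiv.swap_comm z y]
    · intro τ _
      simp [mul_assoc, Equiv.swap_comm z y]
  have hdc : ∑ z ∈ Z, (goodSet r k₁ k₂ (insert z T)).card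
      = ∑ τ ∈ goodSet r k₁ k₂ T, (Z.filter fun z => z ∈ lowSet k₁ τ).card := by
    refine Eq.trans ?_ (Finset.sum_card_bipartiteAbove_eq_sum_card_bipartiteBelow
      (fun (z : Fin r) (τ : Equiv.Perm (Fin r)) => z ∈ lowSet k₁ τ))
    · refine Finset.sum_congr rfl fun z _ => ?_
      congr 1
      ext τ
      simp [Finset.bipartiteAbove, goodSet, Finset.insert_subset_iff]
      tauto
  have hcnt : ∀ τ ∈ goodSet r k₁ k₂ T, (Z.filter fun z => z ∈ lowSet k₁ τ).card + T.card ≤ k₁ := by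
    intro τ hτ
    have hsub : T ⊆ lowSet k₁ τ := (Finset.mem_filter.1 hτ).2
    refine le_of_le_of_eq ?_ (card_lowSet (h12.trans h2r) τ)
    rw [← Finset.card_sdiff_add_card_eq_card hsub]
    gcongr
    intro z hz
    simp only [hZ, Finset.mem_sdiff, Finset.mem_filter] at hz ⊢
    exact ⟨hz.2, hz.1.2⟩
  have h1 : (goodSet r k₁ k₂ (insert y T)).card * (k₂ - T.card)
      ≤ (goodSet r k₁ k₂ T).card * (k₁ - T.card) := by
    calc _ = ∑ z ∈ Z, (goodSet r k₁ k₂ (insert z T)).card := by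
          rw [← Finset.sum_congr rfl hsym, Finset.sum_const, hZc, smul_eq_mul, mul_comm]
      _ = _ := hdc
      _ ≤ ∑ τ ∈ goodSet r k₁ k₂ T, (k₁ - T.card) := by
          refine Finset.sum_le_sum fun τ hτ => ?_
          have := hcnt τ hτ
          omega
      _ = _ := by simp
  have h0 : (goodSet r k₁ k₂ (insert y T)).card ≤ (goodSet r k₁ k₂ T).card := by
    apply Finset.card_le_card
    intro τ hτ
    simp only [goodSet, Finset.mem_filter, Finset.insert_subset_iff] at hτ ⊢
    exact ⟨hτ.1, hτ.2.2⟩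
  by_cases hk : T.card ≤ k₁
  · obtain ⟨e, he⟩ := Nat.exists_eq_add_of_le hk
    obtain ⟨e', he'⟩ := Nat.exists_eq_add_of_le hTc.le
    have a1 : k₁ - T.card = e := by omega
    have a2 : k₂ - T.card = e' := by omega
    rw [a1, a2] at h1
    generalize (goodSet r k₁ k₂ (insert y T)).card = A at *
    generalize (goodSet r k₁ k₂ T).card = A' at *
    rw [he, he']
    nlinarith
  · have : k₁ - T.card = 0 := by omega
    rw [this, mul_zero] at h1
    have : (goodSet r k₁ k₂ (insert y T)).card = 0 := by
      rcases Nat.mul_eq_zero.1 (Nat.le_zero.1 h1) with h | h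
      · exact h
      · omega
    rw [this]; simp

lemma goodSet_bound {r k₁ k₂ : ℕ} (h12 : k₁ ≤ k₂) (h2r : k₂ ≤ r) (T : Finset (Fin r))
    (hT : ∀ u ∈ T, (u : ℕ) < k₂) :
    (goodSet r k₁ k₂ T).card * k₂ ^ T.card ≤ k₂.factorial * k₁ ^ T.card := by
  induction T using Finset.induction_on with
  | empty => simp [goodSet, card_permSet h2r]
  | insert y T hy ih =>
    have h1 := ih fun u hu => hT u (Finset.mem_insert_of_mem hu)
    have h2 := goodSet_insert h12 h2r T y hy (hT y (Finset.mem_insert_self _ _))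
      fun u hu => hT u (Finset.mem_insert_of_mem hu)
    rw [Finset.card_insert_of_notMem hy]
    calc _ = ((goodSet r k₁ k₂ (insert y T)).card * k₂) * k₂ ^ T.card := by ring
      _ ≤ ((goodSet r k₁ k₂ T).card * k₁) * k₂ ^ T.card := by gcongr
      _ = ((goodSet r k₁ k₂ T).card * k₂ ^ T.card) * k₁ := by ring
      _ ≤ (k₂.factorial * k₁ ^ T.card) * k₁ := by gcongr
      _ = _ := by ring

lemma sum_pow_inter {r k₁ k₂ : ℕ} (h12 : k₁ ≤ k₂) (h2r : k₂ ≤ r) (hk : 0 < k₂)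
    (σ : Equiv.Perm (Fin r)) (hσ : σ ∈ permSet r k₂) (Q : ℝ) (hQ : 1 ≤ Q) :
    ∑ τ ∈ permSet r k₂, Q ^ (lowSet k₁ σ ∩ lowSet k₁ τ).card
      ≤ k₂.factorial * (1 + (Q - 1) * (k₁ / k₂)) ^ k₁ := by
  have hlow : ∀ u ∈ lowSet k₁ σ, (u : ℕ) < k₂ := by
    intro u hu
    by_contra h
    have h3 := (Finset.mem_filter.1 hσ).2 u (not_lt.1 h)
    have h4 := (Finset.mem_filter.1 hu).2
    rw [h3] at h4
    omega
  have e1 : ∀ τ : Equiv.Perm (Fin r), Q ^ (lowSet k₁ σ ∩ lowSet k₁ τ).card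
      = ∑ T ∈ (lowSet k₁ σ).powerset, if T ⊆ lowSet k₁ τ then (Q - 1) ^ T.card else 0 := by
    intro τ
    have := Finset.sum_pow_mul_eq_add_pow (Q - 1) 1 (lowSet k₁ σ ∩ lowSet k₁ τ)
    simp only [one_pow, mul_one, sub_add_cancel] at this
    rw [← this, ← Finset.sum_filter]
    refine Finset.sum_congr ?_ fun _ _ => rfl
    ext T
    simp only [Finset.mem_powerset, Finset.mem_filter, Finset.subset_inter_iff]
  have hk' : (0 : ℝ) < k₂ := by exact_mod_cast hk
  simp_rw [e1]
  rw [Finset.sum_comm]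
  calc _ ≤ ∑ T ∈ (lowSet k₁ σ).powerset, (k₂.factorial : ℝ) * ((Q - 1) * (k₁ / k₂)) ^ T.card := by
        refine Finset.sum_le_sum fun T hT => ?_
        rw [← Finset.sum_filter, Finset.sum_const, nsmul_eq_mul, mul_pow, div_pow]
        have hb := goodSet_bound h12 h2r T fun u hu => hlow u (Finset.mem_powerset.1 hT hu)
        have hb' : ((goodSet r k₁ k₂ T).card : ℝ) * (k₂ : ℝ) ^ T.card
          ≤ k₂.factorial * (k₁ : ℝ) ^ T.card := by exact_mod_cast hb
        rw [← le_div_iff₀ (by positivity)] at hb'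
        have hq : (0 : ℝ) ≤ (Q - 1) ^ T.card := pow_nonneg (by linarith) _
        calc _ ≤ ((k₂.factorial : ℝ) * (k₁ : ℝ) ^ T.card / (k₂ : ℝ) ^ T.card) * (Q - 1) ^ T.card :=
              mul_le_mul_of_nonneg_right hb' hq
          _ = _ := by ring
    _ = _ := by
        have := Finset.sum_pow_mul_eq_add_pow ((Q - 1) * ((k₁ : ℝ) / k₂)) 1 (lowSet k₁ σ)
        simp only [one_pow, mul_one] at this
        rw [← Finset.mul_sum, this, card_lowSet (h12.trans h2r), add_comm]

lemma pow_bound (k : ℕ) (y : ℝ) (hy : 0 ≤ y) (h : k * y ≤ 1 / 2) :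
    (1 + y) ^ k ≤ 1 + 2 * (k * y) := by
  have h0 : 0 ≤ (k : ℝ) * y := by positivity
  calc (1 + y) ^ k ≤ (Real.exp y) ^ k := by
        gcongr
        linarith [Real.add_one_le_exp y]
    _ = Real.exp (k * y) := by rw [← Real.exp_nat_mul]
    _ ≤ 1 / (1 - k * y) := by
        have := Real.add_one_le_exp (-(k * y))
        rw [Real.exp_neg] at this
        rw [le_div_iff₀ (by linarith)]
        have h3 := mul_le_mul_of_nonneg_left this (Real.exp_pos (k * y)).le
        rw [mul_inv_cancel₀ (Real.exp_pos _).ne'] at h3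
        linarith
    _ ≤ _ := by
        rw [div_le_iff₀ (by linarith)]
        nlinarith

lemma symbols {r : ℕ} (B : Prebox r) (x : Fin r → ℕ) (hx : ∀ i : Fin r, x i ∈ B.X ((i : ℕ) + 1)) :
    (∀ i j : Fin r, i ≠ j → jacobiSym (x i) (x j) = 1 ∨ jacobiSym (x i) (x j) = -1) ∧
    (∀ (i : Fin r), ∀ p ∈ B.P, jacobiSym (x i) p = 1 ∨ jacobiSym (x i) p = -1) := by
  have hm : ∀ i : Fin r, (i : ℕ) + 1 ∈ Finset.Icc 1 r := by
    intro i; exact Finset.mem_Icc.2 ⟨by omega, i.isLt⟩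
  have hp : ∀ i, (x i).Prime := fun i => (B.prime_X _ (hm i) _ (hx i)).1
  constructor
  · intro i j hij
    apply jacobiSym.eq_one_or_neg_one
    have hne : x i ≠ x j := by
      have := B.disj_X _ (hm i) _ (hm j) (by simpa [Fin.val_inj] using hij)
      exact fun h => Finset.disjoint_left.1 this (hx i) (h ▸ hx j)
    simpa using (Nat.coprime_primes (hp i) (hp j)).2 hne
  · intro i p hP
    apply jacobiSym.eq_one_or_neg_one
    have hne : x i ≠ p := fun h => Finset.disjoint_left.1 (B.disj_XP _ (hm i)) (hx i) (h ▸ hP)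
    simpa using (Nat.coprime_primes (hp i) (B.prime_P p hP).1).2 hne

/-- Lemma 7.4 (second moment bound for truncated Legendre conditions under permutations). -/
theorem second_moment_truncated (r : ℕ) (B : Prebox r) (k₀ k₁ k₂ : ℕ)
    (h01 : k₀ ≤ k₁) (h12 : k₁ ≤ k₂) (h2r : k₂ ≤ r)
    (hgap : 2 ^ (k₀ + B.P.card + 1) * k₁ ^ 2 < k₂) :
    ∀ x : Fin r → ℕ, (∀ i : Fin r, x i ∈ B.X ((i : ℕ) + 1)) →
      ∑ a : MrIdx r ⊕ MrPIdx r B.P → ZMod 2,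
        ((k₂.factorial : ℝ) / 2 ^ (Ccount k₀ k₁ + k₁ * B.P.card) -
          (Nat.card {σ : Equiv.Perm (Fin r) //
            (∀ i : Fin r, k₂ ≤ (i : ℕ) → σ i = i) ∧ InTrun x k₀ k₁ σ a} : ℝ)) ^ 2 ≤
      ((2 : ℝ) ^ (k₀ + B.P.card + 1) * (k₁ : ℝ) ^ 2 / (k₂ : ℝ)) *
        ((2 : ℝ) ^ (Nat.card (MrIdx r ⊕ MrPIdx r B.P)) /
          (2 : ℝ) ^ (2 * Ccount k₀ k₁ + 2 * k₁ * B.P.card)) *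
        ((k₂.factorial : ℝ)) ^ 2 := by
  intro x hx
  obtain ⟨hs1, hs2⟩ := symbols B x hx
  set D := Ccount k₀ k₁ + k₁ * B.P.card with hD
  set M := Nat.card (MrIdx r ⊕ MrPIdx r B.P) with hM
  have hMf : Fintype.card (MrIdx r ⊕ MrPIdx r B.P) = M := by rw [hM, Nat.card_eq_fintype_card]
  have hk2 : 0 < k₂ := by omega
  have hk2' : (0 : ℝ) < k₂ := by exact_mod_cast hk2
  set G := permSet r k₂ with hG
  have hGc : (G.card : ℝ) = k₂.factorial := by rw [hG, card_permSet h2r]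
  set W : Equiv.Perm (Fin r) → (MrIdx r ⊕ MrPIdx r B.P → ZMod 2) → ℝ :=
    fun σ a => if InTrun x k₀ k₁ σ a then 1 else 0 with hW
  have hN : ∀ a : MrIdx r ⊕ MrPIdx r B.P → ZMod 2,
      (Nat.card {σ : Equiv.Perm (Fin r) //
        (∀ i : Fin r, k₂ ≤ (i : ℕ) → σ i = i) ∧ InTrun x k₀ k₁ σ a} : ℝ) = ∑ σ ∈ G, W σ a := by
    intro a
    rw [Nat.card_eq_fintype_card, Fintype.card_subtype, hW, Finset.sum_boole, hG, permSet,
      Finset.filter_filter]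
  have hDc : ∀ σ : Equiv.Perm (Fin r), (conSet B.P k₀ k₁ σ).card = D :=
    fun σ => card_conSet B.P h01 (h12.trans h2r) σ
  have hW1 : ∀ σ, ∑ a, W σ a = 2 ^ M / 2 ^ D := by
    intro σ
    have := count_fix_pred (conSet B.P k₀ k₁ σ) (conVal B.P x σ) (InTrun x k₀ k₁ σ)
      (inTrun_iff x k₀ k₁ hs1 hs2 σ)
    rw [hMf, hDc] at this
    exact this
  set m := k₀ + B.P.card with hm
  have hW2 : ∀ σ τ, ∑ a, W σ a * W τ a
      ≤ 2 ^ M / 2 ^ (2 * D) * ((2 : ℝ) ^ m) ^ (lowSet k₁ σ ∩ lowSet k₁ τ).card := by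
    intro σ τ
    refine (count_joint_pred (conSet B.P k₀ k₁ σ) (conSet B.P k₀ k₁ τ) (conVal B.P x σ)
      (conVal B.P x τ) (InTrun x k₀ k₁ σ) (InTrun x k₀ k₁ τ)
      (inTrun_iff x k₀ k₁ hs1 hs2 σ) (inTrun_iff x k₀ k₁ hs1 hs2 τ)).trans ?_
    rw [hMf, hDc, hDc, ← two_mul, ← pow_mul]
    gcongr
    · norm_num
    · rw [mul_comm]
      exact card_inter_conSet B.P σ τ
  simp_rw [hN]
  have hQ : (1 : ℝ) ≤ 2 ^ m := one_le_pow₀ (by norm_num)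
  have hgap' : (2 : ℝ) ^ (m + 1) * (k₁ : ℝ) ^ 2 < k₂ := by exact_mod_cast hgap
  have hpb : (1 + ((2 : ℝ) ^ m - 1) * (k₁ / k₂)) ^ k₁ - 1
      ≤ (2 : ℝ) ^ (m + 1) * (k₁ : ℝ) ^ 2 / k₂ := by
    have hy : (k₁ : ℝ) * (((2 : ℝ) ^ m - 1) * (k₁ / k₂)) ≤ 2 ^ m * (k₁ : ℝ) ^ 2 / k₂ := by
      have : (k₁ : ℝ) * (((2 : ℝ) ^ m - 1) * (k₁ / k₂)) = (2 ^ m - 1) * (k₁ : ℝ) ^ 2 / k₂ := by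
        ring
      rw [this]
      gcongr
      linarith
    have hh : 2 ^ m * (k₁ : ℝ) ^ 2 / k₂ ≤ 1 / 2 := by
      rw [div_le_iff₀ hk2']
      rw [pow_succ] at hgap'
      linarith
    have := pow_bound k₁ (((2 : ℝ) ^ m - 1) * (k₁ / k₂))
      (mul_nonneg (by linarith) (by positivity)) (hy.trans hh)
    have e : (2 : ℝ) ^ (m + 1) * (k₁ : ℝ) ^ 2 / k₂ = 2 * (2 ^ m * (k₁ : ℝ) ^ 2 / k₂) := by ring
    rw [e]
    linarith
  have hS1 : ∑ a, ∑ σ ∈ G, W σ a = k₂.factorial * (2 ^ M / 2 ^ D) := by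
    rw [Finset.sum_comm, Finset.sum_congr rfl fun σ _ => hW1 σ, Finset.sum_const, nsmul_eq_mul, hGc]
  have hS2 : ∑ a, (∑ σ ∈ G, W σ a) ^ 2 ≤ 2 ^ M / 2 ^ (2 * D) *
      ((k₂.factorial : ℝ) ^ 2 * (1 + ((2 : ℝ) ^ m - 1) * (k₁ / k₂)) ^ k₁) := by
    calc _ = ∑ σ ∈ G, ∑ τ ∈ G, ∑ a, W σ a * W τ a := by
          simp_rw [sq, Finset.sum_mul_sum]
          rw [Finset.sum_comm]
          refine Finset.sum_congr rfl fun σ _ => ?_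
          rw [Finset.sum_comm]
      _ ≤ ∑ σ ∈ G, ∑ τ ∈ G,
          2 ^ M / 2 ^ (2 * D) * ((2 : ℝ) ^ m) ^ (lowSet k₁ σ ∩ lowSet k₁ τ).card :=
          Finset.sum_le_sum fun σ _ => Finset.sum_le_sum fun τ _ => hW2 σ τ
      _ ≤ ∑ σ ∈ G, 2 ^ M / 2 ^ (2 * D) *
          ((k₂.factorial : ℝ) * (1 + ((2 : ℝ) ^ m - 1) * (k₁ / k₂)) ^ k₁) := by
          refine Finset.sum_le_sum fun σ hσ => ?_
          rw [← Finset.mul_sum]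
          exact mul_le_mul_of_nonneg_left (sum_pow_inter h12 h2r hk2 σ hσ _ hQ) (by positivity)
      _ = _ := by
          rw [Finset.sum_const, nsmul_eq_mul, hGc]
          ring
  have hcard : ((Finset.univ : Finset (MrIdx r ⊕ MrPIdx r B.P → ZMod 2)).card : ℝ) = 2 ^ M := by
    rw [Finset.card_univ, Fintype.card_fun, hMf, ZMod.card]
    norm_num
  have hexp : ∑ a, ((k₂.factorial : ℝ) / 2 ^ D - ∑ σ ∈ G, W σ a) ^ 2
      = ∑ a, (∑ σ ∈ G, W σ a) ^ 2 - 2 ^ M / 2 ^ (2 * D) * (k₂.factorial : ℝ) ^ 2 := by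
    simp_rw [sub_sq]
    rw [Finset.sum_add_distrib, Finset.sum_sub_distrib, Finset.sum_const, nsmul_eq_mul, hcard,
      ← Finset.mul_sum, hS1, two_mul D, pow_add]
    field_simp
    ring
  have hDD : 2 * Ccount k₀ k₁ + 2 * k₁ * B.P.card = 2 * D := by rw [hD]; ring
  rw [hexp, hDD]
  have hpos : (0 : ℝ) ≤ 2 ^ M / 2 ^ (2 * D) * (k₂.factorial : ℝ) ^ 2 := by positivity
  have := mul_le_mul_of_nonneg_left hpb hpos
  nlinarith
end

section
/- There exists an absolute constant C > 0 such that the following holds, where all boxes are taken with compression parameter C_compr := (log log N)^{50}. Let N ≥ t ≥ 10^1000 be real numbers with log N ≥ (log t)³, and let r be a positive integer with |r − (1/2)·log log N| < (log log N)^{2/3}. Let f₁, f₂, … be squarefree integers, all greater than t, satisfying f_{i+1} > f_i² for all i. For each i set W(f_i) := {x ∈ 𝒟_r(N) : there exist an integer 0 ≤ k ≤ r, an (N,k,r)-box X and x' ∈ X such that f_i divides x' and x ∈ X}. Then |⋃_{i≥1} W(f_i)| ≤ C·|𝒟_r(N)| / log t. -/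
/-- `𝒟`: squarefree positive integers all of whose prime divisors are `≡ 1, 2 (mod 4)`. -/
def PellD : Set ℕ :=
  {d | Squarefree d ∧ 0 < d ∧ ∀ p : ℕ, p.Prime → p ∣ d → p % 4 = 1 ∨ p % 4 = 2}

/-- `𝒟_r(N)`. -/
def PellDr (r : ℕ) (N : ℝ) : Set ℕ :=
  {d ∈ PellD | (d : ℝ) < N ∧ d.primeFactors.card = r}

/-- `D₁ = exp((log log N)^{1/10})`. -/
noncomputable def D₁ (N : ℝ) : ℝ := Real.exp ((Real.log (Real.log N)) ^ ((1 : ℝ) / 10))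

/-- `B ⊆ ℕ` is an `(N,k,r)`-box with compression parameter `Ccompr`. -/
def IsBox (N Ccompr : ℝ) (k r : ℕ) (B : Set ℕ) : Prop :=
  k ≤ r ∧
  ∃ (X : ℕ → Finset ℕ) (p : ℕ → ℕ) (s : ℕ → ℝ),
    (∀ i, 1 ≤ i → i ≤ k →
      (p i).Prime ∧ (p i % 4 = 1 ∨ p i % 4 = 2) ∧ ((p i : ℝ) < D₁ N)) ∧
    (∀ i j, 1 ≤ i → i < j → j ≤ k → p i < p j) ∧
    (∀ i, k < i → i ≤ r → D₁ N ≤ s i) ∧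
    (∀ i, k < i → i + 1 ≤ r → s i < s (i + 1) ∧ s i < (2 / 3) * s (i + 1)) ∧
    (∀ i, 1 ≤ i → i ≤ k → X i = {p i}) ∧
    (∀ i, k < i → i ≤ r → ∀ q : ℕ,
      (q ∈ X i ↔ q.Prime ∧ (q % 4 = 1 ∨ q % 4 = 2) ∧
        s i < (q : ℝ) ∧ (q : ℝ) ≤ s i * (1 + 1 / Ccompr))) ∧
    (∀ i, 1 ≤ i → i ≤ r → (X i).Nonempty) ∧
    B = {d : ℕ | ∃ x : ℕ → ℕ, (∀ i, 1 ≤ i → i ≤ r → x i ∈ X i) ∧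
      d = ∏ i ∈ Finset.Icc 1 r, x i} ∧
    B ⊆ {d : ℕ | d ∈ PellD ∧ (d : ℝ) < N}

namespace AvoidSiegel
open Finset ArithmeticFunction

/-- the nontrivial character mod 4, real valued -/
noncomputable def chi (n : ℕ) : ℝ := ((ZMod.χ₄ (n : ZMod 4) : ℤ) : ℝ)

lemma chi_mul (m n : ℕ) : chi (m * n) = chi m * chi n := by
  unfold chi; push_cast; rw [map_mul]; push_cast; ring

lemma chi_eq (n : ℕ) : chi n = if n % 2 = 0 then 0 else if n % 4 = 1 then 1 else -1 := by
  unfold chi; rw [ZMod.χ₄_nat_eq_if_mod_four]; split_ifs <;> simp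

/-- partial sums of `chi` over `m < n` -/
def chiSum (n : ℕ) : ℝ := if n % 4 = 2 ∨ n % 4 = 3 then 1 else 0

lemma chiSum_succ (n : ℕ) : chiSum (n + 1) = chiSum n + chi n := by
  rw [chi_eq]; unfold chiSum
  have : n % 4 < 4 := Nat.mod_lt _ (by norm_num)
  have h : n % 4 = 0 ∨ n % 4 = 1 ∨ n % 4 = 2 ∨ n % 4 = 3 := by omega
  rcases h with h | h | h | h
  · have h1 : (n+1) % 4 = 1 := by omega
    have h2 : n % 2 = 0 := by omega
    simp [h, h1, h2]
  · have h1 : (n+1) % 4 = 2 := by omega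
    have h2 : n % 2 = 1 := by omega
    simp [h, h1, h2]
  · have h1 : (n+1) % 4 = 3 := by omega
    have h2 : n % 2 = 0 := by omega
    simp [h, h1, h2]
  · have h1 : (n+1) % 4 = 0 := by omega
    have h2 : n % 2 = 1 := by omega
    simp [h, h1, h2]

lemma chiSum_nonneg (n : ℕ) : 0 ≤ chiSum n := by unfold chiSum; split_ifs <;> norm_num
lemma chiSum_le (n : ℕ) : chiSum n ≤ 1 := by unfold chiSum; split_ifs <;> norm_num

lemma abel_chi (g : ℕ → ℝ) (a : ℕ) (hg : ∀ m, a ≤ m → g (m + 1) ≤ g m) (b : ℕ) (hb : a ≤ b) :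
    chiSum b * g b - chiSum a * g a ≤ ∑ m ∈ Ico a b, chi m * g m ∧
    ∑ m ∈ Ico a b, chi m * g m ≤ chiSum b * g b - chiSum a * g a + g a - g b := by
  induction b, hb using Nat.le_induction with
  | base => simp
  | succ b hb ih =>
    rw [Finset.sum_Ico_succ_top hb]
    have h1 := chiSum_succ b
    have h2 := chiSum_nonneg (b+1)
    have h3 := chiSum_le (b+1)
    have h4 := hg b hb
    have h5 : chi b = chiSum (b+1) - chiSum b := by linarith
    rw [h5]
    constructor
    · nlinarith [ih.1, mul_nonneg h2 (sub_nonneg.2 h4)]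
    · nlinarith [ih.2, mul_nonneg (sub_nonneg.2 h3) (sub_nonneg.2 h4)]

lemma abel_chi_abs (g : ℕ → ℝ) (a : ℕ) (hg : ∀ m, a ≤ m → g (m + 1) ≤ g m)
    (hg0 : ∀ m, a ≤ m → 0 ≤ g m) (b : ℕ) (hb : a ≤ b) :
    |∑ m ∈ Ico a b, chi m * g m| ≤ g a := by
  obtain ⟨h1, h2⟩ := abel_chi g a hg b hb
  have h3 := hg0 a le_rfl
  have h4 := hg0 b hb
  have := chiSum_nonneg a
  have := chiSum_nonneg b
  have := chiSum_le a
  have := chiSum_le b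
  rw [abs_le]; constructor <;> nlinarith

/-- partial sums of `L(1, chi)` -/
noncomputable def chiF (k : ℕ) : ℝ := ∑ m ∈ Ioc 0 k, chi m / m

lemma chiF_sub (j k : ℕ) (h : j ≤ k) : |chiF k - chiF j| ≤ 1 / (j + 1 : ℝ) := by
  have h1 : chiF k - chiF j = ∑ m ∈ Ico (j+1) (k+1), chi m * (1 / (m:ℝ)) := by
    unfold chiF
    rw [sub_eq_iff_eq_add, show Ico (j+1) (k+1) = Ioc j k by ext; simp, add_comm]
    rw [← Finset.sum_Ioc_consecutive _ (Nat.zero_le j) h]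
    congr 1
    apply Finset.sum_congr rfl; intros; ring
  rw [h1]
  have := abel_chi_abs (fun m => 1 / (m:ℝ)) (j+1) (fun m hm => ?_) (fun m hm => by positivity) (k+1) (by omega)
  · simpa using this
  · have : (0:ℝ) < m := by exact_mod_cast (by omega : 0 < m)
    gcongr; simp

lemma exists_L1 : ∃ l : ℝ, 2/3 ≤ l ∧ ∀ k, |chiF k - l| ≤ 1 / (k + 1 : ℝ) := by
  have hc : CauchySeq chiF := by
    rw [Metric.cauchySeq_iff']
    intro ε hε
    obtain ⟨n, hn⟩ := exists_nat_one_div_lt hε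
    refine ⟨n, fun m hm => ?_⟩
    rw [Real.dist_eq]
    exact (chiF_sub n m hm).trans_lt hn
  obtain ⟨l, hl⟩ := cauchySeq_tendsto_of_complete hc
  have h : ∀ k, |chiF k - l| ≤ 1 / (k + 1 : ℝ) := by
    intro k
    rw [abs_sub_comm]
    refine le_of_tendsto ((hl.sub_const (chiF k)).abs) ?_
    filter_upwards [Filter.eventually_ge_atTop k] with j hj using chiF_sub k j hj
  refine ⟨l, ?_, h⟩
  have := h 2
  have h2 : chiF 2 = 1 := by
    unfold chiF
    rw [show Ioc 0 2 = {1,2} by decide]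
    simp [chi_eq]
  rw [h2, abs_le] at this
  norm_num at this
  linarith [this.2]

/-- `chi * Λ / id` -/
noncomputable def fA : ArithmeticFunction ℝ := ⟨fun n => chi n * Λ n / n, by simp⟩
noncomputable def gA : ArithmeticFunction ℝ := ⟨fun n => chi n / n, by simp⟩

lemma fA_mul_gA (n : ℕ) : (fA * gA) n = chi n * (Real.log n / n) := by
  rw [ArithmeticFunction.mul_apply]
  rcases Nat.eq_zero_or_pos n with rfl | hn
  · simp
  rw [← vonMangoldt_sum, Nat.sum_divisorsAntidiagonal (f := fun x y => fA x * gA y), Finset.sum_div,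
    Finset.mul_sum]
  apply Finset.sum_congr rfl
  intro d hd
  have hd' := Nat.dvd_of_mem_divisors hd
  obtain ⟨e, rfl⟩ := hd'
  have hd0 : 0 < d := Nat.pos_of_mul_pos_right hn
  have he0 : 0 < e := Nat.pos_of_mul_pos_left hn
  rw [Nat.mul_div_cancel_left _ hd0, chi_mul]
  simp only [fA, gA, ArithmeticFunction.coe_mk]
  push_cast
  field_simp

lemma psi_le' (n : ℕ) : ∑ d ∈ Ioc 0 n, Λ d ≤ 6 * n := by
  have h := Chebyshev.psi_le_const_mul_self (x := (n:ℝ)) (by positivity)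
  rw [Chebyshev.psi] at h
  simp only [Nat.floor_natCast] at h
  have : Real.log 4 ≤ 2 := by
    rw [show (4:ℝ) = 2^2 by norm_num, Real.log_pow]
    have := Real.log_two_lt_d9
    push_cast; linarith
  refine h.trans ?_
  gcongr; linarith

lemma T_bound : ∃ c : ℝ, ∀ n : ℕ, |∑ m ∈ Ioc 0 n, chi m * (Real.log m / m)| ≤ c := by
  have key : ∀ n : ℕ, 3 ≤ n → |∑ m ∈ Ico 3 n, chi m * (Real.log m / m)| ≤ Real.log 3 / 3 := by
    intro n hn
    refine (abel_chi_abs (fun m => Real.log m / m) 3 ?_ ?_ n hn).trans (by simp)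
    · intro m hm
      have hm' : (3:ℝ) ≤ m := by exact_mod_cast hm
      have he := Real.exp_one_lt_d9
      apply Real.log_div_self_antitoneOn
      · simp; linarith
      · simp; linarith
      · simp
    · intro m hm
      have hm' : (3:ℝ) ≤ m := by exact_mod_cast hm
      have := Real.log_nonneg (by linarith : (1:ℝ) ≤ m)
      positivity
  refine ⟨Real.log 3 / 3, fun n => ?_⟩
  have h0 : (0:ℝ) ≤ Real.log 3 / 3 := by positivity
  by_cases hn : 3 ≤ n + 1
  · have : Ioc 0 n = Ioc 0 2 ∪ Ico 3 (n+1) := by ext; simp; omega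
    rw [this, Finset.sum_union, show Ioc 0 2 = {1,2} by decide]
    · have := key (n+1) hn
      simpa [chi_eq 2] using this
    · rw [Finset.disjoint_left]; intro x; simp; omega
  · have : n = 0 ∨ n = 1 := by omega
    rcases this with rfl | rfl <;> simp [h0]

lemma B_bound : ∃ c : ℝ, ∀ n : ℕ, |∑ d ∈ Ioc 0 n, chi d * Λ d / d| ≤ c := by
  obtain ⟨c, hc⟩ := T_bound
  obtain ⟨l, hl, hF⟩ := exists_L1
  refine ⟨(c + 6) * (3/2), fun n => ?_⟩
  set B := ∑ d ∈ Ioc 0 n, chi d * Λ d / d with hB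
  have h1 := sum_Ioc_mul_eq_sum_sum fA gA n
  simp only [fA_mul_gA] at h1
  have h2 := hc n
  rw [h1] at h2
  have h3 : l * B - ∑ d ∈ Ioc 0 n, fA d * ∑ m ∈ Ioc 0 (n/d), gA m
      = ∑ d ∈ Ioc 0 n, fA d * (l - chiF (n/d)) := by
    rw [hB, Finset.mul_sum, ← Finset.sum_sub_distrib]
    apply Finset.sum_congr rfl; intro d _
    simp only [fA, gA, chiF, ArithmeticFunction.coe_mk]
    ring
  have h4 : |∑ d ∈ Ioc 0 n, fA d * (l - chiF (n/d))| ≤ 6 := by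
    rcases Nat.eq_zero_or_pos n with rfl | hn
    · simp
    refine (Finset.abs_sum_le_sum_abs _ _).trans ?_
    have : ∀ d ∈ Ioc 0 n, |fA d * (l - chiF (n/d))| ≤ Λ d / n := by
      intro d hd
      have hd0 : 0 < d := (Finset.mem_Ioc.1 hd).1
      have hd' : (0:ℝ) < d := by exact_mod_cast hd0
      have hn' : (0:ℝ) < n := by exact_mod_cast hn
      have h5 := hF (n/d)
      rw [abs_sub_comm] at h5
      have h6 : (n:ℝ)/d ≤ ((n/d : ℕ):ℝ) + 1 := by
        rw [div_le_iff₀ hd']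
        have := Nat.lt_div_mul_add hd0 (a := n)
        have h7 : n ≤ (n/d + 1) * d := by nlinarith
        exact_mod_cast h7
      have h8 : |l - chiF (n/d)| ≤ d / n := by
        refine h5.trans ?_
        rw [div_le_div_iff₀ (by positivity) hn']
        rw [div_le_iff₀ hd'] at h6
        linarith
      have h9 : |fA d| ≤ Λ d / d := by
        simp only [fA, ArithmeticFunction.coe_mk]
        rw [abs_div, abs_mul, abs_of_pos hd', abs_of_nonneg (vonMangoldt_nonneg (n := d))]
        gcongr
        have : |chi d| ≤ 1 := by rw [chi_eq]; split_ifs <;> simp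
        have h0 := vonMangoldt_nonneg (n := d)
        nlinarith
      rw [abs_mul]
      calc |fA d| * |l - chiF (n/d)| ≤ (Λ d / d) * (d/n) := by
            gcongr
        _ = Λ d / n := by field_simp
    refine (Finset.sum_le_sum this).trans ?_
    rw [← Finset.sum_div, div_le_iff₀ (by exact_mod_cast hn)]
    exact psi_le' n
  rw [← h3] at h4
  have h5 : |l * B| ≤ c + 6 := by
    have := abs_add_le (l * B - ∑ d ∈ Ioc 0 n, fA d * ∑ m ∈ Ioc 0 (n/d), gA m)
      (∑ d ∈ Ioc 0 n, fA d * ∑ m ∈ Ioc 0 (n/d), gA m)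
    rw [sub_add_cancel] at this
    linarith
  rw [abs_mul, abs_of_nonneg (by linarith : 0 ≤ l)] at h5
  nlinarith [abs_nonneg B]

lemma sum_log_eq (n : ℕ) : ∑ d ∈ Ioc 0 n, Λ d * ((n / d : ℕ) : ℝ) = ∑ d ∈ Ioc 0 n, Real.log d := by
  rw [← sum_Ioc_mul_zeta_eq_sum, vonMangoldt_mul_zeta]
  simp [ArithmeticFunction.log_apply]

lemma sum_log_le (n : ℕ) : ∑ d ∈ Ioc 0 n, Real.log d ≤ n * Real.log n := by
  have : ∀ d ∈ Ioc 0 n, Real.log d ≤ Real.log n := by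
    intro d hd
    rw [Finset.mem_Ioc] at hd
    apply Real.log_le_log (by exact_mod_cast hd.1) (by exact_mod_cast hd.2)
  refine (Finset.sum_le_card_nsmul _ _ _ this).trans ?_
  simp

lemma sum_log_ge (n : ℕ) : n * Real.log n - n ≤ ∑ d ∈ Ioc 0 n, Real.log d := by
  induction n with
  | zero => simp
  | succ n ih =>
    rw [Finset.sum_Ioc_succ_top (Nat.zero_le n)]
    rcases Nat.eq_zero_or_pos n with rfl | hn
    · simp
    have hn' : (0:ℝ) < n := by exact_mod_cast hn
    have h : Real.log (n+1) - Real.log n ≤ 1 / n := by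
      rw [← Real.log_div (by positivity) (by positivity)]
      refine (Real.log_le_sub_one_of_pos (by positivity)).trans ?_
      rw [add_div, div_self hn'.ne']; linarith
    push_cast
    have h2 : n * (Real.log (n+1) - Real.log n) ≤ 1 := by
      calc n * (Real.log (n+1) - Real.log n) ≤ n * (1/n) := by gcongr
        _ = 1 := by field_simp
    nlinarith

lemma A_bound (n : ℕ) (hn : 0 < n) : |∑ d ∈ Ioc 0 n, Λ d / d - Real.log n| ≤ 6 := by
  have hn' : (0:ℝ) < n := by exact_mod_cast hn
  have h1 := sum_log_eq n
  have h2 := sum_log_le n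
  have h3 := sum_log_ge n
  have h4 := psi_le' n
  have hA : n * ∑ d ∈ Ioc 0 n, Λ d / d ≤ ∑ d ∈ Ioc 0 n, (Λ d * ((n/d:ℕ):ℝ) + Λ d) := by
    rw [Finset.mul_sum]
    apply Finset.sum_le_sum
    intro d hd
    have hd0 : 0 < d := (Finset.mem_Ioc.1 hd).1
    have hd' : (0:ℝ) < d := by exact_mod_cast hd0
    have h6 : (n:ℝ)/d ≤ ((n/d : ℕ):ℝ) + 1 := by
      rw [div_le_iff₀ hd']
      have := Nat.lt_div_mul_add hd0 (a := n)
      have h7 : n ≤ (n/d + 1) * d := by nlinarith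
      exact_mod_cast h7
    calc n * (Λ d / d) = Λ d * (n/d) := by ring
      _ ≤ Λ d * (((n/d : ℕ):ℝ) + 1) := by
        gcongr
      _ = _ := by ring
  have hB : ∑ d ∈ Ioc 0 n, (Λ d * ((n/d:ℕ):ℝ)) ≤ n * ∑ d ∈ Ioc 0 n, Λ d / d := by
    rw [Finset.mul_sum]
    apply Finset.sum_le_sum
    intro d hd
    calc Λ d * ((n/d:ℕ):ℝ) ≤ Λ d * (n/d) := by
          gcongr
          · exact Nat.cast_div_le
      _ = _ := by ring
  rw [Finset.sum_add_distrib] at hA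
  rw [abs_le]
  constructor <;> nlinarith

lemma nonprime_bound : ∃ c : ℝ, 0 ≤ c ∧ ∀ n : ℕ,
    ∑ d ∈ Ioc 0 n, (if d.Prime then 0 else Λ d / d) ≤ c := by
  have h := vonMangoldt.summable_residueClass_non_primes_div (q := 1) 0
  have heq : (fun n : ℕ => (if n.Prime then 0 else vonMangoldt.residueClass (0 : ZMod 1) n) / (n:ℝ))
      = fun d : ℕ => (if d.Prime then 0 else Λ d / d) := by
    funext n
    split_ifs
    · simp
    · simp [vonMangoldt.residueClass, Subsingleton.elim _ (0 : ZMod 1)]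
  rw [heq] at h
  have h0 : ∀ d : ℕ, 0 ≤ (if d.Prime then 0 else Λ d / d : ℝ) := by
    intro d; split_ifs
    · exact le_rfl
    · exact div_nonneg vonMangoldt_nonneg (Nat.cast_nonneg _)
  exact ⟨_, tsum_nonneg h0, fun n => h.sum_le_tsum _ (fun i _ => h0 i)⟩

/-- Mertens' first theorem for primes `1 mod 4`. -/
theorem mertens4 : ∃ c : ℝ, 0 ≤ c ∧ ∀ n : ℕ, 0 < n →
    |∑ p ∈ (Ioc 0 n).filter (fun p => p.Prime ∧ p % 4 = 1), Real.log p / p - Real.log n / 2| ≤ c := by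
  obtain ⟨c1, h1⟩ := B_bound
  obtain ⟨c2, hc2, h2⟩ := nonprime_bound
  refine ⟨c1 / 2 + c2 + 4, by linarith [abs_nonneg (∑ d ∈ Ioc 0 0, chi d * Λ d / d), h1 0], fun n hn => ?_⟩
  have hB := h1 n
  have hA := A_bound n hn
  have hN := h2 n
  have e1 : ∑ d ∈ Ioc 0 n, ((1 + chi d)/2) * (Λ d / d) =
      (∑ d ∈ Ioc 0 n, Λ d / d) / 2 + (∑ d ∈ Ioc 0 n, chi d * Λ d / d) / 2 := by
    rw [Finset.sum_div, Finset.sum_div, ← Finset.sum_add_distrib]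
    apply Finset.sum_congr rfl; intros; ring
  have hpt : ∀ d : ℕ, (if d.Prime ∧ d % 4 = 1 then Real.log d / d else 0) ≤ ((1 + chi d)/2) * (Λ d / d) ∧
      ((1 + chi d)/2) * (Λ d / d) ≤ (if d.Prime ∧ d % 4 = 1 then Real.log d / d else 0)
        + (if d.Prime then 0 else Λ d / d) + (if d = 2 then 1 else 0) := by
    intro d
    have hL : 0 ≤ Λ d / d := div_nonneg vonMangoldt_nonneg (Nat.cast_nonneg _)
    have hc : 0 ≤ (1 + chi d)/2 ∧ (1 + chi d)/2 ≤ 1 := by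
      rw [chi_eq]; split_ifs <;> norm_num
    by_cases hp : d.Prime
    · have hv := vonMangoldt_apply_prime hp
      rcases hp.eq_two_or_odd with rfl | h
      · have := Real.log_two_lt_d9
        have := Real.log_two_gt_d9
        rw [hv]; simp [chi_eq, Nat.prime_two]; constructor <;> linarith
      · have : d % 4 = 1 ∨ d % 4 = 3 := by omega
        have hd2 : d ≠ 2 := by omega
        rcases this with h' | h'
        · simp [hp, h', chi_eq, h, hv, hd2]
        · simp [hp, h', chi_eq, h, hv, hd2]
    · have : d ≠ 2 := by rintro rfl; exact hp Nat.prime_two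
      simp [hp, this]
      constructor
      · exact mul_nonneg hc.1 hL
      · nlinarith [hc.2]
  have hlo := Finset.sum_le_sum (fun d (_ : d ∈ Ioc 0 n) => (hpt d).1)
  have hhi := Finset.sum_le_sum (fun d (_ : d ∈ Ioc 0 n) => (hpt d).2)
  rw [Finset.sum_add_distrib, Finset.sum_add_distrib] at hhi
  have htwo : ∑ d ∈ Ioc 0 n, (if d = 2 then (1:ℝ) else 0) ≤ 1 := by
    rw [Finset.sum_ite_eq']; split_ifs <;> norm_num
  rw [e1] at hlo hhi
  rw [Finset.sum_filter]
  rw [abs_le] at *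
  constructor <;> linarith [hA.1, hA.2, hB.1, hB.2]

/-- upper Mertens for all primes -/
theorem mertens_all (n : ℕ) (hn : 0 < n) :
    ∑ p ∈ (Ioc 0 n).filter (fun p => p.Prime), Real.log p / p ≤ Real.log n + 6 := by
  have hA := (abs_le.1 (A_bound n hn)).2
  have : ∑ p ∈ (Ioc 0 n).filter (fun p => p.Prime), Real.log p / p ≤ ∑ d ∈ Ioc 0 n, Λ d / d := by
    rw [Finset.sum_filter]
    apply Finset.sum_le_sum
    intro d _
    split_ifs with h
    · rw [vonMangoldt_apply_prime h]
    · exact div_nonneg vonMangoldt_nonneg (Nat.cast_nonneg _)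
  linarith
end AvoidSiegel

namespace AvoidSiegel
open Finset

/-- primes `1 mod 4` up to `x` -/
noncomputable def PO (x : ℝ) : Finset ℕ := (Ioc 0 ⌊x⌋₊).filter (fun p => p.Prime ∧ p % 4 = 1)

/-- primes up to `x` -/
noncomputable def PP (x : ℝ) : Finset ℕ := (Ioc 0 ⌊x⌋₊).filter (fun p => p.Prime)

lemma mem_PO {x : ℝ} (hx : 0 ≤ x) {p : ℕ} : p ∈ PO x ↔ p.Prime ∧ p % 4 = 1 ∧ (p : ℝ) ≤ x := by
  unfold PO
  rw [Finset.mem_filter, Finset.mem_Ioc, Nat.le_floor_iff hx]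
  constructor
  · tauto
  · intro h; exact ⟨⟨h.1.pos, h.2.2⟩, h.1, h.2.1⟩

lemma mem_PP {x : ℝ} (hx : 0 ≤ x) {p : ℕ} : p ∈ PP x ↔ p.Prime ∧ (p : ℝ) ≤ x := by
  unfold PP
  rw [Finset.mem_filter, Finset.mem_Ioc, Nat.le_floor_iff hx]
  constructor
  · tauto
  · intro h; exact ⟨⟨h.1.pos, h.2⟩, h.1⟩

lemma log_floor (x : ℝ) (hx : 1 ≤ x) : Real.log ⌊x⌋₊ ≤ Real.log x ∧ Real.log x ≤ Real.log ⌊x⌋₊ + 1 := by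
  have h1 : 1 ≤ ⌊x⌋₊ := Nat.one_le_floor_iff _ |>.2 hx
  have h1' : (1:ℝ) ≤ ⌊x⌋₊ := by exact_mod_cast h1
  have h2 := Nat.floor_le (by linarith : 0 ≤ x)
  have h3 := Nat.lt_floor_add_one x
  constructor
  · exact Real.log_le_log (by linarith) h2
  · have : Real.log x ≤ Real.log (2 * ⌊x⌋₊) := Real.log_le_log (by linarith) (by linarith)
    rw [Real.log_mul (by norm_num) (by linarith)] at this
    have := Real.log_two_lt_d9
    linarith

lemma mertensPO : ∃ c : ℝ, 0 ≤ c ∧ ∀ x : ℝ, 1 ≤ x →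
    |∑ p ∈ PO x, Real.log p / p - Real.log x / 2| ≤ c := by
  obtain ⟨c, hc, h⟩ := mertens4
  refine ⟨c + 1, by linarith, fun x hx => ?_⟩
  have h1 := h ⌊x⌋₊ (Nat.floor_pos.2 hx)
  obtain ⟨h2, h3⟩ := log_floor x hx
  unfold PO
  rw [abs_le] at *
  constructor <;> linarith [h1.1, h1.2]

lemma mertensPP (x : ℝ) (hx : 1 ≤ x) : ∑ p ∈ PP x, Real.log p / p ≤ Real.log x + 6 := by
  have h1 := mertens_all ⌊x⌋₊ (Nat.floor_pos.2 hx)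
  obtain ⟨h2, h3⟩ := log_floor x hx
  unfold PP
  linarith

lemma PO_mono {x y : ℝ} (h : x ≤ y) : PO x ⊆ PO y := by
  unfold PO
  apply Finset.filter_subset_filter
  apply Finset.Ioc_subset_Ioc_right (Nat.floor_le_floor h)

lemma PP_mono {x y : ℝ} (h : x ≤ y) : PP x ⊆ PP y := by
  unfold PP
  apply Finset.filter_subset_filter
  apply Finset.Ioc_subset_Ioc_right (Nat.floor_le_floor h)

lemma block : ∃ K : ℝ, Real.exp 1 ≤ K ∧ ∀ x : ℝ, 1 ≤ x →
    0.49 * Real.log K ≤ ∑ p ∈ PO (K * x) \ PO x, Real.log p / p := by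
  obtain ⟨c, hc, h⟩ := mertensPO
  refine ⟨Real.exp (200 * c + 1), Real.exp_le_exp.2 (by linarith), fun x hx => ?_⟩
  set K := Real.exp (200 * c + 1) with hK
  have hK1 : 1 ≤ K := Real.one_le_exp (by linarith)
  have hlK : Real.log K = 200 * c + 1 := Real.log_exp _
  have h1 := (abs_le.1 (h x hx)).2
  have h2 := (abs_le.1 (h (K*x) (by nlinarith))).1
  rw [Real.log_mul (by positivity) (by positivity)] at h2
  have h3 := Finset.sum_sdiff (f := fun p : ℕ => Real.log p / p) (PO_mono (by nlinarith : x ≤ K * x))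
  rw [hlK] at *
  linarith

lemma theta_lower : ∃ c K : ℝ, 0 < c ∧ 1 ≤ K ∧ ∀ x : ℝ, K ≤ x → c * x ≤ ∑ p ∈ PO x, Real.log p := by
  obtain ⟨K, hK, h⟩ := block
  have hK2 : 1 < K := by have := Real.exp_one_gt_d9; linarith
  refine ⟨0.49 * Real.log K / K, K, ?_, hK2.le, fun x hx => ?_⟩
  · have := Real.log_pos hK2
    positivity
  have h1 := h (x / K) (by rw [le_div_iff₀ (by linarith)]; linarith)
  rw [mul_div_cancel₀ _ (by linarith : K ≠ 0)] at h1
  have hx0 : 0 < x := by linarith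
  have h2 : ∑ p ∈ PO x \ PO (x/K), Real.log p / p ≤ ∑ p ∈ PO x, Real.log p / (x/K) := by
    refine le_trans (Finset.sum_le_sum (g := fun p : ℕ => Real.log p / (x/K)) ?_) ?_
    · intro p hp
      rw [Finset.mem_sdiff, mem_PO hx0.le, mem_PO (by positivity)] at hp
      have : x / K < p := by
        by_contra hcon
        push Not at hcon
        exact hp.2 ⟨hp.1.1, hp.1.2.1, hcon⟩
      have hl : 0 ≤ Real.log p := Real.log_natCast_nonneg p
      have : 0 < x / K := by positivity
      gcongr
    · apply Finset.sum_le_sum_of_subset_of_nonneg Finset.sdiff_subset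
      intro p _ _
      have hl : 0 ≤ Real.log p := Real.log_natCast_nonneg p
      positivity
  rw [← Finset.sum_div] at h2
  have h3 := h1.trans h2
  rw [le_div_iff₀ (by positivity)] at h3
  calc _ = 0.49 * Real.log K * (x/K) := by ring
    _ ≤ _ := h3

lemma recip_lower : ∃ c : ℝ, 0 ≤ c ∧ ∀ x : ℝ, 1 < x →
    0.49 * Real.log (Real.log x) - c ≤ ∑ p ∈ PO x, 1 / (p:ℝ) := by
  obtain ⟨K, hK, h⟩ := block
  have hK2 : 1 < K := by have := Real.exp_one_gt_d9; linarith
  have hlK : 1 ≤ Real.log K := by rw [Real.le_log_iff_exp_le (by linarith)]; exact hK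
  have key : ∀ J : ℕ, 0.49 * (harmonic J : ℝ) ≤ ∑ p ∈ PO (K^J), 1 / (p:ℝ) := by
    intro J
    induction J with
    | zero => simp; exact Finset.sum_nonneg (fun _ _ => by positivity)
    | succ J ih =>
      have h1 := h (K^J) (one_le_pow₀ hK2.le)
      have h3 := Finset.sum_sdiff (f := fun p : ℕ => 1 / (p:ℝ)) (PO_mono (by nlinarith [one_le_pow₀ hK2.le (n := J)] : K^J ≤ K * K^J))
      rw [← pow_succ'] at h1 h3
      rw [← h3, harmonic_succ]
      push_cast
      have h2 : ∑ p ∈ PO (K^(J+1)) \ PO (K^J), Real.log p / p ≤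
          ∑ p ∈ PO (K^(J+1)) \ PO (K^J), ((J+1) * Real.log K) * (1/(p:ℝ)) := by
        apply Finset.sum_le_sum
        intro p hp
        rw [Finset.mem_sdiff, mem_PO (by positivity)] at hp
        have hp0 : (0:ℝ) < p := by exact_mod_cast hp.1.1.pos
        have : Real.log p ≤ (J+1) * Real.log K := by
          have := Real.log_le_log hp0 hp.1.2.2
          rw [Real.log_pow] at this
          push_cast at this; exact this
        rw [div_eq_mul_one_div]
        gcongr
      rw [← Finset.mul_sum] at h2
      have h4 := h1.trans h2
      have hJ : (0:ℝ) < (J:ℝ) + 1 := by positivity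
      have h5 : 0.49 * ((J:ℝ)+1)⁻¹ ≤ ∑ p ∈ PO (K^(J+1)) \ PO (K^J), 1 / (p:ℝ) := by
        rw [← div_eq_mul_inv, div_le_iff₀ hJ]
        nlinarith
      linarith
  refine ⟨0.49 * Real.log (Real.log K), by have := Real.log_nonneg hlK; positivity, fun x hx => ?_⟩
  have hlx : 0 < Real.log x := Real.log_pos hx
  set J := ⌊Real.log x / Real.log K⌋₊ with hJ
  have h1 := key J
  have h2 := log_add_one_le_harmonic J
  have h3 := Nat.lt_floor_add_one (Real.log x / Real.log K)
  have h4 := Nat.floor_le (by positivity : 0 ≤ Real.log x / Real.log K)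
  rw [← hJ] at h3 h4
  have h5 : K^J ≤ x := by
    rw [le_div_iff₀ (by linarith)] at h4
    rw [← Real.log_le_log_iff (by positivity) (by linarith), Real.log_pow]
    exact h4
  have h6 : ∑ p ∈ PO (K^J), 1 / (p:ℝ) ≤ ∑ p ∈ PO x, 1 / (p:ℝ) :=
    Finset.sum_le_sum_of_subset_of_nonneg (PO_mono h5) (fun _ _ _ => by positivity)
  have h7 : Real.log (Real.log x) - Real.log (Real.log K) ≤ Real.log (J+1) := by
    rw [← Real.log_div (by linarith) (by linarith)]
    exact Real.log_le_log (by positivity) h3.le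
  push_cast at h2
  nlinarith

lemma recip_gap (z N : ℝ) (hz : 1 < z) (hN : z ≤ N) :
    ∑ p ∈ PP N \ PP z, 1 / (p:ℝ) ≤ (Real.log N + 6) / Real.log z := by
  have hlz : 0 < Real.log z := Real.log_pos hz
  rw [le_div_iff₀ hlz, Finset.sum_mul]
  refine le_trans ?_ (mertensPP N (by linarith))
  refine le_trans (Finset.sum_le_sum (g := fun p : ℕ => Real.log p / (p:ℝ)) ?_) ?_
  · intro p hp
    rw [Finset.mem_sdiff, mem_PP (by linarith), mem_PP (by linarith)] at hp
    have : z < p := by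
      by_contra hcon
      push Not at hcon
      exact hp.2 ⟨hp.1.1, hcon⟩
    have := Real.log_le_log (by linarith) this.le
    rw [one_div_mul_eq_div]
    gcongr
  · apply Finset.sum_le_sum_of_subset_of_nonneg Finset.sdiff_subset
    intro p _ _
    have hl : 0 ≤ Real.log p := Real.log_natCast_nonneg p
    positivity

lemma theta_upper (x : ℝ) (hx : 0 ≤ x) : ∑ p ∈ PP x, Real.log p ≤ 2 * x := by
  have h := Chebyshev.theta_le_log4_mul_x hx
  have h4 : Real.log 4 ≤ 2 := by
    rw [show (4:ℝ) = 2^2 by norm_num, Real.log_pow]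
    have := Real.log_two_lt_d9
    push_cast; linarith
  rw [Chebyshev.theta] at h
  unfold PP
  exact h.trans (by gcongr)

lemma pi_upper (x : ℝ) (hx : 2 ≤ x) : ((PP x).card : ℝ) ≤ 6 * x / Real.log x := by
  have h := Chebyshev.pi_le_log4_mul_div (x := x) (by linarith)
  have h4 : Real.log 4 ≤ 2 := by
    rw [show (4:ℝ) = 2^2 by norm_num, Real.log_pow]
    have := Real.log_two_lt_d9
    push_cast; linarith
  have hc : (PP x).card = Nat.primeCounting ⌊x⌋₊ := by
    rw [Nat.primeCounting, Nat.primeCounting', Nat.count_eq_card_filter_range]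
    congr 1
    ext p
    unfold PP
    simp only [Finset.mem_filter, Finset.mem_Ioc, Finset.mem_range]
    constructor
    · rintro ⟨⟨_, h⟩, h2⟩; exact ⟨by omega, h2⟩
    · rintro ⟨h, h2⟩; exact ⟨⟨h2.pos, by omega⟩, h2⟩
  rw [hc]
  have hlx : 0 < Real.log x := Real.log_pos (by linarith)
  have hls : Real.log √x = Real.log x / 2 := Real.log_sqrt (by linarith)
  have hs : √x * Real.log x ≤ 2 * x := by
    have h1 : Real.log √x ≤ √x := Real.log_le_self (Real.sqrt_nonneg x)
    have h2 := Real.mul_self_sqrt (by linarith : 0 ≤ x)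
    have h3 := Real.sqrt_nonneg x
    rw [hls] at h1
    nlinarith
  refine h.trans ?_
  rw [hls, le_div_iff₀ hlx, add_mul]
  have : Real.log 4 * x / (Real.log x / 2) * Real.log x = 2 * Real.log 4 * x := by field_simp
  rw [this]
  nlinarith

/-! ### elementary symmetric sums -/

/-- elementary symmetric sums of reciprocals -/
noncomputable def es (k : ℕ) (s : Finset ℕ) : ℝ := ∑ T ∈ powersetCard k s, ∏ p ∈ T, 1 / (p : ℝ)

lemma sum_powersetCard_mem (s : Finset ℕ) (k : ℕ) (F : ℕ → Finset ℕ → ℝ) :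
    ∑ T ∈ powersetCard (k+1) s, ∑ p ∈ T, F p (T.erase p) =
    ∑ p ∈ s, ∑ V ∈ powersetCard k (s.erase p), F p V := by
  rw [Finset.sum_sigma', Finset.sum_sigma']
  refine Finset.sum_bij' (fun x _ => ⟨x.2, x.1.erase x.2⟩) (fun x _ => ⟨insert x.1 x.2, x.1⟩) ?_ ?_ ?_ ?_ ?_
  · rintro ⟨T, p⟩ h
    simp only [Finset.mem_sigma, Finset.mem_powersetCard] at h ⊢
    refine ⟨h.1.1 h.2, Finset.erase_subset_erase _ h.1.1, ?_⟩
    rw [Finset.card_erase_of_mem h.2]; omega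
  · rintro ⟨p, V⟩ h
    simp only [Finset.mem_sigma, Finset.mem_powersetCard] at h ⊢
    have hp : p ∉ V := fun hp => by simpa using h.2.1 hp
    refine ⟨⟨?_, ?_⟩, Finset.mem_insert_self _ _⟩
    · intro a ha
      rcases Finset.mem_insert.1 ha with rfl | ha
      · exact h.1
      · exact Finset.mem_of_mem_erase (h.2.1 ha)
    · rw [Finset.card_insert_of_notMem hp, h.2.2]
  · rintro ⟨T, p⟩ h
    simp only [Finset.mem_sigma] at h
    simp [Finset.insert_erase h.2]
  · rintro ⟨p, V⟩ h
    simp only [Finset.mem_sigma, Finset.mem_powersetCard] at h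
    have hp : p ∉ V := fun hp => by simpa using h.2.1 hp
    simp [Finset.erase_insert hp]
  · rintro ⟨T, p⟩ h; rfl

lemma es_nonneg (k : ℕ) (s : Finset ℕ) : 0 ≤ es k s :=
  Finset.sum_nonneg fun _ _ => Finset.prod_nonneg fun _ _ => by positivity

lemma es_mono (k : ℕ) {s t : Finset ℕ} (h : s ⊆ t) : es k s ≤ es k t :=
  Finset.sum_le_sum_of_subset_of_nonneg (Finset.powersetCard_mono h)
    fun _ _ _ => Finset.prod_nonneg fun _ _ => by positivity

lemma es_succ (k : ℕ) (s : Finset ℕ) :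
    (k + 1) * es (k+1) s = ∑ p ∈ s, (1 / (p:ℝ)) * es k (s.erase p) := by
  have h := sum_powersetCard_mem s k (fun p V => (1 / (p:ℝ)) * ∏ q ∈ V, 1 / (q:ℝ))
  simp only [← Finset.mul_sum] at h
  unfold es
  rw [← h, Finset.mul_sum]
  apply Finset.sum_congr rfl
  intro T hT
  have : ∀ p ∈ T, (1/(p:ℝ)) * ∏ q ∈ T.erase p, 1 / (q:ℝ) = ∏ q ∈ T, 1 / (q:ℝ) :=
    fun p hp => Finset.mul_prod_erase T (fun q : ℕ => 1/(q:ℝ)) hp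
  rw [Finset.sum_congr rfl this, Finset.sum_const, (Finset.mem_powersetCard.1 hT).2]
  simp

lemma es_erase (k : ℕ) (s : Finset ℕ) (p : ℕ) (hp : p ∈ s) :
    es (k+1) s = es (k+1) (s.erase p) + (1/(p:ℝ)) * es k (s.erase p) := by
  unfold es
  conv_lhs => rw [← Finset.insert_erase hp]
  rw [Finset.powersetCard_succ_insert (Finset.notMem_erase p s), Finset.sum_union, Finset.sum_image]
  · congr 1
    rw [Finset.mul_sum]
    apply Finset.sum_congr rfl
    intro T hT
    rw [Finset.prod_insert]
    intro h
    simpa using (Finset.mem_powersetCard.1 hT).1 h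
  · intro T hT U hU hTU
    have hT' : p ∉ T := fun h => by simpa using (Finset.mem_powersetCard.1 hT).1 h
    have hU' : p ∉ U := fun h => by simpa using (Finset.mem_powersetCard.1 hU).1 h
    rw [← Finset.erase_insert hT', ← Finset.erase_insert hU', hTU]
  · rw [Finset.disjoint_left]
    intro T hT hT2
    obtain ⟨U, _, rfl⟩ := Finset.mem_image.1 hT2
    simpa using (Finset.mem_powersetCard.1 hT).1 (Finset.mem_insert_self p U)

lemma es_le (k : ℕ) (s : Finset ℕ) : es k s ≤ (∑ p ∈ s, 1/(p:ℝ))^k / k.factorial := by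
  induction k with
  | zero => simp [es]
  | succ k ih =>
    set S := ∑ p ∈ s, 1/(p:ℝ) with hS
    have h := es_succ k s
    have hS0 : 0 ≤ S := Finset.sum_nonneg fun _ _ => by positivity
    have h2 : ∑ p ∈ s, (1 / (p:ℝ)) * es k (s.erase p) ≤ S * es k s := by
      rw [hS, Finset.sum_mul]
      apply Finset.sum_le_sum
      intro p _
      gcongr
      exact es_mono k (Finset.erase_subset _ _)
    rw [← h] at h2
    rw [Nat.factorial_succ]
    push_cast
    have hk : (0:ℝ) < k + 1 := by positivity
    have h3 : es (k+1) s ≤ (S * es k s) / (k+1) := by rw [le_div_iff₀ hk]; linarith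
    refine h3.trans ?_
    calc S * es k s / (k+1) ≤ S * (S^k / k.factorial) / (k+1) := by gcongr
      _ = _ := by field_simp; ring

lemma es_succ_ge (k : ℕ) (s : Finset ℕ) :
    (∑ p ∈ s, 1/(p:ℝ)) * es (k+1) s - (∑ p ∈ s, 1/(p:ℝ)^2) * es k s ≤ (k + 2) * es (k+2) s := by
  have h := es_succ (k+1) s
  push_cast at h
  have h2 : ((k:ℝ) + 2) * es (k+2) s = ∑ p ∈ s, (1 / (p:ℝ)) * es (k+1) (s.erase p) := by
    rw [← h]; ring_nf
  rw [h2, Finset.sum_mul, Finset.sum_mul, ← Finset.sum_sub_distrib]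
  apply Finset.sum_le_sum
  intro p hp
  have h3 := es_erase k s p hp
  have h4 : es (k+1) (s.erase p) = es (k+1) s - (1/(p:ℝ)) * es k (s.erase p) := by linarith
  rw [h4]
  have h5 := es_mono k (Finset.erase_subset p s)
  have h6 : (1/(p:ℝ)^2) * es k (s.erase p) ≤ (1/(p:ℝ)^2) * es k s := by gcongr
  have h7 : (1/(p:ℝ)) * (es (k+1) s - (1/(p:ℝ)) * es k (s.erase p)) =
    1/(p:ℝ) * es (k+1) s - (1/(p:ℝ)^2) * es k (s.erase p) := by ring
  rw [h7]; linarith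

lemma es_ge (k : ℕ) (s : Finset ℕ) :
    (∑ p ∈ s, 1/(p:ℝ))^(k+2) / (k+2).factorial -
      (∑ p ∈ s, 1/(p:ℝ)^2) / 2 * ((∑ p ∈ s, 1/(p:ℝ))^k / k.factorial) ≤ es (k+2) s := by
  set S := ∑ p ∈ s, 1/(p:ℝ) with hS
  set Q := ∑ p ∈ s, 1/(p:ℝ)^2 with hQ
  have hS0 : 0 ≤ S := Finset.sum_nonneg fun _ _ => by positivity
  have hQ0 : 0 ≤ Q := Finset.sum_nonneg fun _ _ => by positivity
  have e1 : es 1 s = S := by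
    have := es_succ 0 s
    simp [es] at this
    simp [es, this, hS]
  induction k with
  | zero =>
    have h := es_succ_ge 0 s
    rw [← hS, ← hQ, show 0+1 = 1 from rfl, e1] at h
    simp [es] at h ⊢
    unfold es at *
    norm_num [Nat.factorial] at h ⊢
    linarith
  | succ k ih =>
    have h := es_succ_ge (k+1) s
    rw [← hS, ← hQ] at h
    have h1 := es_le (k+1) s
    rw [← hS] at h1
    have h2 := mul_le_mul_of_nonneg_left ih hS0
    have h3 := mul_le_mul_of_nonneg_left h1 hQ0
    have hk : (0:ℝ) < k + 3 := by positivity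
    have hf : (0:ℝ) < k.factorial := by exact_mod_cast Nat.factorial_pos k
    have h4 : S * (S^(k+2) / (k+2).factorial - Q/2 * (S^k/k.factorial)) - Q * (S^(k+1) / (k+1).factorial)
      = (k+3) * (S^(k+3)/(k+3).factorial - Q/2 * (S^(k+1)/(k+1).factorial)) := by
      simp only [Nat.factorial_succ]
      push_cast
      field_simp
      ring
    push_cast at h
    have h5 : ((k:ℝ)+3) * (S^(k+3)/(k+3).factorial - Q/2 * (S^(k+1)/(k+1).factorial)) ≤ (k+3) * es (k+3) s := by
      rw [← h4]
      have : (k:ℝ) + 1 + 2 = k + 3 := by ring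
      rw [this] at h
      show _ ≤ (k+3) * es (k+1+2) s
      linarith
    exact le_of_mul_le_mul_left h5 hk
end AvoidSiegel

namespace AvoidSiegel
open Finset

lemma sq_recip_le (x : ℝ) : (∑ p ∈ PO x, 1 / (p:ℝ)^2) ≤ (1/4:ℝ) := by
  have key : ∀ M : ℕ, 4 ≤ M → (∑ n ∈ Ioc 4 M, 1 / (n:ℝ)^2) ≤ (1/4:ℝ) - 1/(M:ℝ) := by
    intro M hM
    induction M, hM using Nat.le_induction with
    | base => simp
    | succ M hM ih =>
      rw [Finset.sum_Ioc_succ_top (by omega)]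
      have hM' : (0:ℝ) < M := by exact_mod_cast (by omega : 0 < M)
      have : 1 / ((M+1:ℕ):ℝ)^2 ≤ 1/(M:ℝ) - 1/((M+1:ℕ):ℝ) := by
        push_cast
        rw [div_sub_div _ _ (by positivity) (by positivity), div_le_div_iff₀ (by positivity) (by positivity)]
        nlinarith
      linarith
  have hsub : PO x ⊆ Ioc 4 (⌊x⌋₊ + 4) := by
    intro p hp
    unfold PO at hp
    rw [Finset.mem_filter, Finset.mem_Ioc] at hp
    rw [Finset.mem_Ioc]
    have := hp.2.1.two_le
    have h2 := hp.2.2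
    omega
  refine (Finset.sum_le_sum_of_subset_of_nonneg hsub (fun _ _ _ => by positivity)).trans ?_
  refine (key _ (by omega)).trans ?_
  have : (0:ℝ) ≤ 1 / ((⌊x⌋₊ + 4 : ℕ):ℝ) := by positivity
  linarith

lemma prod_recip (T : Finset ℕ) : ∏ p ∈ T, 1 / (p:ℝ) = 1 / ((∏ p ∈ T, p : ℕ) : ℝ) := by
  push_cast; simp [Finset.prod_inv_distrib]

lemma log_prod (T : Finset ℕ) (h : ∀ p ∈ T, p ≠ 0) :
    Real.log ((∏ p ∈ T, p : ℕ) : ℝ) = ∑ p ∈ T, Real.log p := by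
  push_cast
  rw [Real.log_prod]
  intro p hp; exact_mod_cast h p hp

/-- weight of large products, first moment bound -/
lemma log_moment (k : ℕ) (s : Finset ℕ) (hs : ∀ p ∈ s, p ≠ 0) :
    ∑ T ∈ powersetCard (k+1) s, Real.log ((∏ p ∈ T, p : ℕ) : ℝ) * ∏ p ∈ T, 1 / (p:ℝ) ≤
      (∑ p ∈ s, Real.log p / p) * es k s := by
  have h := sum_powersetCard_mem s k (fun p V => (Real.log p / (p:ℝ)) * ∏ q ∈ V, 1 / (q:ℝ))
  have h1 : ∑ T ∈ powersetCard (k+1) s, Real.log ((∏ p ∈ T, p : ℕ) : ℝ) * ∏ p ∈ T, 1 / (p:ℝ) =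
      ∑ T ∈ powersetCard (k+1) s, ∑ p ∈ T, (Real.log p / (p:ℝ)) * ∏ q ∈ T.erase p, 1 / (q:ℝ) := by
    apply Finset.sum_congr rfl
    intro T hT
    rw [log_prod T (fun p hp => hs p ((Finset.mem_powersetCard.1 hT).1 hp)), Finset.sum_mul]
    apply Finset.sum_congr rfl
    intro p hp
    rw [← Finset.mul_prod_erase T (fun q : ℕ => 1/(q:ℝ)) hp]
    ring
  rw [h1, h, Finset.sum_mul]
  apply Finset.sum_le_sum
  intro p _
  rw [← Finset.mul_sum]
  have : 0 ≤ Real.log p := Real.log_natCast_nonneg p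
  gcongr
  exact es_mono k (Finset.erase_subset p s)

lemma good_mass (k : ℕ) (s : Finset ℕ) (hs : ∀ p ∈ s, p ≠ 0) (Z : ℝ) (hZ : 1 < Z) :
    es (k+1) s - (∑ p ∈ s, Real.log p / p) * es k s / Real.log Z ≤
    ∑ T ∈ (powersetCard (k+1) s).filter (fun T => ((∏ p ∈ T, p : ℕ) : ℝ) ≤ Z), ∏ p ∈ T, 1 / (p:ℝ) := by
  have hl := Real.log_pos hZ
  have h := log_moment k s hs
  have h2 := Finset.sum_filter_add_sum_filter_not (powersetCard (k+1) s)
    (fun T => ((∏ p ∈ T, p : ℕ) : ℝ) ≤ Z) (fun T => ∏ p ∈ T, 1 / (p:ℝ))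
  have h3 : (∑ T ∈ (powersetCard (k+1) s).filter (fun T => ¬ ((∏ p ∈ T, p : ℕ) : ℝ) ≤ Z), ∏ p ∈ T, 1 / (p:ℝ))
      * Real.log Z ≤ (∑ p ∈ s, Real.log p / p) * es k s := by
    refine le_trans ?_ h
    rw [Finset.sum_mul]
    have hnn : ∀ T : Finset ℕ, 0 ≤ ∏ p ∈ T, 1 / (p:ℝ) := fun T => Finset.prod_nonneg fun _ _ => by positivity
    refine le_trans (Finset.sum_le_sum (g := fun T => Real.log ((∏ p ∈ T, p : ℕ) : ℝ) * ∏ p ∈ T, 1 / (p:ℝ)) ?_) ?_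
    · intro T hT
      rw [Finset.mem_filter, not_le] at hT
      rw [mul_comm]
      have := Real.log_le_log (by linarith) hT.2.le
      exact mul_le_mul_of_nonneg_right this (hnn T)
    · apply Finset.sum_le_sum_of_subset_of_nonneg (Finset.filter_subset _ _)
      intro T _ _
      exact mul_nonneg (Real.log_natCast_nonneg _) (hnn T)
  have h4 : ∑ T ∈ (powersetCard (k+1) s).filter (fun T => ¬ ((∏ p ∈ T, p : ℕ) : ℝ) ≤ Z), ∏ p ∈ T, 1 / (p:ℝ)
     ≤ (∑ p ∈ s, Real.log p / p) * es k s / Real.log Z := by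
    rw [le_div_iff₀ hl]; exact h3
  unfold es at *
  linarith

lemma PellDr_finite (r : ℕ) (N : ℝ) : (PellDr r N).Finite := by
  apply Set.Finite.subset (Set.finite_Iic ⌊N⌋₊)
  intro x hx
  exact Nat.le_floor hx.2.1.le

lemma primeFactors_prod' (T : Finset ℕ) (hT : ∀ p ∈ T, p.Prime) : (∏ p ∈ T, p).primeFactors = T :=
  Nat.primeFactors_prod hT

lemma squarefree_prod' (T : Finset ℕ) (hT : ∀ p ∈ T, p.Prime) : Squarefree (∏ p ∈ T, p) := by
  refine Finset.squarefree_prod_of_pairwise_isCoprime ?_ ?_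
  · intro a ha b hb hab
    exact Nat.coprime_iff_isRelPrime.1 ((Nat.coprime_primes (hT a ha) (hT b hb)).2 hab)
  · intro p hp; exact (hT p hp).squarefree

lemma mem_PellDr_prod (T : Finset ℕ) (hT : ∀ p ∈ T, p.Prime ∧ (p % 4 = 1 ∨ p % 4 = 2)) (N : ℝ)
    (hN : ((∏ p ∈ T, p : ℕ) : ℝ) < N) : (∏ p ∈ T, p) ∈ PellDr T.card N := by
  have hp := primeFactors_prod' T (fun p hp => (hT p hp).1)
  refine ⟨⟨squarefree_prod' T (fun p hp => (hT p hp).1), Finset.prod_pos fun p hp => (hT p hp).1.pos, ?_⟩, hN, by rw [hp]⟩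
  intro p pp hd
  have : p ∈ (∏ p ∈ T, p).primeFactors := Nat.mem_primeFactors.2
    ⟨pp, hd, (Finset.prod_pos fun p hp => (hT p hp).1.pos).ne'⟩
  rw [hp] at this
  exact (hT p this).2

lemma count_lower (k : ℕ) (z N : ℝ) (hz : 1 ≤ z) (hN : 0 < N) :
    ((∑ T ∈ (powersetCard k (PO z)).filter (fun T => ((∏ p ∈ T, p : ℕ) : ℝ) ≤ √N),
      (PO (N / (2 * ((∏ p ∈ T, p : ℕ) : ℝ))) \ PO z).card : ℕ) : ℝ) ≤ ((PellDr (k+1) N).ncard : ℝ) := by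
  rw [← Finset.card_sigma]
  rw [Nat.cast_le]
  rw [← Set.ncard_coe_finset]
  have hmem : ∀ x ∈ ((powersetCard k (PO z)).filter (fun T => ((∏ p ∈ T, p : ℕ) : ℝ) ≤ √N)).sigma
      (fun T => PO (N / (2 * ((∏ p ∈ T, p : ℕ) : ℝ))) \ PO z),
      (∀ p ∈ x.1, p.Prime ∧ p % 4 = 1 ∧ (p:ℝ) ≤ z) ∧ x.1.card = k ∧ x.2.Prime ∧ x.2 % 4 = 1 ∧ z < x.2 ∧
        (x.2:ℝ) * ((∏ p ∈ x.1, p : ℕ) : ℝ) < N ∧ x.2 ∉ x.1 := by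
    rintro ⟨T, p⟩ h
    rw [Finset.mem_sigma, Finset.mem_filter, Finset.mem_powersetCard, Finset.mem_sdiff] at h
    obtain ⟨⟨⟨hT, hTc⟩, hTN⟩, hp, hpz⟩ := h
    simp only at *
    have hT' : ∀ p ∈ T, p.Prime ∧ p % 4 = 1 ∧ (p:ℝ) ≤ z := fun p hp => (mem_PO (by linarith)).1 (hT hp)
    have hpos : (0:ℝ) < ((∏ p ∈ T, p : ℕ) : ℝ) := by
      exact_mod_cast Finset.prod_pos fun p hp => (hT' p hp).1.pos
    rw [mem_PO (by positivity)] at hp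
    rw [mem_PO (by linarith)] at hpz
    have hz2 : z < p := by
      by_contra hc
      exact hpz ⟨hp.1, hp.2.1, not_lt.1 hc⟩
    refine ⟨hT', hTc, hp.1, hp.2.1, hz2, ?_, fun h => ?_⟩
    · have := hp.2.2
      rw [le_div_iff₀ (by positivity)] at this
      nlinarith [mul_pos (by linarith : (0:ℝ) < p) hpos]
    · have := (hT' p h).2.2
      linarith
  refine Set.ncard_le_ncard_of_injOn (fun x => x.2 * ∏ p ∈ x.1, p) ?_ ?_ (PellDr_finite _ _)
  · intro x hx
    obtain ⟨h1, h2, h3, h4, h5, h6, h7⟩ := hmem x hx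
    have := mem_PellDr_prod (insert x.2 x.1) ?_ N ?_
    · rw [Finset.prod_insert h7, Finset.card_insert_of_notMem h7, h2] at this
      exact this
    · intro p hp
      rcases Finset.mem_insert.1 hp with rfl | hp
      · exact ⟨h3, Or.inl h4⟩
      · exact ⟨(h1 p hp).1, Or.inl (h1 p hp).2.1⟩
    · rw [Finset.prod_insert h7]; push_cast at h6 ⊢; exact h6
  · intro x hx y hy hxy
    obtain ⟨h1, h2, h3, h4, h5, h6, h7⟩ := hmem x hx
    obtain ⟨g1, g2, g3, g4, g5, g6, g7⟩ := hmem y hy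
    have e : insert x.2 x.1 = insert y.2 y.1 := by
      rw [← primeFactors_prod' (insert x.2 x.1), ← primeFactors_prod' (insert y.2 y.1),
        Finset.prod_insert h7, Finset.prod_insert g7]
      · exact congrArg _ hxy
      · intro p hp
        rcases Finset.mem_insert.1 hp with rfl | hp
        · exact g3
        · exact (g1 p hp).1
      · intro p hp
        rcases Finset.mem_insert.1 hp with rfl | hp
        · exact h3
        · exact (h1 p hp).1
    have e2 : x.2 = y.2 := by
      have : x.2 ∈ insert y.2 y.1 := by rw [← e]; exact Finset.mem_insert_self _ _
      rcases Finset.mem_insert.1 this with h | h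
      · exact h
      · have := (g1 _ h).2.2
        linarith
    have e3 : x.1 = y.1 := by
      rw [← Finset.erase_insert h7, ← Finset.erase_insert g7, e, e2]
    rcases x with ⟨a, b⟩
    rcases y with ⟨c, d⟩
    simp only at e2 e3
    rw [e2, e3]

/-- main general lower bound -/
lemma lower_general : ∃ c K : ℝ, 0 < c ∧ 1 ≤ K ∧ ∀ (k : ℕ) (z N : ℝ), 2 ≤ z → K ≤ √N → K * z ≤ √N →
    Real.log z + 6 ≤ Real.log N / 30 →
    (k:ℝ) + 2 ≤ 1.1 * ∑ p ∈ PO z, 1/(p:ℝ) →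
    c * (N / Real.log N) * ((∑ p ∈ PO z, 1/(p:ℝ))^(k+2) / (k+2).factorial) ≤ ((PellDr (k+3) N).ncard : ℝ) := by
  obtain ⟨c1, K1, hc1, hK1, hθ⟩ := theta_lower
  refine ⟨c1/8, max (2*K1) (8/c1), by positivity, le_max_of_le_left (by linarith), fun k z N hz hKN hKz hlz hk => ?_⟩
  set S := ∑ p ∈ PO z, 1/(p:ℝ) with hS
  have hsN : 2 ≤ √N := by have := (le_max_left (2*K1) (8/c1)); linarith
  have hN0 : 0 < N := Real.sqrt_pos.1 (by linarith)
  have hsq := Real.mul_self_sqrt hN0.le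
  have hN4 : 4 ≤ N := by nlinarith
  have hlN : 0 < Real.log N := Real.log_pos (by linarith)
  have hS0 : 0 < S := by have : (0:ℝ) ≤ k := by positivity
                         linarith
  have hprime : ∀ p ∈ PO z, p ≠ 0 := fun p hp => ((mem_PO (by linarith)).1 hp).1.ne_zero
  set E := S^(k+2) / (k+2).factorial with hE
  have hE0 : 0 < E := by positivity
  -- mass
  have hmass : E / 2 ≤ ∑ T ∈ (powersetCard (k+2) (PO z)).filter (fun T => ((∏ p ∈ T, p : ℕ) : ℝ) ≤ √N), ∏ p ∈ T, 1 / (p:ℝ) := by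
    refine le_trans ?_ (good_mass (k+1) (PO z) hprime (√N) (by linarith))
    have h1 := es_ge k (PO z)
    rw [← hS] at h1
    have hQ := sq_recip_le z
    have hf : (0:ℝ) < k.factorial := by exact_mod_cast Nat.factorial_pos k
    have h2 : S^k / k.factorial ≤ 1.21 * E := by
      have : S^k / k.factorial = ((k+2) * (k+1) / S^2) * E := by
        rw [hE]
        simp only [Nat.factorial_succ]
        push_cast
        field_simp
        try ring
      rw [this]
      have : ((k:ℝ)+2) * (k+1) / S^2 ≤ 1.21 := by
        rw [div_le_iff₀ (by positivity)]
        nlinarith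
      gcongr
    have h3 : es (k+1) (PO z) ≤ 1.1 * E := by
      refine (es_le (k+1) (PO z)).trans ?_
      rw [← hS]
      have : S^(k+1) / (k+1).factorial = ((k+2) / S) * E := by
        rw [hE]
        simp only [Nat.factorial_succ]
        push_cast
        field_simp
        try ring
      rw [this]
      have : ((k:ℝ)+2) / S ≤ 1.1 := by
        rw [div_le_iff₀ (by positivity)]
        linarith
      gcongr
    have h4 : (∑ p ∈ PO z, Real.log p / p) ≤ Real.log N / 30 := by
      refine le_trans ?_ hlz
      refine le_trans ?_ (mertensPP z (by linarith))
      apply Finset.sum_le_sum_of_subset_of_nonneg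
      · intro p hp
        rw [mem_PO (by linarith)] at hp
        rw [mem_PP (by linarith)]; exact ⟨hp.1, hp.2.2⟩
      · intro p _ _
        have hl : 0 ≤ Real.log p := Real.log_natCast_nonneg p
        positivity
    have h5 : (∑ p ∈ PO z, Real.log p / p) * es (k+1) (PO z) / Real.log √N ≤ 0.1 * E := by
      rw [Real.log_sqrt hN0.le, div_le_iff₀ (by positivity)]
      have := mul_le_mul h4 h3 (es_nonneg _ _) (by positivity)
      nlinarith
    have h6 : (∑ p ∈ PO z, 1/(p:ℝ)^2) / 2 * (S^k / k.factorial) ≤ (1/8) * (1.21 * E) := by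
      apply mul_le_mul _ h2 (by positivity) (by norm_num)
      linarith
    linarith
  have hcount := count_lower (k+2) z N (by linarith) hN0
  refine le_trans ?_ hcount
  rw [Nat.cast_sum]
  have hper : ∀ T ∈ (powersetCard (k+2) (PO z)).filter (fun T => ((∏ p ∈ T, p : ℕ) : ℝ) ≤ √N),
      (c1/4) * (N / Real.log N) * ∏ p ∈ T, 1/(p:ℝ) ≤ ((PO (N / (2 * ((∏ p ∈ T, p : ℕ) : ℝ))) \ PO z).card : ℝ) := by
    intro T hT
    rw [Finset.mem_filter, Finset.mem_powersetCard] at hT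
    obtain ⟨⟨hT, hTc⟩, hTN⟩ := hT
    rw [prod_recip]
    set m : ℝ := ((∏ p ∈ T, p : ℕ) : ℝ) with hm
    have hm1 : 1 ≤ m := by
      rw [hm]; exact_mod_cast Finset.prod_pos fun p hp => Nat.pos_of_ne_zero (hprime p (hT hp))
    have hNm : √N ≤ N / m := by rw [le_div_iff₀ (by linarith)]; nlinarith
    have hK1' : K1 ≤ N / (2*m) := by
      have : 2*K1 ≤ √N := (le_max_left _ _).trans hKN
      have e : N / (2*m) = (N/m)/2 := by field_simp
      rw [e]; linarith
    have h1 := hθ _ hK1'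
    have h2 : ∑ p ∈ PO z, Real.log p ≤ 2 * z := by
      refine le_trans ?_ (theta_upper z (by linarith))
      apply Finset.sum_le_sum_of_subset_of_nonneg
      · intro p hp
        rw [mem_PO (by linarith)] at hp
        rw [mem_PP (by linarith)]; exact ⟨hp.1, hp.2.2⟩
      · intro p _ _
        exact Real.log_natCast_nonneg p
    have h3 : ∑ p ∈ PO (N/(2*m)), Real.log p ≤ ∑ p ∈ PO (N/(2*m)) \ PO z, Real.log p + ∑ p ∈ PO z, Real.log p := by
      rw [← Finset.sum_union Finset.sdiff_disjoint]
      apply Finset.sum_le_sum_of_subset_of_nonneg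
      · intro p hp
        rw [Finset.mem_union, Finset.mem_sdiff]
        tauto
      · intro p _ _
        exact Real.log_natCast_nonneg p
    have h4 : ∑ p ∈ PO (N/(2*m)) \ PO z, Real.log p ≤ ((PO (N/(2*m)) \ PO z).card : ℝ) * Real.log N := by
      rw [← nsmul_eq_mul]
      apply Finset.sum_le_card_nsmul
      intro p hp
      rw [Finset.mem_sdiff, mem_PO (by positivity)] at hp
      apply Real.log_le_log (by exact_mod_cast hp.1.1.pos)
      refine hp.1.2.2.trans ?_
      apply div_le_self hN0.le; linarith
    have h5 : 2 * z ≤ c1/4 * (N/m) := by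
      have : 8/c1 * z ≤ √N := le_trans (by gcongr; exact le_max_right _ _) hKz
      have h6 : 8 / c1 * z ≤ N/m := this.trans hNm
      have : 8 / c1 * z = (2 * z) * (4/c1) := by ring
      rw [this] at h6
      have h7 := mul_le_mul_of_nonneg_left h6 (by positivity : 0 ≤ c1/4)
      have : c1/4 * (2 * z * (4/c1)) = 2 * z := by field_simp
      linarith
    have h8 : c1 * (N/(2*m)) = c1/2 * (N/m) := by field_simp
    have h9 : c1/4 * (N/m) ≤ ((PO (N/(2*m)) \ PO z).card : ℝ) * Real.log N := by
      have : c1/2 * (N/m) = c1/4 * (N/m) + c1/4 * (N/m) := by ring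
      linarith
    calc c1/4 * (N/Real.log N) * (1/m) = (c1/4 * (N/m)) / Real.log N := by field_simp
      _ ≤ _ := by rw [div_le_iff₀ hlN]; exact h9
  refine le_trans ?_ (Finset.sum_le_sum hper)
  rw [← Finset.mul_sum]
  have : 0 ≤ c1/4 * (N/Real.log N) := by positivity
  calc c1/8 * (N/Real.log N) * E = c1/4 * (N/Real.log N) * (E/2) := by ring
    _ ≤ _ := by gcongr
end AvoidSiegel

namespace AvoidSiegel
open Finset

lemma card_bound (k : ℕ) (s : Finset ℕ) (hs : ∀ p ∈ s, p.Prime) (G : Finset (Finset ℕ))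
    (hG : G ⊆ powersetCard (k+1) s) (Z Y : ℝ) (hZ : 1 < Z) (hY : 0 ≤ Y)
    (h : ∀ U ∈ G, Z ≤ ((∏ p ∈ U, p : ℕ) : ℝ) ∧ ((∏ p ∈ U, p : ℕ) : ℝ) ≤ Y) :
    (G.card : ℝ) * Real.log Z ≤ 2 * Y * es k s := by
  classical
  set F : ℕ → Finset ℕ → ℝ := fun p V => if (p:ℝ) * ((∏ q ∈ V, q : ℕ) : ℝ) ≤ Y then Real.log p else 0 with hF
  have hF0 : ∀ p V, 0 ≤ F p V := by
    intro p V; simp only [hF]; split_ifs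
    · exact Real.log_natCast_nonneg p
    · exact le_rfl
  have h1 : (G.card : ℝ) * Real.log Z ≤ ∑ U ∈ G, ∑ p ∈ U, F p (U.erase p) := by
    rw [← nsmul_eq_mul]
    apply Finset.card_nsmul_le_sum
    intro U hU
    have hUs := (Finset.mem_powersetCard.1 (hG hU)).1
    have : ∑ p ∈ U, F p (U.erase p) = ∑ p ∈ U, Real.log p := by
      apply Finset.sum_congr rfl
      intro p hp
      simp only [hF]
      rw [if_pos]
      rw [← Nat.cast_mul, Finset.mul_prod_erase U (fun q => q) hp]
      exact (h U hU).2
    rw [this, ← log_prod U (fun p hp => (hs p (hUs hp)).ne_zero)]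
    exact Real.log_le_log (by linarith) (h U hU).1
  have h2 : ∑ U ∈ G, ∑ p ∈ U, F p (U.erase p) ≤ ∑ U ∈ powersetCard (k+1) s, ∑ p ∈ U, F p (U.erase p) :=
    Finset.sum_le_sum_of_subset_of_nonneg hG (fun U _ _ => Finset.sum_nonneg fun p _ => hF0 _ _)
  rw [sum_powersetCard_mem] at h2
  have h3 : ∑ p ∈ s, ∑ V ∈ powersetCard k (s.erase p), F p V ≤ ∑ p ∈ s, ∑ V ∈ powersetCard k s, F p V := by
    apply Finset.sum_le_sum
    intro p _
    apply Finset.sum_le_sum_of_subset_of_nonneg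
    · exact Finset.powersetCard_mono (Finset.erase_subset _ _)
    · intro V _ _; exact hF0 _ _
  rw [Finset.sum_comm] at h3
  have h4 : ∑ V ∈ powersetCard k s, ∑ p ∈ s, F p V ≤ 2 * Y * es k s := by
    unfold es
    rw [Finset.mul_sum]
    apply Finset.sum_le_sum
    intro V hV
    have hVs := (Finset.mem_powersetCard.1 hV).1
    rw [prod_recip]
    set m : ℝ := ((∏ p ∈ V, p : ℕ) : ℝ) with hm
    have hm1 : 0 < m := by
      rw [hm]; exact_mod_cast Finset.prod_pos fun p hp => (hs p (hVs hp)).pos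
    have h5 := theta_upper (Y/m) (by positivity)
    have h6 : ∑ p ∈ s, F p V ≤ ∑ p ∈ PP (Y/m), Real.log p := by
      simp only [hF]
      rw [← Finset.sum_filter]
      apply Finset.sum_le_sum_of_subset_of_nonneg
      · intro p hp
        rw [Finset.mem_filter] at hp
        rw [mem_PP (by positivity)]
        exact ⟨hs p hp.1, by rw [le_div_iff₀ hm1]; exact hp.2⟩
      · intro p _ _
        exact Real.log_natCast_nonneg p
    calc _ ≤ _ := h6
      _ ≤ _ := h5
      _ = _ := by ring
  linarith

lemma factorial_le (n : ℕ) (hn : 1 ≤ n) : (n.factorial : ℝ) ≤ (n:ℝ)^(n+1) * Real.exp (1 - n) := by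
  induction n, hn using Nat.le_induction with
  | base => simp
  | succ n hn ih =>
    have hn0 : (0:ℝ) < n := by exact_mod_cast hn
    have h1 : (n:ℝ)/(n+1) ≤ Real.exp (-(1/((n:ℝ)+1))) := by
      have := Real.add_one_le_exp (-(1/((n:ℝ)+1)))
      refine le_trans (le_of_eq ?_) this
      field_simp; ring
    have h2 : ((n:ℝ)/(n+1))^(n+1) ≤ Real.exp (-1) := by
      refine (pow_le_pow_left₀ (by positivity) h1 _).trans ?_
      rw [← Real.exp_nat_mul]
      apply le_of_eq; congr 1; push_cast; field_simp
    rw [div_pow, div_le_iff₀ (by positivity)] at h2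
    rw [Nat.factorial_succ]
    push_cast
    have h3 : Real.exp (1 - ((n:ℝ)+1)) = Real.exp (1 - n) * Real.exp (-1) := by
      rw [← Real.exp_add]; congr 1; ring
    rw [h3]
    calc ((n:ℝ)+1) * n.factorial ≤ (n+1) * ((n:ℝ)^(n+1) * Real.exp (1 - n)) := by gcongr
      _ ≤ (n+1) * ((Real.exp (-1) * ((n:ℝ)+1)^(n+1)) * Real.exp (1 - n)) := by gcongr
      _ = _ := by ring

noncomputable def zz (N : ℝ) : ℝ := N ^ ((1:ℝ)/40)
noncomputable def SS (N : ℝ) : ℝ := ∑ p ∈ PO (zz N), 1/(p:ℝ)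
noncomputable def EE (r : ℕ) (N : ℝ) : ℝ := SS N ^ (r-1) / (r-1).factorial
noncomputable def LL (N : ℝ) : ℝ := Real.log (Real.log N)
noncomputable def P2s (N : ℝ) : Finset ℕ := (PP N).filter (fun p => p % 4 = 1 ∨ p % 4 = 2)

lemma basicN (N : ℝ) (hN : 1 < N) (h : 1000000 ≤ LL N) :
    1000000 ≤ Real.log N ∧ LL N ≤ Real.log N ∧ Real.log N = Real.exp (LL N) ∧ N = Real.exp (Real.log N) := by
  have h0 : 0 < Real.log N := Real.log_pos hN
  have h1 : LL N ≤ Real.log N := (Real.log_le_sub_one_of_pos h0).trans (by linarith)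
  exact ⟨h.trans h1, h1, (Real.exp_log h0).symm, (Real.exp_log (by linarith)).symm⟩

lemma log_zz (N : ℝ) (hN : 1 < N) : Real.log (zz N) = Real.log N / 40 := by
  unfold zz; rw [Real.log_rpow (by linarith)]; ring

lemma one_lt_zz (N : ℝ) (hN : 1 < N) : 1 < zz N := Real.one_lt_rpow hN (by norm_num)

lemma P2s_recip (N : ℝ) (hN : 1 < N) (hl : 240 ≤ Real.log N) :
    ∑ p ∈ P2s N, 1/(p:ℝ) ≤ SS N + 42 := by
  classical
  have hz := one_lt_zz N hN
  have hzN : zz N ≤ N := by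
    unfold zz
    calc N ^ ((1:ℝ)/40) ≤ N ^ (1:ℝ) := Real.rpow_le_rpow_of_exponent_le hN.le (by norm_num)
      _ = N := Real.rpow_one N
  have hsub : P2s N ⊆ (PO (zz N) ∪ {2}) ∪ (PP N \ PP (zz N)) := by
    intro p hp
    unfold P2s at hp
    rw [Finset.mem_filter, mem_PP (by linarith)] at hp
    rw [Finset.mem_union, Finset.mem_union, Finset.mem_sdiff, mem_PP (by linarith), mem_PO (by linarith),
      mem_PP (by linarith), Finset.mem_singleton]
    obtain ⟨⟨h1, h2⟩, h3⟩ := hp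
    rcases h3 with h3 | h3
    · by_cases h : (p:ℝ) ≤ zz N
      · left; left; exact ⟨h1, h3, h⟩
      · right; exact ⟨⟨h1, h2⟩, fun h' => h h'.2⟩
    · left; right
      have : 2 ∣ p := by omega
      exact ((Nat.prime_dvd_prime_iff_eq Nat.prime_two h1).1 this).symm
  have h1 := Finset.sum_le_sum_of_subset_of_nonneg hsub (f := fun p : ℕ => 1/(p:ℝ)) (fun _ _ _ => by positivity)
  have hun : ∀ A B : Finset ℕ, ∑ p ∈ A ∪ B, 1/(p:ℝ) ≤ ∑ p ∈ A, 1/(p:ℝ) + ∑ p ∈ B, 1/(p:ℝ) := by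
    intro A B
    rw [← Finset.sum_union_inter]
    have : 0 ≤ ∑ p ∈ A ∩ B, 1/(p:ℝ) := Finset.sum_nonneg fun _ _ => by positivity
    linarith
  have h2 := hun (PO (zz N) ∪ {2}) (PP N \ PP (zz N))
  have h3 := hun (PO (zz N)) {2}
  have h4 := recip_gap (zz N) N hz hzN
  rw [log_zz N hN] at h4
  have h5 : (Real.log N + 6)/(Real.log N/40) ≤ 41 := by
    rw [div_le_iff₀ (by positivity)]; linarith
  rw [Finset.sum_singleton] at h3
  unfold SS
  norm_num at h3 h1 h2 h4 ⊢
  linarith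

lemma EE_lower (r : ℕ) (N : ℝ) (hN : 1 < N) (hL : 1000000 ≤ LL N) (h1 : 0.49 * LL N ≤ r) (h2 : r ≤ 0.51 * LL N)
    (h3 : 0.47 * LL N ≤ SS N) : LL N * Real.exp (LL N / 3) ≤ EE r N := by
  have hr : 2 ≤ r := by
    have : (2:ℝ) ≤ r := by linarith
    exact_mod_cast this
  obtain ⟨n, rfl⟩ : ∃ n, r = n + 1 := ⟨r-1, by omega⟩
  unfold EE
  rw [Nat.add_sub_cancel]
  push_cast at h1 h2
  set L := LL N
  have hn : 1 ≤ n := by omega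
  have hn0 : (0:ℝ) < n := by exact_mod_cast hn
  have hf := factorial_le n hn
  have hf0 : (0:ℝ) < n.factorial := by exact_mod_cast Nat.factorial_pos n
  rw [le_div_iff₀ hf0]
  have he : Real.exp (-(1/10)) ≤ 0.92 := by
    rw [Real.exp_neg, inv_le_comm₀ (Real.exp_pos _) (by norm_num)]
    have := Real.quadratic_le_exp_of_nonneg (by norm_num : (0:ℝ) ≤ 1/10)
    refine le_trans ?_ this
    norm_num
  have hS : (n:ℝ) * Real.exp (-(1/10)) ≤ SS N := by nlinarith
  have hSn : (n:ℝ)^n * Real.exp (-(n/10)) ≤ SS N ^ n := by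
    refine le_trans (le_of_eq ?_) (pow_le_pow_left₀ (by positivity) hS n)
    rw [mul_pow, ← Real.exp_nat_mul]; congr 2; ring
  refine le_trans ?_ hSn
  have h5 : L * n * Real.exp (L/3 + 1 - n) ≤ Real.exp (-(n/10)) := by
    have e : Real.exp (L/3 + 1 - n) = Real.exp (-(n/10)) * Real.exp (-(0.9 * n - L/3 - 1)) := by
      rw [← Real.exp_add]; congr 1; ring
    rw [e]
    have h6 : L * n * Real.exp (-(0.9 * n - L/3 - 1)) ≤ 1 := by
      rw [Real.exp_neg, ← div_eq_mul_inv, div_le_one (Real.exp_pos _)]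
      have h7 : (0.09:ℝ) * L ≤ 0.9 * n - L/3 - 1 := by linarith
      refine le_trans ?_ (Real.exp_le_exp.2 h7)
      have h8 := Real.add_one_le_exp (0.03 * L)
      have h9 : Real.exp (0.09 * L) = Real.exp (0.03 * L)^3 := by
        rw [← Real.exp_nat_mul]; congr 1; push_cast; ring
      rw [h9]
      have h10 : (0.03 * L)^3 ≤ Real.exp (0.03 * L)^3 := by
        apply pow_le_pow_left₀ (by positivity); linarith
      refine le_trans ?_ h10
      have h11 : L * n ≤ L * L := by gcongr; linarith
      have h12 : 1000000 * (L*L) ≤ L * (L*L) := by gcongr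
      nlinarith
    calc L * n * (Real.exp (-(n/10)) * Real.exp (-(0.9 * n - L/3 - 1)))
        = Real.exp (-(n/10)) * (L * n * Real.exp (-(0.9 * n - L/3 - 1))) := by ring
      _ ≤ Real.exp (-(n/10)) * 1 := by gcongr
      _ = _ := mul_one _
  calc L * Real.exp (L/3) * n.factorial ≤ L * Real.exp (L/3) * ((n:ℝ)^(n+1) * Real.exp (1 - n)) := by gcongr
    _ = (n:ℝ)^n * (L * n * Real.exp (L/3 + 1 - n)) := by
      rw [show L/3 + 1 - (n:ℝ) = L/3 + (1 - n) by ring, Real.exp_add]; ring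
    _ ≤ _ := by gcongr

lemma setup : ∃ L0 c : ℝ, 1000000 ≤ L0 ∧ 0 < c ∧ ∀ (N : ℝ) (r : ℕ), 1 < N → L0 ≤ LL N →
    |(r:ℝ) - (1/2) * LL N| < LL N ^ ((2:ℝ)/3) →
    0.49 * LL N ≤ r ∧ r ≤ 0.51 * LL N ∧ (r:ℝ) ≤ 1.1 * SS N ∧ 0.47 * LL N ≤ SS N ∧
    LL N * Real.exp (LL N / 3) ≤ EE r N ∧
    c * (N / Real.log N) * EE r N ≤ ((PellDr r N).ncard : ℝ) := by
  obtain ⟨c, K, hc, hK, hlow⟩ := lower_general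
  obtain ⟨c1, hc1, hrec⟩ := recip_lower
  refine ⟨max 1000000 (max (50*(c1+4)) (4 * K)), c, le_max_left _ _, hc, fun N r hN hL hr => ?_⟩
  have hL1 : 1000000 ≤ LL N := (le_max_left _ _).trans hL
  have hL2 : 50*(c1+4) ≤ LL N := (le_max_left _ _).trans ((le_max_right _ _).trans hL)
  have hL3 : 4*K ≤ LL N := (le_max_right _ _).trans ((le_max_right _ _).trans hL)
  obtain ⟨hl1, hl2, hl3, hl4⟩ := basicN N hN hL1
  have hz := one_lt_zz N hN
  have hpow : LL N ^ ((2:ℝ)/3) ≤ 0.01 * LL N := by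
    have hp : LL N = LL N ^ ((2:ℝ)/3) * LL N ^ ((1:ℝ)/3) := by
      rw [← Real.rpow_add (by linarith)]; norm_num
    have h100 : (100:ℝ) ≤ LL N ^ ((1:ℝ)/3) := by
      calc (100:ℝ) = (1000000:ℝ) ^ ((1:ℝ)/3) := by
            rw [show (1000000:ℝ) = 100 ^ (3:ℝ) by norm_num, ← Real.rpow_mul (by norm_num)]; norm_num
        _ ≤ _ := Real.rpow_le_rpow (by norm_num) hL1 (by norm_num)
    have h0 : 0 ≤ LL N ^ ((2:ℝ)/3) := Real.rpow_nonneg (by linarith) _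
    nlinarith
  rw [abs_lt] at hr
  have hr1 : 0.49 * LL N ≤ r := by linarith [hr.1]
  have hr2 : r ≤ 0.51 * LL N := by linarith [hr.2]
  have hS : 0.47 * LL N ≤ SS N := by
    have := hrec (zz N) hz
    rw [log_zz N hN, Real.log_div (by linarith) (by norm_num)] at this
    have h40 : Real.log 40 ≤ 8 := by
      rw [Real.log_le_iff_le_exp (by norm_num)]
      have := Real.add_one_le_exp 1
      have e : Real.exp 8 = Real.exp 1 ^ 8 := by rw [← Real.exp_nat_mul]; norm_num
      rw [e]
      have : (2:ℝ)^8 ≤ Real.exp 1 ^ 8 := pow_le_pow_left₀ (by norm_num) (by linarith) 8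
      linarith
    unfold SS
    unfold LL at *
    linarith
  have hrS : (r:ℝ) ≤ 1.1 * SS N := by linarith
  refine ⟨hr1, hr2, hrS, hS, EE_lower r N hN hL1 hr1 hr2 hS, ?_⟩
  have hr5 : 5 ≤ r := by
    have : (5:ℝ) ≤ r := by linarith
    exact_mod_cast this
  obtain ⟨k, rfl⟩ : ∃ k, r = k + 3 := ⟨r-3, by omega⟩
  have hsqrt : √N = Real.exp (Real.log N / 2) := by
    nth_rewrite 1 [hl4]
    rw [Real.sqrt_eq_iff_mul_self_eq (Real.exp_pos _).le (Real.exp_pos _).le, ← Real.exp_add]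
    congr 1; ring
  have hzz : zz N = Real.exp (Real.log N/40) := by
    rw [← log_zz N hN, Real.exp_log (by linarith)]
  have hKe : K ≤ Real.exp (Real.log N / 4) := by
    have := Real.add_one_le_exp (Real.log N / 4)
    linarith
  have := hlow k (zz N) N ?_ ?_ ?_ ?_ ?_
  · unfold EE
    rw [show k + 3 - 1 = k + 2 by omega]
    exact this
  · rw [hzz]; have := Real.add_one_le_exp (Real.log N/40); linarith
  · rw [hsqrt]; refine hKe.trans (Real.exp_le_exp.2 (by linarith))
  · rw [hsqrt, hzz]
    calc K * Real.exp (Real.log N/40) ≤ Real.exp (Real.log N / 4) * Real.exp (Real.log N/40) := by gcongr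
      _ = Real.exp (Real.log N / 4 + Real.log N/40) := (Real.exp_add _ _).symm
      _ ≤ _ := Real.exp_le_exp.2 (by linarith)
  · rw [log_zz N hN]; linarith
  · push_cast at hrS; unfold SS at hrS; linarith
end AvoidSiegel

namespace AvoidSiegel
open Finset

lemma mult_count (d : ℕ) (hd : 0 < d) (Y : ℝ) (A : Set ℕ) (hA : ∀ x ∈ A, 0 < x ∧ (x:ℝ) ≤ Y ∧ d ∣ x) (hY : 0 ≤ Y) :
    (A.ncard : ℝ) ≤ Y / d := by
  have h1 : A.ncard ≤ (Finset.Icc 1 ⌊Y/d⌋₊ : Set ℕ).ncard := by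
    refine Set.ncard_le_ncard_of_injOn (fun x => x / d) ?_ ?_ (Finset.finite_toSet _)
    · intro x hx
      obtain ⟨h1, h2, h3⟩ := hA x hx
      obtain ⟨y, rfl⟩ := h3
      simp only [Nat.mul_div_cancel_left y hd]
      rw [Finset.mem_coe, Finset.mem_Icc]
      refine ⟨Nat.pos_of_mul_pos_left h1 , Nat.le_floor ?_⟩
      rw [le_div_iff₀ (by exact_mod_cast hd)]
      push_cast at h2; linarith
    · intro x hx y hy h
      exact Nat.div_left_inj (hA x hx).2.2 (hA y hy).2.2 |>.1 h
  rw [Set.ncard_coe_finset, Nat.card_Icc] at h1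
  have : ((⌊Y/d⌋₊ : ℕ) : ℝ) ≤ Y / d := Nat.floor_le (by positivity)
  refine le_trans ?_ this
  exact_mod_cast h1

structure Good (C N : ℝ) (r : ℕ) : Prop where
  hC : 0 < C
  hN : 1 < N
  hL : 1000000 ≤ LL N
  hr1 : 0.49 * LL N ≤ r
  hr2 : r ≤ 0.51 * LL N
  small : N / Real.log N * (LL N * Real.exp (LL N / 3)) ≤ C * ((PellDr r N).ncard : ℝ)
  ub : ∀ d : ℕ, Squarefree d → d.primeFactors.card = 1 ∨ d.primeFactors.card = 2 →
    Real.log d ≤ Real.log N / 4 → ({x ∈ PellDr r N | d ∣ x}.ncard : ℝ) ≤ C * ((PellDr r N).ncard : ℝ) / d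

lemma cofactor (r : ℕ) (N : ℝ) (x d : ℕ) (hx : x ∈ PellDr r N) (hd : d ∣ x) :
    (x/d).primeFactors.card + d.primeFactors.card = r ∧ ∏ p ∈ (x/d).primeFactors, p = x / d ∧
    ∀ p ∈ (x/d).primeFactors, p.Prime ∧ (p % 4 = 1 ∨ p % 4 = 2) ∧ (p:ℝ) ≤ N := by
  obtain ⟨y, rfl⟩ := hd
  obtain ⟨⟨h1, h2, h3⟩, h4, h5⟩ := hx
  have hd0 : 0 < d := Nat.pos_of_mul_pos_right h2
  rw [Nat.mul_div_cancel_left y hd0]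
  obtain ⟨hc, hs1, hs2⟩ := Nat.squarefree_mul_iff.1 h1
  refine ⟨?_, Nat.prod_primeFactors_of_squarefree hs2, ?_⟩
  · rw [hc.primeFactors_mul, Finset.card_union_of_disjoint hc.disjoint_primeFactors] at h5
    omega
  · intro p hp
    have hp' := Nat.mem_primeFactors.1 hp
    have hdv : p ∣ d * y := hp'.2.1.mul_left d
    refine ⟨hp'.1, h3 p hp'.1 hdv, ?_⟩
    refine le_trans ?_ h4.le
    exact_mod_cast Nat.le_of_dvd h2 hdv

set_option maxHeartbeats 2000000 in
lemma good_exists : ∃ L0 C : ℝ, 1000000 ≤ L0 ∧ 0 < C ∧ ∀ (N : ℝ) (r : ℕ), 1 < N → L0 ≤ LL N →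
    |(r:ℝ) - (1/2) * LL N| < LL N ^ ((2:ℝ)/3) → Good C N r := by
  classical
  obtain ⟨L0, c, hL0, hc, hset⟩ := setup
  refine ⟨L0, (1 + 10 * Real.exp 47) / c, hL0, by positivity, fun N r hN hL hr => ?_⟩
  obtain ⟨hr1, hr2, hrS, hS, hE, hlow⟩ := hset N r hN hL hr
  have hL1 := hL0.trans hL
  obtain ⟨hl1, hl2, hl3, hl4⟩ := basicN N hN hL1
  set ℓ := Real.log N with hℓ
  set D : ℝ := ((PellDr r N).ncard : ℝ) with hD
  have hl0 : 0 < ℓ := by linarith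
  have hE1 : 1 ≤ EE r N := by
    refine le_trans ?_ hE
    have := Real.add_one_le_exp (LL N/3)
    nlinarith
  have hkey : N / ℓ * EE r N ≤ D / c := by
    rw [le_div_iff₀ hc]; linarith
  have hKc : 1 + 10 * Real.exp 47 ≥ 1 := by have := Real.exp_pos 47; linarith
  refine ⟨by positivity, hN, hL1, hr1, hr2, ?_, ?_⟩
  · calc N / ℓ * (LL N * Real.exp (LL N / 3)) ≤ N / ℓ * EE r N := by gcongr
      _ ≤ 1 * (D / c) := by linarith
      _ ≤ (1 + 10 * Real.exp 47) * (D/c) := by gcongr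
      _ = _ := by ring
  intro d hsq hj hdN
  have hd0 : 0 < d := Nat.pos_of_ne_zero hsq.ne_zero
  have hd0' : (0:ℝ) < d := by exact_mod_cast hd0
  have hr5 : 5 ≤ r := by
    have : (5:ℝ) ≤ r := by linarith
    exact_mod_cast this
  have hsqrt : √N = Real.exp (ℓ / 2) := by
    nth_rewrite 1 [hl4]
    rw [Real.sqrt_eq_iff_mul_self_eq (Real.exp_pos _).le (Real.exp_pos _).le, ← Real.exp_add]
    congr 1; ring
  have hdle : (d:ℝ) ≤ Real.exp (ℓ/4) := by
    rw [← Real.log_le_iff_le_exp hd0']; exact hdN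
  set A := {x ∈ PellDr r N | d ∣ x} with hA
  have hAfin : A.Finite := (PellDr_finite r N).subset (fun x hx => hx.1)
  set A1 := {x ∈ A | (x:ℝ) ≤ √N} with hA1
  set A2 := {x ∈ A | √N < (x:ℝ)} with hA2
  have hA2fin : A2.Finite := hAfin.subset (fun x hx => hx.1)
  have hsplit : (A.ncard : ℝ) ≤ A1.ncard + A2.ncard := by
    have : A = A1 ∪ A2 := by
      ext x; simp only [hA1, hA2, Set.mem_union, Set.mem_ofPred_eq]
      constructor
      · intro h; rcases le_or_gt (x:ℝ) √N with h' | h'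
        · exact Or.inl ⟨h, h'⟩
        · exact Or.inr ⟨h, h'⟩
      · rintro (h | h) <;> exact h.1
    rw [this]
    exact_mod_cast Set.ncard_union_le A1 A2
  have h1 : (A1.ncard : ℝ) ≤ √N / d := by
    apply mult_count d hd0 _ _ _ (Real.sqrt_nonneg _)
    intro x hx
    exact ⟨hx.1.1.1.2.1, hx.2, hx.1.2⟩
  have h1' : (A1.ncard : ℝ) ≤ (N / ℓ) / d := by
    refine h1.trans ?_
    gcongr
    rw [le_div_iff₀ hl0, hsqrt]
    have : ℓ ≤ Real.exp (ℓ/2) := by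
      have := Real.quadratic_le_exp_of_nonneg (by linarith : 0 ≤ ℓ/2)
      nlinarith
    calc Real.exp (ℓ/2) * ℓ ≤ Real.exp (ℓ/2) * Real.exp (ℓ/2) := by gcongr
      _ = Real.exp ℓ := by rw [← Real.exp_add]; congr 1; ring
      _ = N := hl4.symm
  obtain ⟨k, j, hrk, hj12, hjd⟩ : ∃ k j, r = k + 1 + j ∧ (j = 1 ∨ j = 2) ∧ d.primeFactors.card = j := by
    refine ⟨r - 1 - d.primeFactors.card, d.primeFactors.card, ?_, hj, rfl⟩
    rcases hj with h | h <;> rw [h] <;> omega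
  set G : Finset (Finset ℕ) := hA2fin.toFinset.image (fun x => (x/d).primeFactors) with hG
  have hGcard : (A2.ncard : ℝ) = G.card := by
    rw [hG, Finset.card_image_of_injOn, Set.ncard_eq_toFinset_card A2 hA2fin]
    intro x hx y hy hxy
    have hx' : x ∈ A2 := by simpa using hx
    have hy' : y ∈ A2 := by simpa using hy
    have e : x/d = y/d := by
      rw [← (cofactor r N x d hx'.1.1 hx'.1.2).2.1, ← (cofactor r N y d hy'.1.1 hy'.1.2).2.1]
      simp only at hxy
      rw [hxy]
    exact (Nat.div_left_inj hx'.1.2 hy'.1.2).1 e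
  have hcb := card_bound k (P2s N) (fun p hp => by
      unfold P2s at hp; rw [Finset.mem_filter, mem_PP (by linarith)] at hp; exact hp.1.1) G (by
      intro U hU
      rw [hG, Finset.mem_image] at hU
      obtain ⟨x, hx, rfl⟩ := hU
      have hx' : x ∈ A2 := by simpa using hx
      obtain ⟨c1, c2, c3⟩ := cofactor r N x d hx'.1.1 hx'.1.2
      rw [Finset.mem_powersetCard]
      refine ⟨?_, by omega⟩
      intro p hp
      unfold P2s
      rw [Finset.mem_filter, mem_PP (by linarith)]
      exact ⟨⟨(c3 p hp).1, (c3 p hp).2.2⟩, (c3 p hp).2.1⟩) (Real.exp (ℓ/4)) (N/d)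
      (Real.one_lt_exp_iff.2 (by linarith)) (by positivity) (by
      intro U hU
      rw [hG, Finset.mem_image] at hU
      obtain ⟨x, hx, rfl⟩ := hU
      have hx' : x ∈ A2 := by simpa using hx
      obtain ⟨c1, c2, c3⟩ := cofactor r N x d hx'.1.1 hx'.1.2
      rw [c2, Nat.cast_div hx'.1.2 hd0'.ne']
      constructor
      · rw [le_div_iff₀ hd0']
        have := hx'.2
        rw [hsqrt] at this
        refine le_trans ?_ this.le
        calc Real.exp (ℓ/4) * d ≤ Real.exp (ℓ/4) * Real.exp (ℓ/4) := by gcongr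
          _ = _ := by rw [← Real.exp_add]; congr 1; ring
      · gcongr
        exact hx'.1.1.2.1.le)
  rw [Real.log_exp, ← hGcard] at hcb
  have hS0 : 0 < SS N := by linarith
  have hkr : (k:ℝ) + 1 ≤ r := by rw [hrk]; push_cast; have : (0:ℝ) ≤ j := by positivity
                                 linarith
  have hes : es k (P2s N) ≤ Real.exp 47 * (1.21 * EE r N) := by
    refine (es_le k (P2s N)).trans ?_
    have hk0 : (0:ℝ) < k.factorial := by exact_mod_cast Nat.factorial_pos k
    have e1 : (∑ p ∈ P2s N, 1/(p:ℝ))^k ≤ Real.exp 47 * SS N ^ k := by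
      have := P2s_recip N hN (by linarith)
      have h0 : 0 ≤ ∑ p ∈ P2s N, 1/(p:ℝ) := Finset.sum_nonneg fun _ _ => by positivity
      have h2 : SS N + 42 ≤ SS N * Real.exp (42/SS N) := by
        have := Real.add_one_le_exp (42/SS N)
        calc SS N + 42 = SS N * (42/SS N + 1) := by field_simp; try ring
          _ ≤ _ := by gcongr
      refine (pow_le_pow_left₀ h0 (this.trans h2) k).trans ?_
      rw [mul_pow, mul_comm, ← Real.exp_nat_mul]
      gcongr
      rw [mul_div_assoc', div_le_iff₀ hS0]
      linarith
    have e2 : SS N ^ k / k.factorial ≤ 1.21 * EE r N := by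
      unfold EE
      have hrS' : (r:ℝ) / SS N ≤ 1.1 := by rw [div_le_iff₀ hS0]; linarith
      rcases hj12 with rfl | rfl
      · rw [hrk, show k + 1 + 1 - 1 = k + 1 by omega]
        have hEp : 0 ≤ SS N ^ (k+1) / (k+1).factorial := by positivity
        have : SS N ^ k / k.factorial = (((k:ℝ)+1)/SS N) * (SS N ^ (k+1) / (k+1).factorial) := by
          rw [Nat.factorial_succ]; push_cast; field_simp; try ring
        rw [this]
        apply mul_le_mul_of_nonneg_right _ hEp
        rw [div_le_iff₀ hS0]; linarith
      · rw [hrk, show k + 1 + 2 - 1 = k + 2 by omega]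
        have hEp : 0 ≤ SS N ^ (k+2) / (k+2).factorial := by positivity
        have : SS N ^ k / k.factorial = (((k:ℝ)+2)*(k+1)/SS N^2) * (SS N ^ (k+2) / (k+2).factorial) := by
          simp only [Nat.factorial_succ]; push_cast; field_simp; try ring
        rw [this]
        apply mul_le_mul_of_nonneg_right _ hEp
        rw [div_le_iff₀ (by positivity)]
        have : (k:ℝ) + 2 ≤ 1.1 * SS N := by rw [hrk] at hrS; push_cast at hrS; linarith
        have hk0' : (0:ℝ) ≤ k := by positivity
        calc ((k:ℝ)+2)*(k+1) ≤ (1.1 * SS N) * (1.1 * SS N) := by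
              apply mul_le_mul this (by linarith) (by linarith) (by linarith)
          _ = _ := by ring
    calc _ ≤ Real.exp 47 * SS N ^ k / k.factorial := by gcongr
      _ = Real.exp 47 * (SS N ^ k / k.factorial) := by ring
      _ ≤ _ := by gcongr
  have h2 : (A2.ncard : ℝ) ≤ 10 * Real.exp 47 * (N / ℓ * EE r N) / d := by
    have e3 : (A2.ncard : ℝ) * (ℓ/4) ≤ 2 * (N/d) * (Real.exp 47 * (1.21 * EE r N)) :=
      hcb.trans (by gcongr)
    have : (A2.ncard : ℝ) ≤ 2 * (N/d) * (Real.exp 47 * (1.21 * EE r N)) / (ℓ/4) := by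
      rw [le_div_iff₀ (by positivity)]; exact e3
    refine this.trans ?_
    have e4 : 2 * (N/d) * (Real.exp 47 * (1.21 * EE r N)) / (ℓ/4) = 9.68 * (Real.exp 47 * (N / ℓ * EE r N) / d) := by
      field_simp; ring
    rw [e4, show 10 * Real.exp 47 * (N / ℓ * EE r N) / d = 10 * (Real.exp 47 * (N / ℓ * EE r N) / d) by ring]
    apply mul_le_mul_of_nonneg_right (by norm_num)
    have : 0 ≤ EE r N := by linarith
    positivity
  have h3 : N / ℓ / d ≤ (N/ℓ * EE r N)/d := by
    gcongr
    exact le_mul_of_one_le_right (by positivity) hE1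
  calc (A.ncard : ℝ) ≤ (1 + 10 * Real.exp 47) * ((N/ℓ * EE r N)/d) := by
        have : (1 + 10 * Real.exp 47) * ((N/ℓ * EE r N)/d) = (N/ℓ * EE r N)/d + 10 * Real.exp 47 * (N / ℓ * EE r N) / d := by ring
        linarith
    _ ≤ (1 + 10 * Real.exp 47) * ((D / c)/d) := by gcongr
    _ = _ := by ring
end AvoidSiegel

namespace AvoidSiegel
open Finset

def Wset (N : ℝ) (r F : ℕ) : Set ℕ :=
  {x ∈ PellDr r N | ∃ (k : ℕ) (B : Set ℕ), k ≤ r ∧ IsBox N (LL N ^ (50:ℕ)) k r B ∧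
    (∃ x' ∈ B, F ∣ x') ∧ x ∈ B}

lemma box_lemma (N : ℝ) (r F : ℕ) (hL : 0 < LL N) (x : ℕ) (hx : x ∈ Wset N r F) :
    (F:ℝ) < N ∧ ∃ g : ℕ → ℕ, Set.InjOn g F.primeFactors ∧ ∀ q ∈ F.primeFactors,
      (g q).Prime ∧ g q ∣ x ∧ ((q:ℝ) < D₁ N → g q = q) ∧
      (D₁ N ≤ q → (g q : ℝ) ≤ q * (1 + 1 / LL N ^ (50:ℕ)) ∧ (q:ℝ) ≤ g q * (1 + 1 / LL N ^ (50:ℕ))) := by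
  classical
  obtain ⟨hxD, k, B, hk, hbox, ⟨x', hx'B, hFx'⟩, hxB⟩ := hx
  obtain ⟨_, X, p, s, hp, hpm, hsD, hsm, hXk, hXs, hne, hB, hBN⟩ := hbox
  have hx'N := hBN hx'B
  have hx'0 : 0 < x' := hx'N.1.2.1
  refine ⟨lt_of_le_of_lt (by exact_mod_cast Nat.le_of_dvd hx'0 hFx') hx'N.2, ?_⟩
  rw [hB] at hx'B hxB
  obtain ⟨a, ha, rfl⟩ := hx'B
  obtain ⟨b, hb, rfl⟩ := hxB
  have hprime : ∀ i, 1 ≤ i → i ≤ r → ∀ y ∈ X i, y.Prime := by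
    intro i h1 h2 y hy
    by_cases hik : i ≤ k
    · rw [hXk i h1 hik, Finset.mem_singleton] at hy
      rw [hy]; exact (hp i h1 hik).1
    · exact ((hXs i (not_le.1 hik) h2 y).1 hy).1
  have hidx : ∀ q ∈ F.primeFactors, ∃ i, (1 ≤ i ∧ i ≤ r) ∧ q = a i := by
    intro q hq
    obtain ⟨hq1, hq2, hq3⟩ := Nat.mem_primeFactors.1 hq
    obtain ⟨i, hi, hqi⟩ := (Prime.dvd_finsetProd_iff hq1.prime _).1 (hq2.trans hFx')
    rw [Finset.mem_Icc] at hi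
    exact ⟨i, hi, (Nat.prime_dvd_prime_iff_eq hq1 (hprime i hi.1 hi.2 _ (ha i hi.1 hi.2))).1 hqi⟩
  choose! idx hidx1 hidx2 using hidx
  refine ⟨fun q => b (idx q), ?_, ?_⟩
  · intro q hq q' hq' h
    simp only at h
    have hsq := hxD.1.1
    by_contra hne'
    have hij : idx q ≠ idx q' := by
      intro h'
      apply hne'
      rw [hidx2 q hq, hidx2 q' hq', h']
    have hsub : ({idx q, idx q'} : Finset ℕ) ⊆ Finset.Icc 1 r := by
      intro i hi
      rw [Finset.mem_insert, Finset.mem_singleton] at hi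
      rw [Finset.mem_Icc]
      rcases hi with rfl | rfl
      · exact hidx1 q hq
      · exact hidx1 q' hq'
    have hd := Finset.prod_dvd_prod_of_subset _ _ b hsub
    rw [Finset.prod_pair hij, ← h] at hd
    have hu := hsq _ hd
    obtain ⟨h1, h2⟩ := hidx1 q hq
    exact (hprime _ h1 h2 _ (hb _ h1 h2)).not_isUnit hu
  · intro q hq
    obtain ⟨h1, h2⟩ := hidx1 q hq
    have hqa := hidx2 q hq
    have hDpos : 0 < D₁ N := Real.exp_pos _
    refine ⟨hprime _ h1 h2 _ (hb _ h1 h2), Finset.dvd_prod_of_mem b (Finset.mem_Icc.2 ⟨h1, h2⟩), ?_, ?_⟩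
    · intro hqD
      by_cases hik : idx q ≤ k
      · have ha' := ha _ h1 h2
        have hb' := hb _ h1 h2
        rw [hXk _ h1 hik, Finset.mem_singleton] at ha' hb'
        exact hb'.trans (ha'.symm.trans hqa.symm)
      · have ha' := (hXs _ (not_le.1 hik) h2 _).1 (ha _ h1 h2)
        have := hsD _ (not_le.1 hik) h2
        rw [← hqa] at ha'
        linarith [ha'.2.2.1]
    · intro hqD
      by_cases hik : idx q ≤ k
      · have ha' := ha _ h1 h2
        rw [hXk _ h1 hik, Finset.mem_singleton] at ha'
        have := (hp _ h1 hik).2.2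
        rw [← ha', ← hqa] at this
        linarith
      · have ha' := (hXs _ (not_le.1 hik) h2 _).1 (ha _ h1 h2)
        have hb' := (hXs _ (not_le.1 hik) h2 _).1 (hb _ h1 h2)
        rw [← hqa] at ha'
        have hc : (0:ℝ) < 1 + 1 / LL N ^ 50 := by positivity
        have h5 := ha'.2.2
        have h6 := hb'.2.2
        exact ⟨h6.2.trans (mul_le_mul_of_nonneg_right h5.1.le hc.le), h5.2.trans (mul_le_mul_of_nonneg_right h6.1.le hc.le)⟩

lemma omega_le (N : ℝ) (r F : ℕ) (hL : 0 < LL N) (x : ℕ) (hx : x ∈ Wset N r F) : F.primeFactors.card ≤ r := by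
  classical
  obtain ⟨_, g, hg, h⟩ := box_lemma N r F hL x hx
  rw [← hx.1.2.2, ← Finset.card_image_of_injOn hg]
  apply Finset.card_le_card
  intro y hy
  obtain ⟨q, hq, rfl⟩ := Finset.mem_image.1 hy
  obtain ⟨h1, h2, _⟩ := h q hq
  exact Nat.mem_primeFactors.2 ⟨h1, h2, hx.1.1.2.1.ne'⟩
end AvoidSiegel

namespace AvoidSiegel
open Finset

lemma cover (r : ℕ) (N : ℝ) (W : Set ℕ) (P : Finset ℕ) (A m : ℝ) (hm : 0 < m) (hA : 0 ≤ A)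
    (h : ∀ x ∈ W, x ∈ PellDr r N ∧ ∃ d ∈ P, d ∣ x)
    (hP : ∀ d ∈ P, m ≤ d ∧ ({x ∈ PellDr r N | d ∣ x}.ncard : ℝ) ≤ A / d) :
    (W.ncard : ℝ) ≤ P.card * (A / m) := by
  classical
  have hsub : W ⊆ ⋃ d ∈ P, {x ∈ PellDr r N | d ∣ x} := by
    intro x hx
    obtain ⟨h1, d, hd, hdx⟩ := h x hx
    exact Set.mem_biUnion hd ⟨h1, hdx⟩
  have hfin : (⋃ d ∈ P, {x ∈ PellDr r N | d ∣ x}).Finite := by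
    apply (PellDr_finite r N).subset
    intro x hx
    simp only [Set.mem_iUnion] at hx
    obtain ⟨d, _, hx⟩ := hx
    exact hx.1
  have h1 : W.ncard ≤ ∑ d ∈ P, {x ∈ PellDr r N | d ∣ x}.ncard :=
    (Set.ncard_le_ncard hsub hfin).trans (Finset.set_ncard_biUnion_le P _)
  have h2 : (W.ncard : ℝ) ≤ ∑ d ∈ P, ({x ∈ PellDr r N | d ∣ x}.ncard : ℝ) := by exact_mod_cast h1
  refine h2.trans ?_
  rw [← nsmul_eq_mul]
  apply Finset.sum_le_card_nsmul
  intro d hd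
  obtain ⟨h3, h4⟩ := hP d hd
  refine h4.trans ?_
  gcongr

noncomputable def Pw (q : ℕ) : Finset ℕ := (PP (2*(q:ℝ))).filter (fun p => (q:ℝ)/2 ≤ p)

lemma mem_Pw (q p : ℕ) : p ∈ Pw q ↔ p.Prime ∧ (p:ℝ) ≤ 2 * q ∧ (q:ℝ)/2 ≤ p := by
  unfold Pw; rw [Finset.mem_filter, mem_PP (by positivity), and_assoc]

lemma card_Pw (q : ℕ) (hq : 2 ≤ q) : ((Pw q).card : ℝ) ≤ 12 * q / Real.log q := by
  have hq' : (2:ℝ) ≤ q := by exact_mod_cast hq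
  have h1 := pi_upper (2*(q:ℝ)) (by linarith)
  have hl : 0 < Real.log q := Real.log_pos (by linarith)
  have hl2 : Real.log q ≤ Real.log (2*q) := Real.log_le_log (by linarith) (by linarith)
  have h2 : ((Pw q).card : ℝ) ≤ (PP (2*(q:ℝ))).card := by
    rw [Nat.cast_le]
    exact Finset.card_le_card (Finset.filter_subset _ _)
  refine h2.trans (h1.trans ?_)
  rw [show 6 * (2 * (q:ℝ)) = 12 * q by ring]
  gcongr

lemma log_F (F : ℕ) (hF : Squarefree F) : Real.log F = ∑ q ∈ F.primeFactors, Real.log q := by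
  rw [← log_prod _ (fun p hp => (Nat.mem_primeFactors.1 hp).1.ne_zero), Nat.prod_primeFactors_of_squarefree hF]

lemma log_F_primorial (F q : ℕ) (hF : Squarefree F) (h : ∀ p ∈ F.primeFactors, p ≤ q) :
    Real.log F ≤ 2 * q := by
  have h1 : F ∣ primorial q := by
    rw [← Nat.prod_primeFactors_of_squarefree hF]
    unfold primorial
    apply Finset.prod_dvd_prod_of_subset
    intro p hp
    rw [Finset.mem_filter, Finset.mem_range]
    exact ⟨by have := h p hp; omega, (Nat.mem_primeFactors.1 hp).1⟩
  have h2 : F ≤ 4^q := (Nat.le_of_dvd (primorial_pos q) h1).trans (primorial_le_four_pow q)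
  have hF0 : (0:ℝ) < F := by exact_mod_cast Nat.pos_of_ne_zero hF.ne_zero
  have h3 : Real.log F ≤ Real.log ((4:ℝ)^q) := Real.log_le_log hF0 (by exact_mod_cast h2)
  rw [Real.log_pow] at h3
  have h4 : Real.log 4 ≤ 2 := by
    rw [show (4:ℝ) = 2^2 by norm_num, Real.log_pow]
    have := Real.log_two_lt_d9
    push_cast; linarith
  nlinarith [(Nat.cast_nonneg q : (0:ℝ) ≤ q)]

lemma D1_big (L : ℝ) (hL : 10^60 ≤ L) : L ^ 50 ≤ Real.exp (L ^ ((1:ℝ)/10)) := by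
  have hL0 : 0 < L := by linarith [show (0:ℝ) < 10^60 by norm_num]
  set y := L ^ ((1:ℝ)/10) with hy
  have hy10 : y ^ 10 = L := by
    rw [hy, ← Real.rpow_natCast, ← Real.rpow_mul hL0.le]; norm_num
  have hy6 : 10^6 ≤ y := by
    have : (10:ℝ)^6 = (10^60) ^ ((1:ℝ)/10) := by
      rw [← Real.rpow_natCast, ← Real.rpow_natCast, ← Real.rpow_mul (by norm_num)]; norm_num
    rw [this]
    exact Real.rpow_le_rpow (by norm_num) hL (by norm_num)
  have hy0 : 0 < y := by linarith [show (0:ℝ) < 10^6 by norm_num]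
  have hs3 : 1000 ≤ √y := by
    rw [Real.le_sqrt (by norm_num) hy0.le]; norm_num at hy6 ⊢; linarith
  have h1 : Real.log y ≤ 2 * √y := by
    have : Real.log √y ≤ √y := (Real.log_le_sub_one_of_pos (by linarith)).trans (by linarith)
    rw [Real.log_sqrt hy0.le] at this
    linarith
  have h2 : 500 * Real.log y ≤ y := by
    have := Real.mul_self_sqrt hy0.le
    nlinarith
  rw [← hy10, ← pow_mul]
  calc y ^ (10*50) = Real.exp (500 * Real.log y) := by
        rw [show (500:ℝ) = ((10*50:ℕ):ℝ) by norm_num, Real.exp_nat_mul, Real.exp_log hy0]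
    _ ≤ _ := Real.exp_le_exp.2 h2

/-- a window cover bound for one prime factor -/
lemma window_bound (C N : ℝ) (r F q : ℕ) (hg : Good C N r) (hq : q ∈ F.primeFactors) (hqD : D₁ N ≤ q)
    (A : ℝ) (hA : 0 ≤ A)
    (hP : ∀ d ∈ Pw q, ({x ∈ PellDr r N | d ∣ x}.ncard : ℝ) ≤ A / d) :
    ((Wset N r F).ncard : ℝ) ≤ 24 * A / Real.log q := by
  have hL := hg.hL
  have hqp := (Nat.mem_primeFactors.1 hq).1
  have hq2 : (2:ℝ) ≤ q := by exact_mod_cast hqp.two_le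
  have hl : 0 < Real.log q := Real.log_pos (by linarith)
  have hc := cover r N (Wset N r F) (Pw q) A ((q:ℝ)/2) (by linarith) hA (by
      intro x hx
      refine ⟨hx.1, ?_⟩
      obtain ⟨_, g, _, hgq⟩ := box_lemma N r F (by linarith) x hx
      obtain ⟨h1, h2, _, h4⟩ := hgq q hq
      obtain ⟨h5, h6⟩ := h4 hqD
      have he : 1 / LL N ^ 50 ≤ 1 := by
        rw [div_le_one (by positivity)]
        exact one_le_pow₀ (by linarith)
      refine ⟨g q, (mem_Pw _ _).2 ⟨h1, ?_, ?_⟩, h2⟩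
      · nlinarith
      · nlinarith [(Nat.cast_nonneg (g q) : (0:ℝ) ≤ g q)]) (by
      intro d hd
      exact ⟨((mem_Pw _ _).1 hd).2.2, hP d hd⟩)
  refine hc.trans ?_
  calc ((Pw q).card : ℝ) * (A / ((q:ℝ)/2)) ≤ (12 * q / Real.log q) * (A / ((q:ℝ)/2)) := by
        have := card_Pw q hqp.two_le
        gcongr
    _ = _ := by field_simp; ring

lemma prime_ub (C N : ℝ) (r p : ℕ) (hg : Good C N r) (hp : p.Prime) (h : Real.log p ≤ Real.log N / 4) :
    ({x ∈ PellDr r N | p ∣ x}.ncard : ℝ) ≤ C * ((PellDr r N).ncard : ℝ) / p := by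
  apply hg.ub p hp.squarefree (Or.inl _) h
  rw [hp.primeFactors, Finset.card_singleton]

lemma two_ub (C N : ℝ) (r p q : ℕ) (hg : Good C N r) (hp : p.Prime) (hq : q.Prime) (hpq : p ≠ q)
    (h : Real.log ((p*q:ℕ):ℝ) ≤ Real.log N / 4) :
    ({x ∈ PellDr r N | p * q ∣ x}.ncard : ℝ) ≤ C * ((PellDr r N).ncard : ℝ) / ((p*q:ℕ):ℝ) := by
  have hc := (Nat.coprime_primes hp hq).2 hpq
  apply hg.ub (p*q) (Nat.squarefree_mul_iff.2 ⟨hc, hp.squarefree, hq.squarefree⟩) (Or.inr _) h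
  rw [hc.primeFactors_mul, Finset.card_union_of_disjoint hc.disjoint_primeFactors, hp.primeFactors, hq.primeFactors]
  simp

lemma log_Pw (q p : ℕ) (hq : 2 ≤ q) (h : p ∈ Pw q) : Real.log p ≤ Real.log q + 1 := by
  rw [mem_Pw] at h
  have hq' : (2:ℝ) ≤ q := by exact_mod_cast hq
  have : Real.log p ≤ Real.log (2*q) := Real.log_le_log (by exact_mod_cast h.1.pos) h.2.1
  rw [Real.log_mul (by norm_num) (by linarith)] at this
  linarith [Real.log_two_lt_d9]

lemma case_B4 (C N : ℝ) (r F q q' : ℕ) (hg : Good C N r) (hq : q ∈ F.primeFactors) (hq' : q' ∈ F.primeFactors)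
    (hne : q ≠ q') (hqD : D₁ N ≤ q) (hqD' : D₁ N ≤ q')
    (hs : Real.log q ≤ Real.log N / 10) (hs' : Real.log q' ≤ Real.log N / 10) :
    ((Wset N r F).ncard : ℝ) ≤ 576 * (C * ((PellDr r N).ncard : ℝ)) / (Real.log q * Real.log q') := by
  classical
  have hL := hg.hL
  obtain ⟨hl1, _⟩ := basicN N hg.hN hL
  have hC := hg.hC
  have hqp := (Nat.mem_primeFactors.1 hq).1
  have hq2 : (2:ℝ) ≤ q := by exact_mod_cast hqp.two_le
  have hl : 0 < Real.log q := Real.log_pos (by linarith)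
  have hqp' := (Nat.mem_primeFactors.1 hq').1
  have hq2' : (2:ℝ) ≤ q' := by exact_mod_cast hqp'.two_le
  have hl' : 0 < Real.log q' := Real.log_pos (by linarith)
  set D : ℝ := ((PellDr r N).ncard : ℝ)
  set P := ((Pw q ×ˢ Pw q').filter (fun z => z.1 ≠ z.2)).image (fun z => z.1 * z.2) with hPdef
  have hc := cover r N (Wset N r F) P (C * D) ((q:ℝ)/2 * (q'/2)) (by positivity) (by positivity) (by
      intro x hx
      refine ⟨hx.1, ?_⟩
      obtain ⟨_, g, hinj, hgq⟩ := box_lemma N r F (by linarith) x hx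
      have he : 1 / LL N ^ 50 ≤ 1 := by
        rw [div_le_one (by positivity)]
        exact one_le_pow₀ (by linarith)
      have hw : ∀ q ∈ F.primeFactors, D₁ N ≤ q → g q ∈ Pw q := by
        intro q hq hqD
        obtain ⟨h1, h2, _, h4⟩ := hgq q hq
        obtain ⟨h5, h6⟩ := h4 hqD
        refine (mem_Pw _ _).2 ⟨h1, ?_, ?_⟩
        · nlinarith [(Nat.cast_nonneg q : (0:ℝ) ≤ q)]
        · nlinarith [(Nat.cast_nonneg (g q) : (0:ℝ) ≤ g q)]
      have hne2 : g q ≠ g q' := fun h => hne (hinj hq hq' h)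
      refine ⟨g q * g q', ?_, ?_⟩
      · rw [hPdef, Finset.mem_image]
        refine ⟨(g q, g q'), ?_, rfl⟩
        rw [Finset.mem_filter, Finset.mem_product]
        exact ⟨⟨hw q hq hqD, hw q' hq' hqD'⟩, hne2⟩
      · exact Nat.Coprime.mul_dvd_of_dvd_of_dvd ((Nat.coprime_primes (hgq q hq).1 (hgq q' hq').1).2 hne2)
          (hgq q hq).2.1 (hgq q' hq').2.1) (by
      intro d hd
      rw [hPdef, Finset.mem_image] at hd
      obtain ⟨⟨a, b⟩, hab, rfl⟩ := hd
      rw [Finset.mem_filter, Finset.mem_product] at hab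
      obtain ⟨⟨ha, hb⟩, hab⟩ := hab
      simp only at ha hb hab ⊢
      have ha' := (mem_Pw _ _).1 ha
      have hb' := (mem_Pw _ _).1 hb
      have h7 := log_Pw q a hqp.two_le ha
      have h8 := log_Pw q' b hqp'.two_le hb
      refine ⟨?_, two_ub C N r a b hg ha'.1 hb'.1 hab ?_⟩
      · push_cast
        exact mul_le_mul ha'.2.2 hb'.2.2 (by positivity) (by positivity)
      · push_cast
        rw [Real.log_mul (by exact_mod_cast ha'.1.ne_zero) (by exact_mod_cast hb'.1.ne_zero)]
        linarith)
  refine hc.trans ?_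
  have hcard : (P.card : ℝ) ≤ (12 * q / Real.log q) * (12 * q' / Real.log q') := by
    have h1 : P.card ≤ (Pw q).card * (Pw q').card := by
      rw [← Finset.card_product]
      exact Finset.card_image_le.trans (Finset.card_le_card (Finset.filter_subset _ _))
    have h2 : (P.card : ℝ) ≤ (Pw q).card * (Pw q').card := by exact_mod_cast h1
    refine h2.trans ?_
    exact mul_le_mul (card_Pw q hqp.two_le) (card_Pw q' hqp'.two_le) (Nat.cast_nonneg _) (div_nonneg (by positivity) hl.le)
  calc (P.card : ℝ) * (C * D / ((q:ℝ)/2 * (q'/2)))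
      ≤ ((12 * q / Real.log q) * (12 * q' / Real.log q')) * (C * D / ((q:ℝ)/2 * (q'/2))) := by gcongr
    _ = _ := by field_simp; ring

lemma case_B2 (C N : ℝ) (r F q : ℕ) (hg : Good C N r) (hq : q ∈ F.primeFactors)
    (hqD : D₁ N ≤ q) (hL60 : 10^60 ≤ LL N)
    (hs : Real.log q ≤ Real.log N / 10) :
    ((Wset N r F).ncard : ℝ) ≤ 6 * (C * ((PellDr r N).ncard : ℝ)) / LL N ^ 50 := by
  classical
  have hL := hg.hL
  obtain ⟨hl1, _⟩ := basicN N hg.hN hL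
  have hC := hg.hC
  have hqp := (Nat.mem_primeFactors.1 hq).1
  have hq2 : (2:ℝ) ≤ q := by exact_mod_cast hqp.two_le
  set D : ℝ := ((PellDr r N).ncard : ℝ)
  set ε := 1 / LL N ^ 50 with hε
  have hε0 : 0 < ε := by positivity
  have he : ε ≤ 1/2 := by
    rw [hε, div_le_div_iff₀ (by positivity) (by norm_num)]
    have : LL N ≤ LL N ^ 50 := le_self_pow₀ (by linarith) (by norm_num)
    linarith
  have hεq : 1 ≤ ε * q := by
    have h1 := D1_big (LL N) hL60
    have h2 : LL N ^ 50 ≤ q := h1.trans hqD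
    rw [hε, one_div_mul_eq_div, le_div_iff₀ (by positivity)]; linarith
  set P := (Finset.Icc ⌈(q:ℝ)*(1-ε)⌉₊ ⌊(q:ℝ)*(1+ε)⌋₊).filter (fun p => p.Prime) with hPdef
  have hmemP : ∀ p, p ∈ P ↔ ((q:ℝ)*(1-ε) ≤ p ∧ (p:ℝ) ≤ q * (1+ε)) ∧ p.Prime := by
    intro p
    rw [hPdef, Finset.mem_filter, Finset.mem_Icc, Nat.ceil_le, Nat.le_floor_iff (by positivity)]
  have hc := cover r N (Wset N r F) P (C * D) ((q:ℝ)/2) (by positivity) (by positivity) (by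
      intro x hx
      refine ⟨hx.1, ?_⟩
      obtain ⟨_, g, _, hgq⟩ := box_lemma N r F (by linarith) x hx
      obtain ⟨h1, h2, _, h4⟩ := hgq q hq
      obtain ⟨h5, h6⟩ := h4 hqD
      rw [← hε] at h5 h6
      refine ⟨g q, (hmemP _).2 ⟨⟨?_, h5⟩, h1⟩, h2⟩
      have h0 : (0:ℝ) ≤ g q := Nat.cast_nonneg _
      calc (q:ℝ)*(1-ε) ≤ (g q * (1+ε)) * (1-ε) := by
            apply mul_le_mul_of_nonneg_right h6; linarith
        _ = g q * (1 - ε^2) := by ring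
        _ ≤ g q * 1 := by gcongr; nlinarith
        _ = g q := mul_one _) (by
      intro p hp
      rw [hmemP] at hp
      obtain ⟨⟨h1, h2⟩, h3⟩ := hp
      refine ⟨by nlinarith, prime_ub C N r p hg h3 ?_⟩
      have : Real.log p ≤ Real.log q + 1 := by
        apply log_Pw q p hqp.two_le
        rw [mem_Pw]
        exact ⟨h3, by nlinarith, by nlinarith⟩
      linarith)
  refine hc.trans ?_
  have hcard : (P.card : ℝ) ≤ 3 * (ε * q) := by
    have h1 : P.card ≤ ⌊(q:ℝ)*(1+ε)⌋₊ + 1 - ⌈(q:ℝ)*(1-ε)⌉₊ := by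
      rw [← Nat.card_Icc]
      exact Finset.card_le_card (Finset.filter_subset _ _)
    have h2 : ((⌊(q:ℝ)*(1+ε)⌋₊ : ℕ):ℝ) ≤ q * (1+ε) := Nat.floor_le (by positivity)
    have h3 : (q:ℝ)*(1-ε) ≤ ((⌈(q:ℝ)*(1-ε)⌉₊ : ℕ):ℝ) := Nat.le_ceil _
    rcases Nat.eq_zero_or_pos P.card with h0 | h0
    · rw [h0]; push_cast; positivity
    · have h4 : P.card + ⌈(q:ℝ)*(1-ε)⌉₊ ≤ ⌊(q:ℝ)*(1+ε)⌋₊ + 1 := by omega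
      have h5 : (P.card : ℝ) + ((⌈(q:ℝ)*(1-ε)⌉₊ : ℕ):ℝ) ≤ ((⌊(q:ℝ)*(1+ε)⌋₊ : ℕ):ℝ) + 1 := by exact_mod_cast h4
      nlinarith
  calc (P.card : ℝ) * (C * D / ((q:ℝ)/2)) ≤ (3 * (ε * q)) * (C * D / ((q:ℝ)/2)) := by gcongr
    _ = 6 * (C * D) * ε := by field_simp; ring
    _ = _ := by rw [hε]; ring
end AvoidSiegel

namespace AvoidSiegel
open Finset

lemma single (C N : ℝ) (r F : ℕ) (hg : Good C N r) (hL60 : 10^60 ≤ LL N) (hF : Squarefree F) (hF1 : 1 < F) :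
    ((Wset N r F).ncard : ℝ) ≤ 600 * (C * ((PellDr r N).ncard : ℝ)) *
      (1 / Real.log F + 1 / (LL N * Real.exp (LL N / 3))) := by
  have hL := hg.hL
  obtain ⟨hl1, hl2, hl3, hl4⟩ := basicN N hg.hN hL
  have hC := hg.hC
  have hN := hg.hN
  have hsmall := hg.small
  set D : ℝ := ((PellDr r N).ncard : ℝ) with hD
  set L := LL N with hLdef
  have hL0 : 0 < L := by linarith
  have hlF : 0 < Real.log F := Real.log_pos (by exact_mod_cast hF1)
  have hCD : 0 ≤ C * D := by positivity
  set X := L * Real.exp (L/3) with hX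
  have hX0 : 0 < X := by positivity
  have hfin1 : ∀ w : ℝ, w ≤ 600 * (C*D) * (1/Real.log F) → w ≤ 600 * (C * D) * (1 / Real.log F + 1 / X) := by
    intro w hw
    have : 0 ≤ 600 * (C * D) * (1 / X) := by positivity
    rw [mul_add]; linarith
  have hfin2 : ∀ w : ℝ, w ≤ 600 * (C*D) * (1/X) → w ≤ 600 * (C * D) * (1 / Real.log F + 1 / X) := by
    intro w hw
    have : 0 ≤ 600 * (C * D) * (1 / Real.log F) := by positivity
    rw [mul_add]; linarith
  rcases Set.eq_empty_or_nonempty (Wset N r F) with hemp | ⟨x0, hx0⟩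
  · rw [hemp, Set.ncard_empty]; push_cast; positivity
  have hω := omega_le N r F hL0 x0 hx0
  have hωL : (F.primeFactors.card : ℝ) ≤ L := by
    have : (F.primeFactors.card : ℝ) ≤ r := by exact_mod_cast hω
    linarith [hg.hr2]
  have hne : F.primeFactors.Nonempty := Nat.nonempty_primeFactors.2 hF1
  obtain ⟨q, hq, hqmax⟩ := Finset.exists_max_image F.primeFactors (fun q => q) hne
  have hqp := (Nat.mem_primeFactors.1 hq).1
  have hq2 : (2:ℝ) ≤ q := by exact_mod_cast hqp.two_le
  have hq0 : (0:ℝ) < q := by linarith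
  have hlq : 0 < Real.log q := Real.log_pos (by linarith)
  have hlogmax : ∀ p ∈ F.primeFactors, Real.log p ≤ Real.log q := by
    intro p hp
    apply Real.log_le_log
    · exact_mod_cast (Nat.mem_primeFactors.1 hp).1.pos
    · exact_mod_cast hqmax p hp
  have hlogF : Real.log F ≤ L * Real.log q := by
    rw [log_F F hF]
    refine (Finset.sum_le_card_nsmul _ _ _ hlogmax).trans ?_
    rw [nsmul_eq_mul]; gcongr
  have hD1L : L ^ ((1:ℝ)/10) ≤ L := by
    calc L ^ ((1:ℝ)/10) ≤ L ^ (1:ℝ) := Real.rpow_le_rpow_of_exponent_le (by linarith) (by norm_num)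
      _ = L := Real.rpow_one L
  have h8L : 8 * L ≤ Real.log N := by
    rw [hl3]
    have := Real.quadratic_le_exp_of_nonneg hL0.le
    nlinarith
  by_cases hqD : (q:ℝ) < D₁ N
  · -- case A
    have hlqL : Real.log q ≤ L := by
      have := Real.log_le_log hq0 hqD.le
      unfold D₁ at this
      rw [Real.log_exp] at this
      exact this.trans hD1L
    apply hfin1
    have hc := cover r N (Wset N r F) {q} (C * D) q hq0 hCD (by
      intro x hx
      refine ⟨hx.1, q, Finset.mem_singleton_self q, ?_⟩
      obtain ⟨_, g, _, hgq⟩ := box_lemma N r F hL0 x hx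
      obtain ⟨h1, h2, h3, _⟩ := hgq q hq
      rw [h3 hqD] at h2; exact h2) (by
      intro d hd
      rw [Finset.mem_singleton] at hd
      subst hd
      exact ⟨le_rfl, prime_ub C N r d hg hqp (by linarith)⟩)
    refine hc.trans ?_
    rw [Finset.card_singleton]
    have hp := log_F_primorial F q hF hqmax
    have : 1 / (q:ℝ) ≤ 600 * (1 / Real.log F) := by
      rw [mul_one_div, div_le_div_iff₀ hq0 hlF]; linarith
    calc ((1:ℕ):ℝ) * (C * D / q) = (C * D) * (1 / q) := by push_cast; ring
      _ ≤ (C * D) * (600 * (1/Real.log F)) := by gcongr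
      _ = _ := by ring
  rw [not_lt] at hqD
  by_cases hbig : Real.log N / 10 < Real.log q
  · -- case B1
    apply hfin2
    have hw := window_bound C N r F q hg hq hqD N (by linarith) (by
      intro d hd
      have hdp := ((mem_Pw _ _).1 hd).1
      apply mult_count d hdp.pos N _ _ (by linarith)
      intro x hx
      exact ⟨hx.1.1.2.1, hx.1.2.1.le, hx.2⟩)
    refine hw.trans ?_
    have h1 : 24 * N / Real.log q ≤ 240 * (N / Real.log N) := by
      rw [div_le_iff₀ hlq]
      have hNl : 0 ≤ N / Real.log N := by positivity
      calc 24 * N = 240 * (N / Real.log N) * (Real.log N / 10) := by field_simp; norm_num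
        _ ≤ _ := by gcongr
    have h2 : N / Real.log N ≤ C * D * (1 / X) := by
      rw [mul_one_div, le_div_iff₀ hX0]; exact hsmall
    have h3 : 0 ≤ C * D * (1/X) := by positivity
    rw [mul_assoc]
    linarith
  rw [not_lt] at hbig
  apply hfin1
  by_cases hlow : Real.log q ≤ L ^ 10
  · -- case B2
    have hb := case_B2 C N r F q hg hq hqD hL60 hbig
    refine hb.trans ?_
    have h1 : Real.log F ≤ L ^ 50 := by
      calc Real.log F ≤ L * Real.log q := hlogF
        _ ≤ L * L ^ 10 := by gcongr
        _ = L ^ 11 := by ring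
        _ ≤ L ^ 50 := pow_le_pow_right₀ (by linarith) (by norm_num)
    rw [mul_one_div]
    calc 6 * (C * D) / LL N ^ 50 ≤ 6 * (C*D) / Real.log F := by gcongr
      _ ≤ _ := by gcongr; norm_num
  rw [not_le] at hlow
  by_cases h2q : Real.log F ≤ 2 * Real.log q
  · -- case B3
    have hw := window_bound C N r F q hg hq hqD (C * D) hCD (by
      intro d hd
      apply prime_ub C N r d hg ((mem_Pw _ _).1 hd).1
      have := log_Pw q d hqp.two_le hd
      linarith)
    refine hw.trans ?_
    rw [mul_one_div, div_le_div_iff₀ hlq hlF]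
    calc 24 * (C*D) * Real.log F ≤ 24 * (C * D) * (2 * Real.log q) := by gcongr
      _ = 48 * (C * D * Real.log q) := by ring
      _ ≤ 600 * (C * D * Real.log q) := by
        apply mul_le_mul_of_nonneg_right (by norm_num)
        positivity
      _ = _ := by ring
  · -- case B4
    rw [not_le] at h2q
    have hex : ∃ q' ∈ F.primeFactors, q ≠ q' ∧ L^2 < Real.log q' := by
      by_contra hcon
      push Not at hcon
      have h1 : Real.log F ≤ Real.log q + L * L^2 := by
        rw [log_F F hF, ← Finset.add_sum_erase _ _ hq]
        have h2 : ∑ p ∈ F.primeFactors.erase q, Real.log p ≤ ((F.primeFactors.erase q).card) • (L^2) := by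
          apply Finset.sum_le_card_nsmul
          intro p hp
          exact hcon p (Finset.mem_of_mem_erase hp) (Finset.ne_of_mem_erase hp).symm
        rw [nsmul_eq_mul] at h2
        have h3 : ((F.primeFactors.erase q).card : ℝ) ≤ L := by
          refine le_trans ?_ hωL
          rw [Nat.cast_le]
          exact Finset.card_le_card (Finset.erase_subset _ _)
        have h4 : ((F.primeFactors.erase q).card : ℝ) * L^2 ≤ L * L^2 := by gcongr
        linarith
      have h5 : L * L^2 ≤ L^10 := by
        calc L * L^2 = L^3 := by ring
          _ ≤ L^10 := pow_le_pow_right₀ (by linarith) (by norm_num)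
      linarith
    obtain ⟨q', hq', hne', hlq'⟩ := hex
    have hqp' := (Nat.mem_primeFactors.1 hq').1
    have hqD' : D₁ N ≤ q' := by
      unfold D₁
      rw [← Real.le_log_iff_exp_le (by exact_mod_cast hqp'.pos)]
      refine le_trans hD1L (le_trans ?_ hlq'.le)
      exact le_self_pow₀ (by linarith) (by norm_num)
    have hb := case_B4 C N r F q q' hg hq hq' hne' hqD hqD' hbig ((hlogmax q' hq').trans hbig)
    refine hb.trans ?_
    have h6 : Real.log F ≤ Real.log q * Real.log q' := by
      calc Real.log F ≤ L * Real.log q := hlogF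
        _ ≤ Real.log q' * Real.log q := by
          have : L ≤ L^2 := le_self_pow₀ (by linarith) (by norm_num)
          gcongr; linarith
        _ = _ := mul_comm _ _
    rw [mul_one_div]
    calc 576 * (C * D) / (Real.log q * Real.log q') ≤ 576 * (C*D) / Real.log F := by gcongr
      _ ≤ _ := by gcongr; norm_num

lemma union_bound (C N t : ℝ) (r : ℕ) (hg : Good C N r) (hL60 : 10^60 ≤ LL N) (ht : 3 ≤ t)
    (htN : Real.log t ≤ Real.exp (LL N / 3))
    (F : ℕ → ℕ) (hF : ∀ i, Squarefree (F i) ∧ t < F i) (hF2 : ∀ i, F i ^ 2 < F (i+1)) :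
    ((⋃ i, Wset N r (F i)).ncard : ℝ) ≤ 3000 * C * ((PellDr r N).ncard : ℝ) / Real.log t := by
  classical
  have hL := hg.hL
  obtain ⟨hl1, hl2, hl3, hl4⟩ := basicN N hg.hN hL
  have hC := hg.hC
  set D : ℝ := ((PellDr r N).ncard : ℝ) with hD
  set L := LL N with hLdef
  have hL0 : 0 < L := by linarith
  have hlt : 1 ≤ Real.log t := by
    rw [Real.le_log_iff_exp_le (by linarith)]
    linarith [Real.exp_one_lt_d9]
  have hgrow : ∀ j : ℕ, 2 ^ j * Real.log t ≤ Real.log (F j) := by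
    intro j
    induction j with
    | zero => simpa using Real.log_le_log (by linarith) (hF 0).2.le
    | succ j ih =>
      have h0 : (0:ℝ) < F j := by linarith [(hF j).2]
      have h1 : Real.log ((F j : ℝ)^2) ≤ Real.log (F (j+1)) :=
        Real.log_le_log (by positivity) (by exact_mod_cast (hF2 j).le)
      rw [Real.log_pow] at h1
      push_cast at h1
      rw [pow_succ]
      linarith
  set M := ⌊2*L⌋₊ + 1 with hM
  have hMle : (M:ℝ) ≤ 3 * L := by
    rw [hM]; push_cast
    have := Nat.floor_le (by linarith : 0 ≤ 2 * L)
    linarith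
  have hsub : (⋃ i, Wset N r (F i)) ⊆ ⋃ j ∈ Finset.range M, Wset N r (F j) := by
    intro x hx
    obtain ⟨j, hj⟩ := Set.mem_iUnion.1 hx
    refine Set.mem_biUnion (x := j) ?_ hj
    have hFN := (box_lemma N r (F j) hL0 x hj).1
    have h0 : (0:ℝ) < F j := by linarith [(hF j).2]
    have h1 := Real.log_le_log h0 hFN.le
    have h2 := hgrow j
    have h3 : (2:ℝ)^j ≤ Real.log N := by
      have : (2:ℝ)^j * 1 ≤ 2^j * Real.log t := by gcongr
      linarith
    have h4 := Real.log_le_log (by positivity) h3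
    rw [Real.log_pow] at h4
    change _ ≤ L at h4
    have h5 : (j:ℝ) ≤ 2 * L := by nlinarith [Real.log_two_gt_d9, (Nat.cast_nonneg j : (0:ℝ) ≤ j)]
    have := Nat.le_floor h5
    simp only [Finset.coe_range, Set.mem_Iio]
    omega
  have hfin : (⋃ j ∈ Finset.range M, Wset N r (F j)).Finite := by
    apply (PellDr_finite r N).subset
    intro x hx
    simp only [Set.mem_iUnion] at hx
    obtain ⟨j, _, hx⟩ := hx
    exact hx.1
  have h1 : (⋃ i, Wset N r (F i)).ncard ≤ ∑ j ∈ Finset.range M, (Wset N r (F j)).ncard :=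
    (Set.ncard_le_ncard hsub hfin).trans (Finset.set_ncard_biUnion_le _ _)
  have h2 : ((⋃ i, Wset N r (F i)).ncard : ℝ) ≤ ∑ j ∈ Finset.range M, ((Wset N r (F j)).ncard : ℝ) := by
    exact_mod_cast h1
  refine h2.trans ?_
  have h3 : ∀ j ∈ Finset.range M, ((Wset N r (F j)).ncard : ℝ) ≤
      600 * (C * D) * ((1/2)^j * (1 / Real.log t) + 1 / (L * Real.exp (L/3))) := by
    intro j _
    have hFj : 1 < F j := by
      have : (1:ℝ) < F j := by linarith [(hF j).2]
      exact_mod_cast this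
    refine (single C N r (F j) hg hL60 (hF j).1 hFj).trans ?_
    have : 1 / Real.log (F j) ≤ (1/2)^j * (1 / Real.log t) := by
      rw [one_div_pow, one_div_mul_one_div]
      apply one_div_le_one_div_of_le (by positivity) (hgrow j)
    gcongr
  refine (Finset.sum_le_sum h3).trans ?_
  rw [← Finset.mul_sum, Finset.sum_add_distrib, ← Finset.sum_mul, Finset.sum_const, Finset.card_range, nsmul_eq_mul]
  have hgeo : ∑ i ∈ Finset.range M, ((1:ℝ)/2)^i ≤ 2 := sum_geometric_two_le M
  have h4 : (M:ℝ) * (1 / (L * Real.exp (L/3))) ≤ 3 * (1/Real.log t) := by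
    calc (M:ℝ) * (1 / (L * Real.exp (L/3))) ≤ (3 * L) * (1 / (L * Real.exp (L/3))) := by gcongr
      _ = 3 * (1 / Real.exp (L/3)) := by field_simp
      _ ≤ 3 * (1 / Real.log t) := by gcongr
  have h5 : (∑ i ∈ Finset.range M, ((1:ℝ)/2)^i) * (1/Real.log t) ≤ 2 * (1/Real.log t) := by gcongr
  calc 600 * (C * D) * ((∑ i ∈ Finset.range M, ((1:ℝ)/2)^i) * (1/Real.log t) + (M:ℝ) * (1 / (L * Real.exp (L/3))))
      ≤ 600 * (C * D) * (2 * (1/Real.log t) + 3 * (1/Real.log t)) := by gcongr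
    _ = _ := by ring
end AvoidSiegel

/-- Proposition 7.8 (avoiding Siegel-type divisors): if `f₁ < f₁² < f₂ < f₂² < ⋯` are
squarefree integers `> t`, then the union of the sets `W(fᵢ)` of elements of `𝒟_r(N)`
lying in a box containing a multiple of `fᵢ` has size `O(|𝒟_r(N)|/log t)`.
All boxes carry the compression parameter `Ccompr = (log log N)^{50}`. -/
theorem avoid_siegel_divisors :
    ∃ C : ℝ, 0 < C ∧
      ∀ (N t : ℝ) (r : ℕ),
        (10 : ℝ) ^ 1000 ≤ t → t ≤ N → (Real.log t) ^ 3 ≤ Real.log N → 0 < r →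
        |(r : ℝ) - (1 / 2) * Real.log (Real.log N)| < (Real.log (Real.log N)) ^ ((2 : ℝ) / 3) →
        ∀ f : ℕ → ℤ,
          (∀ i, 1 ≤ i → Squarefree (f i) ∧ t < ((f i : ℤ) : ℝ)) →
          (∀ i, 1 ≤ i → (f i) ^ 2 < f (i + 1)) →
          ((⋃ i ∈ {i : ℕ | 1 ≤ i},
              {x ∈ PellDr r N | ∃ (k : ℕ) (B : Set ℕ), k ≤ r ∧
                IsBox N ((Real.log (Real.log N)) ^ (50 : ℕ)) k r B ∧
                (∃ x' ∈ B, (f i) ∣ (x' : ℤ)) ∧ x ∈ B}).ncard : ℝ) ≤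
            C * ((PellDr r N).ncard : ℝ) / Real.log t := by
  obtain ⟨L0, C, hL0, hC, hgood⟩ := AvoidSiegel.good_exists
  set L1 := max L0 (10^60) with hL1
  refine ⟨max (3000 * C) (Real.exp (L1/3)), lt_max_of_lt_right (Real.exp_pos _), ?_⟩
  intro N t r ht htN hlog hr hrL f hf hf2
  have ht3 : 3 ≤ t := le_trans (le_trans (by norm_num : (3:ℝ) ≤ 10^1) (pow_le_pow_right₀ (by norm_num) (by norm_num))) ht
  clear ht
  have hN1 : 1 < N := by linarith
  have hlN : 0 < Real.log N := Real.log_pos hN1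
  have hlt : 0 < Real.log t := Real.log_pos (by linarith)
  have hlte : Real.log t ≤ Real.exp (AvoidSiegel.LL N / 3) := by
    have h1 : Real.exp (AvoidSiegel.LL N / 3) ^ 3 = Real.log N := by
      rw [← Real.exp_nat_mul]
      push_cast
      rw [mul_div_cancel₀ _ (by norm_num)]
      exact Real.exp_log hlN
    rw [← h1] at hlog
    exact le_of_pow_le_pow_left₀ (by norm_num) (Real.exp_pos _).le hlog
  rcases lt_or_ge (AvoidSiegel.LL N) L1 with hsm | hbig
  · have hsub : (⋃ i ∈ {i : ℕ | 1 ≤ i},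
              {x ∈ PellDr r N | ∃ (k : ℕ) (B : Set ℕ), k ≤ r ∧
                IsBox N ((Real.log (Real.log N)) ^ (50 : ℕ)) k r B ∧
                (∃ x' ∈ B, (f i) ∣ (x' : ℤ)) ∧ x ∈ B}) ⊆ PellDr r N := by
      intro x hx
      simp only [Set.mem_iUnion] at hx
      obtain ⟨i, _, hx⟩ := hx
      exact hx.1
    have h1 := Set.ncard_le_ncard hsub (AvoidSiegel.PellDr_finite r N)
    have h2 : Real.log t ≤ max (3000 * C) (Real.exp (L1/3)) :=
      (hlte.trans (Real.exp_le_exp.2 (by linarith))).trans (le_max_right _ _)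
    rw [le_div_iff₀ hlt]
    calc _ ≤ ((PellDr r N).ncard : ℝ) * Real.log t := by
          apply mul_le_mul_of_nonneg_right _ hlt.le
          exact_mod_cast h1
      _ ≤ ((PellDr r N).ncard : ℝ) * max (3000 * C) (Real.exp (L1/3)) := by gcongr
      _ = _ := mul_comm _ _
  · have hg := hgood N r hN1 ((le_max_left _ _).trans hbig) hrL
    have hcast : ∀ i, 1 ≤ i → ((f i).toNat : ℤ) = f i := by
      intro i hi
      apply Int.toNat_of_nonneg
      have := (hf i hi).2
      have h0 : (0:ℝ) < f i := by linarith
      exact_mod_cast h0.le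
    have hub := AvoidSiegel.union_bound C N t r hg ((le_max_right _ _).trans hbig) ht3 hlte
      (fun j => (f (j+1)).toNat) (by
        intro j
        obtain ⟨h1, h2⟩ := hf (j+1) (by omega)
        have hc := hcast (j+1) (by omega)
        constructor
        · rw [← hc] at h1
          exact Int.squarefree_natCast.1 h1
        · have : (((f (j+1)).toNat : ℕ) : ℝ) = ((f (j+1) : ℤ) : ℝ) := by
            rw [← Int.cast_natCast, hc]
          rw [this]; exact h2) (by
        intro j
        have h1 := hf2 (j+1) (by omega)
        rw [← hcast (j+1) (by omega), ← hcast (j+1+1) (by omega)] at h1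
        exact_mod_cast h1)
    have heq : (⋃ i ∈ {i : ℕ | 1 ≤ i},
              {x ∈ PellDr r N | ∃ (k : ℕ) (B : Set ℕ), k ≤ r ∧
                IsBox N ((Real.log (Real.log N)) ^ (50 : ℕ)) k r B ∧
                (∃ x' ∈ B, (f i) ∣ (x' : ℤ)) ∧ x ∈ B}) ⊆
        ⋃ j : ℕ, AvoidSiegel.Wset N r ((f (j+1)).toNat) := by
      intro x hx
      simp only [Set.mem_iUnion] at hx
      obtain ⟨i, hi, hx, k, B, hk, hB, ⟨x', hx', hd⟩, hxB⟩ := hx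
      have hi' : 1 ≤ i := hi
      obtain ⟨j, rfl⟩ : ∃ j, i = j + 1 := ⟨i-1, by omega⟩
      refine Set.mem_iUnion.2 ⟨j, hx, k, B, hk, hB, ⟨x', hx', ?_⟩, hxB⟩
      rw [← hcast (j+1) hi'] at hd
      exact Int.natCast_dvd_natCast.1 hd
    have hfin : (⋃ j : ℕ, AvoidSiegel.Wset N r ((f (j+1)).toNat)).Finite := by
      apply (AvoidSiegel.PellDr_finite r N).subset
      intro x hx
      obtain ⟨j, hj⟩ := Set.mem_iUnion.1 hx
      exact hj.1
    have h1 := Set.ncard_le_ncard heq hfin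
    refine le_trans (Nat.cast_le.2 h1) (hub.trans ?_)
    gcongr
    exact le_max_left _ _
end

section
/- Let A be a finite abelian 2-group and let s ≥ 1 be an integer. Then: (1) for every a ∈ 2^{s−1}·A[2^s] and every χ ∈ 2^{s−1}·A^∨[2^s], the value ⟨a,χ⟩_{Art_s(A)} := ψ(a), for any ψ ∈ A^∨ with 2^{s−1}·ψ = χ, is independent of the choice of ψ and lies in the 2-torsion subgroup of ℚ₂/ℤ₂ (so the pairing is F₂-valued), and ⟨·,·⟩_{Art_s(A)} is bilinear; (2) the left kernel of ⟨·,·⟩_{Art_s(A)} equals 2^s·A[2^{s+1}] and the right kernel equals 2^s·A^∨[2^{s+1}]. -/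
/-- `ℤ₂` as an additive subgroup of `ℚ₂`. -/
noncomputable def Z2sub : AddSubgroup ℚ_[2] := (PadicInt.subring 2).toAddSubgroup

/-- `N = ℚ₂/ℤ₂`. -/
abbrev QmodZ2 : Type := ℚ_[2] ⧸ Z2sub

/-- `2^{s−1}·A[2^s]` for an additive group `A`. -/
def smulTor (A : Type*) [AddCommGroup A] (s : ℕ) : Set A :=
  (fun b : A => 2 ^ (s - 1) • b) '' {b : A | 2 ^ s • b = 0}

/-- `2^s·A[2^{s+1}]`. -/
def smulTor' (A : Type*) [AddCommGroup A] (s : ℕ) : Set A :=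
  (fun b : A => 2 ^ s • b) '' {b : A | 2 ^ (s + 1) • b = 0}

theorem qz_baer : Module.Baer ℤ QmodZ2 := by
  have : DivisibleBy ℚ_[2] ℤ := divisibleByIntOfCharZero
  have : DivisibleBy QmodZ2 ℤ :=
    Function.Surjective.divisibleBy (f := (QuotientAddGroup.mk : ℚ_[2] → QmodZ2))
      QuotientAddGroup.mk_surjective (fun _ _ => rfl)
  exact Module.Baer.of_divisible _

theorem qz_extend {M N : Type*} [AddCommGroup M] [AddCommGroup N] (f : M →+ N)
    (g : M →+ QmodZ2) (hfg : ∀ m, f m = 0 → g m = 0) :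
    ∃ h : N →+ QmodZ2, ∀ m, h (f m) = g m := by
  obtain ⟨h, hh⟩ := qz_baer.extension_property_addMonoidHom (QuotientAddGroup.kerLift f)
    (QuotientAddGroup.kerLift_injective f) (QuotientAddGroup.lift f.ker g hfg)
  refine ⟨h, fun m => ?_⟩
  have := DFunLike.congr_fun hh (m : M ⧸ f.ker)
  exact this

theorem qz_half : ∃ q : QmodZ2, q ≠ 0 ∧ 2 • q = 0 := by
  refine ⟨((2⁻¹ : ℚ_[2]) : QmodZ2), ?_, ?_⟩
  · rw [Ne, QuotientAddGroup.eq_zero_iff]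
    intro h
    have h1 : ‖(2⁻¹ : ℚ_[2])‖ ≤ 1 := h
    have h2 : ‖(2 : ℚ_[2])‖ = 2⁻¹ := by
      simpa using Padic.norm_p (p := 2)
    rw [norm_inv, h2] at h1
    norm_num at h1
  · rw [← QuotientAddGroup.mk_nsmul, QuotientAddGroup.eq_zero_iff]
    have : 2 • (2⁻¹ : ℚ_[2]) = 1 := by norm_num
    rw [this]
    exact (PadicInt.subring 2).one_mem

theorem qz_sep {B : Type*} [AddCommGroup B] (k : ℕ) (x : B) (hx : x ≠ 0)
    (hk : 2 ^ k • x = 0) : ∃ h : B →+ QmodZ2, h x ≠ 0 := by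
  induction k generalizing x with
  | zero => simp at hk; exact absurd hk hx
  | succ k ih =>
    by_cases h2 : 2 • x = 0
    · obtain ⟨q, hq, hq2⟩ := qz_half
      obtain ⟨h, hh⟩ := qz_extend (zmultiplesHom B x) (zmultiplesHom QmodZ2 q) (by
        intro n hn
        simp only [zmultiplesHom_apply] at hn ⊢
        have h2' : (2 : ℤ) • x = 0 := by exact_mod_cast h2
        have hq2' : (2 : ℤ) • q = 0 := by exact_mod_cast hq2
        rcases Int.even_or_odd' n with ⟨m, rfl | rfl⟩
        · rw [mul_comm, mul_smul, hq2', smul_zero]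
        · rw [add_smul, mul_comm, mul_smul, h2', smul_zero, zero_add, one_smul] at hn
          exact absurd hn hx)
      refine ⟨h, ?_⟩
      have := hh 1
      simp at this
      rwa [this]
    · obtain ⟨h, hh⟩ := ih (2 • x) h2 (by rw [← mul_smul, ← pow_succ]; exact hk)
      refine ⟨h, fun h0 => hh ?_⟩
      rw [map_nsmul, h0, smul_zero]

theorem tor_iff {B : Type*} [AddCommGroup B] (t : ℕ) (ψ : B)
    (h : 2 ^ t • ψ ∈ smulTor B (t + 1)) : 2 ^ (t + 1) • ψ = 0 := by
  obtain ⟨b, hb, e⟩ := h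
  simp only [Nat.add_sub_cancel, Set.mem_ofPred_eq] at hb e
  rw [pow_succ', mul_smul, ← e, ← mul_smul, ← pow_succ', hb]

theorem smulTor'_sub {B : Type*} [AddCommGroup B] (t : ℕ) (x : B)
    (h : x ∈ smulTor' B (t + 1)) : x ∈ smulTor B (t + 1) := by
  obtain ⟨b, hb, e⟩ := h
  simp only [Set.mem_ofPred_eq] at hb e
  refine ⟨2 • b, ?_, ?_⟩
  · simp only [Set.mem_ofPred_eq]
    rw [← mul_smul, ← pow_succ, hb]
  · simp only [Nat.add_sub_cancel]
    rw [← mul_smul, ← pow_succ, e]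

/-- The Artin pairing `⟨a, χ⟩ := ψ(a)` (for any `ψ ∈ A^∨` with `2^{s−1}ψ = χ`) on
`2^{s−1}A[2^s] × 2^{s−1}A^∨[2^s]` is well defined, `F₂`-valued and bilinear, and its left
and right kernels are `2^s A[2^{s+1}]` and `2^s A^∨[2^{s+1}]` respectively. -/
theorem artin_pairing_wellDefined_and_kernels
    (A : Type*) [AddCommGroup A] [Finite A] (hA : ∃ k : ℕ, Nat.card A = 2 ^ k)
    (s : ℕ) (hs : 1 ≤ s) :
    -- (1) well-definedness: the value `ψ(a)` does not depend on the lift `ψ` of `χ`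
    (∀ a ∈ smulTor A s, ∀ χ ∈ smulTor (A →+ QmodZ2) s, ∀ ψ ψ' : A →+ QmodZ2,
      2 ^ (s - 1) • ψ = χ → 2 ^ (s - 1) • ψ' = χ → ψ a = ψ' a) ∧
    -- (1) the value is `2`-torsion in `ℚ₂/ℤ₂`, i.e. the pairing is `F₂`-valued
    (∀ a ∈ smulTor A s, ∀ χ ∈ smulTor (A →+ QmodZ2) s, ∀ ψ : A →+ QmodZ2,
      2 ^ (s - 1) • ψ = χ → 2 • ψ a = 0) ∧
    -- (1) bilinearity: additivity in the first argument
    (∀ a ∈ smulTor A s, ∀ a' ∈ smulTor A s, ∀ χ ∈ smulTor (A →+ QmodZ2) s,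
      ∀ ψ : A →+ QmodZ2, 2 ^ (s - 1) • ψ = χ → ψ (a + a') = ψ a + ψ a') ∧
    -- (1) bilinearity: additivity in the second argument
    (∀ a ∈ smulTor A s, ∀ χ ∈ smulTor (A →+ QmodZ2) s, ∀ χ' ∈ smulTor (A →+ QmodZ2) s,
      ∀ ψ ψ' : A →+ QmodZ2, 2 ^ (s - 1) • ψ = χ → 2 ^ (s - 1) • ψ' = χ' →
        (ψ + ψ') a = ψ a + ψ' a) ∧
    -- (2) the left kernel is `2^s A[2^{s+1}]`
    ({a ∈ smulTor A s | ∀ χ ∈ smulTor (A →+ QmodZ2) s, ∀ ψ : A →+ QmodZ2,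
        2 ^ (s - 1) • ψ = χ → ψ a = 0} = smulTor' A s) ∧
    -- (2) the right kernel is `2^s A^∨[2^{s+1}]`
    ({χ ∈ smulTor (A →+ QmodZ2) s | ∀ a ∈ smulTor A s, ∀ ψ : A →+ QmodZ2,
        2 ^ (s - 1) • ψ = χ → ψ a = 0} = smulTor' (A →+ QmodZ2) s) := by
  obtain ⟨t, rfl⟩ : ∃ t, s = t + 1 := ⟨s - 1, by omega⟩
  obtain ⟨k, hk⟩ := hA
  have hkA : ∀ a : A, 2 ^ k • a = 0 := fun a => by rw [← hk]; exact card_nsmul_eq_zero'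
  simp only [Nat.add_sub_cancel]
  refine ⟨?_, ?_, fun _ _ _ _ _ _ ψ _ => map_add ψ _ _, fun _ _ _ _ _ _ _ _ _ _ => rfl, ?_, ?_⟩
  · rintro _ ⟨b, hb, rfl⟩ χ hχ ψ ψ' h h'
    simp only [Nat.add_sub_cancel, map_nsmul]
    have := DFunLike.congr_fun (h.trans h'.symm) b
    simpa using this
  · rintro _ ⟨b, hb, rfl⟩ χ hχ ψ h
    simp only [Nat.add_sub_cancel, Set.mem_ofPred_eq] at hb ⊢
    rw [← map_nsmul, ← mul_smul, ← pow_succ', hb, map_zero]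
  · ext a
    constructor
    · rintro ⟨ha, H⟩
      have hmem : a ∈ (nsmulAddMonoidHom (α := A) (2 ^ (t + 1))).range := by
        by_contra hn
        obtain ⟨h, hh⟩ := qz_sep (B := A ⧸ (nsmulAddMonoidHom (α := A) (2 ^ (t + 1))).range) k
          (a : A ⧸ (nsmulAddMonoidHom (α := A) (2 ^ (t + 1))).range)
          (by rwa [Ne, QuotientAddGroup.eq_zero_iff])
          (by rw [← QuotientAddGroup.mk_nsmul, hkA]; rfl)
        refine hh (H _ ⟨h.comp (QuotientAddGroup.mk' _), ?_, rfl⟩ (h.comp (QuotientAddGroup.mk' _)) ?_)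
        · ext x
          change 2 ^ (t + 1) • h (x : A ⧸ _) = 0
          have hx : ((2 ^ (t + 1) • x : A) :
              A ⧸ (nsmulAddMonoidHom (α := A) (2 ^ (t + 1))).range) = 0 :=
            (QuotientAddGroup.eq_zero_iff _).2 (AddMonoidHom.mem_range.2 ⟨x, rfl⟩)
          rw [← map_nsmul, ← QuotientAddGroup.mk_nsmul, hx, map_zero]
        · simp
      obtain ⟨c, hc⟩ := hmem
      simp only [nsmulAddMonoidHom_apply] at hc
      refine ⟨c, ?_, hc⟩
      obtain ⟨b, hb, e⟩ := ha
      simp only [Nat.add_sub_cancel, Set.mem_ofPred_eq] at hb e ⊢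
      rw [pow_succ', mul_smul, hc, ← e, ← mul_smul, ← pow_succ', hb]
    · intro h
      refine ⟨smulTor'_sub _ _ h, ?_⟩
      rintro χ hχ ψ rfl
      have h0 := tor_iff _ _ hχ
      obtain ⟨b, hb, rfl⟩ := h
      have := DFunLike.congr_fun h0 b
      simpa using this
  · ext χ
    constructor
    · rintro ⟨hχ, H⟩
      have hχ' := hχ
      obtain ⟨ψ, hψ, e⟩ := hχ'
      simp only [Nat.add_sub_cancel, Set.mem_ofPred_eq] at hψ e
      obtain ⟨φ, hφ⟩ := qz_extend (nsmulAddMonoidHom (α := A) (2 ^ (t + 1))) χ (by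
        intro b hb
        have := H (2 ^ t • b) ⟨b, hb, by simp⟩ ψ e
        rw [← e]
        simpa using this)
      have hφ' : 2 ^ (t + 1) • φ = χ := by
        ext x
        rw [← hφ x]
        simp
      refine ⟨φ, ?_, hφ'⟩
      simp only [Set.mem_ofPred_eq]
      rw [pow_succ', mul_nsmul', hφ', ← e, ← mul_nsmul', ← pow_succ', hψ]
    · intro h
      refine ⟨smulTor'_sub _ _ h, ?_⟩
      rintro _ ⟨b, hb, rfl⟩ ψ e
      obtain ⟨φ, hφ, rfl⟩ := h
      simp only [Nat.add_sub_cancel, Set.mem_ofPred_eq] at hb e ⊢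
      have := DFunLike.congr_fun e b
      simp only [AddMonoidHom.nsmul_apply] at this
      rw [map_nsmul, this, ← map_nsmul, hb, map_zero]
end
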